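/- Let 0 ≤ l < d ≤ n be integers, let V ⊆ ℂ^n be a d-dimensional algebraic set, and let τ_l > 0 be a real number. Let T be an l-dimensional algebraic set of ℂ^n with deg(T) ≥ τ_l · δ(V)^{d−l} · deg(V). Then there exists a polynomial P ∈ ℂ[x_1,…,x_n] of degree at most C(n,τ_l)·(deg(T)/deg(V))^{1/(d−l)}, for some constant C(n,τ_l) depending only on n and τ_l, which vanishes at every point of T but does not vanish identically on V (i.e., it does not vanish on at least one irreducible component of V). -/

import Mathlib

open MvPolynomial Set

noncomputable section

namespace Paper

variable (n : ℕ)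

/-- The zero locus in `ℂⁿ` of a set of polynomials. -/
def zeroLocus (I : Set (MvPolynomial (Fin n) ℂ)) : Set (Fin n → ℂ) :=
  {x | ∀ f ∈ I, eval x f = 0}

/-- A subset of `ℂⁿ` is algebraic if it is the zero locus of a set of polynomials. -/
def IsAlgebraicSet (V : Set (Fin n → ℂ)) : Prop :=
  ∃ I : Set (MvPolynomial (Fin n) ℂ), V = zeroLocus n I

/-- An irreducible (affine) variety in `ℂⁿ`: a nonempty algebraic set that is not covered
by two algebraic sets unless it is contained in one of them. -/
def IsIrredVariety (V : Set (Fin n → ℂ)) : Prop :=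
  IsAlgebraicSet n V ∧ V.Nonempty ∧
    ∀ V₁ V₂ : Set (Fin n → ℂ), IsAlgebraicSet n V₁ → IsAlgebraicSet n V₂ →
      V ⊆ V₁ ∪ V₂ → V ⊆ V₁ ∨ V ⊆ V₂

/-- There is a strictly increasing chain of `d + 1` irreducible varieties inside `V`. -/
def HasChain (V : Set (Fin n → ℂ)) (d : ℕ) : Prop :=
  ∃ W : Fin (d + 1) → Set (Fin n → ℂ),
    (∀ i, IsIrredVariety n (W i)) ∧ (∀ i j : Fin (d + 1), i < j → W i ⊂ W j) ∧
      W (Fin.last d) ⊆ V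

/-- The (Krull) dimension of a subset of `ℂⁿ`, as the length of the longest chain of
irreducible subvarieties. -/
def dim (V : Set (Fin n → ℂ)) : ℕ := sSup {d | HasChain n V d}

/-- `W` is an irreducible component of `X`: an irreducible subvariety that is maximal among
irreducible subvarieties of `X`. -/
def IsIrredComponent (W X : Set (Fin n → ℂ)) : Prop :=
  IsIrredVariety n W ∧ W ⊆ X ∧
    ∀ W', IsIrredVariety n W' → W ⊆ W' → W' ⊆ X → W' = W

/-- The degree of an irreducible variety `V ⊆ ℂⁿ` of dimension `d` (i.e. the degree of its
projective closure): the largest finite number of points in which an affine-linear subspace of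
dimension `n - d` meets `V`. -/
def degree (V : Set (Fin n → ℂ)) : ℕ :=
  sSup { m | ∃ L : AffineSubspace ℂ (Fin n → ℂ),
    Module.finrank ℂ L.direction = n - dim n V ∧ (V ∩ ↑L).Finite ∧ (V ∩ ↑L).ncard = m }

/-- The degree of an algebraic set: the sum of the degrees of its irreducible components. -/
def degreeSum (X : Set (Fin n → ℂ)) : ℕ :=
  ∑ᶠ W ∈ {W | IsIrredComponent n W X}, degree n W

/-- The maximal dimension of an irreducible component of `X` containing `V` equals `e`. -/
def MaxCompDimEq (X V : Set (Fin n → ℂ)) (e : ℕ) : Prop :=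
  (∃ W, IsIrredComponent n W X ∧ V ⊆ W ∧ dim n W = e) ∧
    ∀ W, IsIrredComponent n W X → V ⊆ W → dim n W ≤ e

/-- The partial degrees `δ_i(V)` of an irreducible variety `V`:  the minimal `δ` such that there
are polynomials of degree at most `δ` cutting out an algebraic set containing `V` whose
irreducible components containing `V` have maximal dimension `n - i`.  By convention
`δ_0(V) = 0`. -/
def partialDeg (V : Set (Fin n → ℂ)) (i : ℕ) : ℕ :=
  if i = 0 then 0
  else sInf { δ | ∃ I : Finset (MvPolynomial (Fin n) ℂ),
    (∀ f ∈ I, f.totalDegree ≤ δ) ∧ V ⊆ zeroLocus n ↑I ∧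
      MaxCompDimEq n (zeroLocus n ↑I) V (n - i) }

/-- The partial degrees as extended naturals, with the convention `δ_i(V) = ∞` for
`i > n - dim V`. -/
def partialDegE (V : Set (Fin n → ℂ)) (i : ℕ) : ℕ∞ :=
  if i ≤ n - dim n V then (partialDeg n V i : ℕ∞) else ⊤

/-- `δ(V)` for an irreducible variety `V`: the minimal `δ` such that `V` is an irreducible
component of the zero set of a finite family of polynomials of degree at most `δ`. -/
def deltaIrr (V : Set (Fin n → ℂ)) : ℕ :=
  sInf { δ | ∃ I : Finset (MvPolynomial (Fin n) ℂ),
    (∀ f ∈ I, f.totalDegree ≤ δ) ∧ IsIrredComponent n V (zeroLocus n ↑I) }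

/-- `δ(V)` for a general algebraic set `V`: the minimal `δ` such that every irreducible
component of `V` is an irreducible component of the zero set of a finite family of polynomials
of degree at most `δ`. -/
def deltaSet (V : Set (Fin n → ℂ)) : ℕ :=
  sInf { δ | ∃ I : Finset (MvPolynomial (Fin n) ℂ),
    (∀ f ∈ I, f.totalDegree ≤ δ) ∧
      ∀ W, IsIrredComponent n W V → IsIrredComponent n W (zeroLocus n ↑I) }

/-- An algebraic set all of whose irreducible components have dimension `d`. -/
def IsAlgSetOfDim (V : Set (Fin n → ℂ)) (d : ℕ) : Prop :=
  IsAlgebraicSet n V ∧ V.Nonempty ∧ ∀ W, IsIrredComponent n W V → dim n W = d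

/-- `Δ_i(V) = max (deg V / (δ_{i+1}(V) ⋯ δ_{n-d}(V))) 1`. -/
def Delta (V : Set (Fin n → ℂ)) (i : ℕ) : ℝ :=
  max ((degree n V : ℝ) / ∏ j ∈ Finset.Icc (i + 1) (n - dim n V), (partialDeg n V j : ℝ)) 1

/-- `i` is admissible with respect to `V` if `δ_{i+1}(V) > 2 i δ_i(V)` (with the convention
`δ_i(V) = ∞` for `i > n - dim V`). -/
def Admissible (V : Set (Fin n → ℂ)) (i : ℕ) : Prop :=
  ((2 * i : ℕ) : ℕ∞) * partialDegE n V i < partialDegE n V (i + 1)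

/-- The interval `ℛ_i(V) = [c₁ δ_i(V)^{n-i} Δ_i(V), (c₀/2) δ_{i+1}(V)^{n-i} Δ_i(V)]`,
where `δ_{n-d+1}(V) = ∞` makes the last interval a half-line. -/
def RSet (c0 c1 : ℝ) (V : Set (Fin n → ℂ)) (i : ℕ) : Set ℝ :=
  if i = n - dim n V then
    Set.Ici (c1 * (partialDeg n V i : ℝ) ^ (n - i) * Delta n V i)
  else
    Set.Icc (c1 * (partialDeg n V i : ℝ) ^ (n - i) * Delta n V i)
      ((c0 / 2) * (partialDeg n V (i + 1) : ℝ) ^ (n - i) * Delta n V i)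

/-- The interval `ℛ^l_{s,τ}(V) = [τ δ_s(V)^{n-(s+l)} Δ_s(V), τ δ_{s+1}(V)^{n-(s+l)} Δ_s(V)]`,
where `δ_{n-d+1}(V) = ∞` makes the last interval a half-line. -/
def RlSet (τ : ℝ) (l : ℕ) (V : Set (Fin n → ℂ)) (s : ℕ) : Set ℝ :=
  if s = n - dim n V then
    Set.Ici (τ * (partialDeg n V s : ℝ) ^ (n - (s + l)) * Delta n V s)
  else
    Set.Icc (τ * (partialDeg n V s : ℝ) ^ (n - (s + l)) * Delta n V s)
      (τ * (partialDeg n V (s + 1) : ℝ) ^ (n - (s + l)) * Delta n V s)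

/-- The ideal `I(V)` of polynomials vanishing on `V ⊆ ℂⁿ`. -/
def vanishingIdeal (V : Set (Fin n → ℂ)) : Ideal (MvPolynomial (Fin n) ℂ) where
  carrier := {f | ∀ x ∈ V, eval x f = 0}
  add_mem' := by
    intro a b ha hb x hx
    simp [ha x hx, hb x hx]
  zero_mem' := by
    intro x hx
    simp
  smul_mem' := by
    intro c f hf x hx
    simp [smul_eq_mul, hf x hx]

/-- The ideal `I_ℝ(V)` of real polynomials vanishing on `V ⊆ ℂⁿ`. -/
def vanishingIdealR (V : Set (Fin n → ℂ)) : Ideal (MvPolynomial (Fin n) ℝ) :=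
  (vanishingIdeal n V).comap (MvPolynomial.map (algebraMap ℝ ℂ))

/-- The affine Hilbert function `H_{I(V)}(m) = dim_ℂ ℂ[x]_{≤ m} / I(V)_{≤ m}`, realised as the
dimension of the image of the space of polynomials of total degree at most `m` in the quotient
ring `ℂ[x]/I(V)`. -/
def hilbert (V : Set (Fin n → ℂ)) (m : ℕ) : ℕ :=
  Module.finrank ℂ
    (Submodule.map (Ideal.Quotient.mkₐ ℂ (vanishingIdeal n V)).toLinearMap
      (restrictTotalDegree (Fin n) ℂ m))

/-- The real affine Hilbert function `H_{I(V),ℝ}(m) = dim_ℝ ℝ[x]_{≤ m} / I_ℝ(V)_{≤ m}`. -/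
def hilbertR (V : Set (Fin n → ℂ)) (m : ℕ) : ℕ :=
  Module.finrank ℝ
    (Submodule.map (Ideal.Quotient.mkₐ ℝ (vanishingIdealR n V)).toLinearMap
      (restrictTotalDegree (Fin n) ℝ m))

/-- The inclusion `ℝⁿ → ℂⁿ`. -/
def toC (x : Fin n → ℝ) : Fin n → ℂ := fun i => (x i : ℂ)

/-- The set of real points of `V ⊆ ℂⁿ`. -/
def realPts (V : Set (Fin n → ℂ)) : Set (Fin n → ℝ) := {x | toC n x ∈ V}

/-- The real zero set of a real polynomial. -/
def zeroSetR (g : MvPolynomial (Fin n) ℝ) : Set (Fin n → ℝ) := {x | eval x g = 0}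

/-- The zero locus of the polynomials `P 1, …, P i` (the first `i` members of a tuple of
polynomials indexed from `1`). -/
def zeroLocusUpTo (P : ℕ → MvPolynomial (Fin n) ℂ) (i : ℕ) : Set (Fin n → ℂ) :=
  zeroLocus n {f | ∃ j : ℕ, 1 ≤ j ∧ j ≤ i ∧ f = P j}

/-- `V'` is an `(n-s)`-minimal variety of the irreducible variety `V`. -/
def IsMinimalVariety (V V' : Set (Fin n → ℂ)) (s : ℕ) : Prop :=
  IsIrredVariety n V' ∧ V ⊆ V' ∧ dim n V' = n - s ∧
    ∀ f ∈ vanishingIdeal n V, f ∉ vanishingIdeal n V' →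
      partialDegE n V (s + 1) ≤ (f.totalDegree : ℕ∞)

/-- `S` is `(k,b)`-free with respect to `T`, for the incidence relation `R`. -/
def KBFree {α β : Type*} (R : α → β → Prop) (S : Finset α) (T : Finset β) (k b : ℕ) : Prop :=
  ¬ ∃ (P : Finset α) (B : Finset β), P ⊆ S ∧ B ⊆ T ∧ P.card = k ∧ B.card = b ∧
      ∀ s ∈ P, ∀ t ∈ B, R s t

/-- The number of incidences between a finite set of points and a finite family of sets. -/
def incCountAbs {α : Type*} (S : Finset α) (T : Finset (Set α)) : ℕ :=
  ∑ t ∈ T, (↑S ∩ t).ncard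

/-- The number of incidences between a finite set of real points and a finite family of
subsets of `ℂⁿ`. -/
def incCount (S : Finset (Fin n → ℝ)) (T : Finset (Set (Fin n → ℂ))) : ℕ :=
  ∑ t ∈ T, (↑S ∩ toC n ⁻¹' t).ncard

/-- The total degree `deg T = ∑_{t ∈ T} deg t` of a finite family of algebraic sets. -/
def degFamily (T : Finset (Set (Fin n → ℂ))) : ℕ := ∑ t ∈ T, degreeSum n t

/-- The total degree of a finite family of irreducible varieties. -/
def degFamilyIrred (T : Finset (Set (Fin n → ℂ))) : ℕ := ∑ t ∈ T, degree n t

/-- `α_k(d)`. -/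
def alpha (k d : ℕ) : ℝ :=
  if k = 1 ∧ d = 1 then 0 else (k : ℝ) * ((d : ℝ) - 1) / ((d : ℝ) * (k : ℝ) - 1)

/-- `β_k(d)`. -/
def beta (k d : ℕ) : ℝ :=
  if k = 1 ∧ d = 1 then 1 else (d : ℝ) * ((k : ℝ) - 1) / ((d : ℝ) * (k : ℝ) - 1)

/-- `τ_d(b,k) = b^{1-β_k(d)} k^{1-α_k(d)}`. -/
def tauC (d b k : ℕ) : ℝ := (b : ℝ) ^ (1 - beta k d) * (k : ℝ) ^ (1 - alpha k d)

/-- The Chardin–Philippon property of the constant `c₀`: for every pure-dimensional algebraic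
set `W ⊆ ℂⁿ` and every `m ≥ 2 (n - dim W) δ(W)` one has `H_{I(W)}(m) ≥ c₀ m^{dim W} deg W`. -/
def ChardinPhilippon (c0 : ℝ) : Prop :=
  ∀ (W : Set (Fin n → ℂ)) (e : ℕ), IsAlgSetOfDim n W e →
    ∀ m : ℕ, 2 * (n - e) * deltaSet n W ≤ m →
      c0 * (m : ℝ) ^ e * (degreeSum n W : ℝ) ≤ (hilbert n W m : ℝ)

/-- The defining property of the constant `c₁`: for every irreducible variety `V`, every
positive integer lies in some interval `ℛ_i(V)` with `i` admissible with respect to `V`. -/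
def CoversPositiveIntegers (c0 c1 : ℝ) : Prop :=
  ∀ V : Set (Fin n → ℂ), IsIrredVariety n V →
    ∀ m : ℕ, 0 < m → ∃ i, Admissible n V i ∧ (m : ℝ) ∈ RSet n c0 c1 V i

/-- `i_V(M)`: the smallest admissible `i` such that `M^{n-i} Δ_i(V) ∈ ℛ_i(V)`. -/
def iV (c0 c1 : ℝ) (V : Set (Fin n → ℂ)) (M : ℕ) : ℕ :=
  sInf {i | Admissible n V i ∧ (M : ℝ) ^ (n - i) * Delta n V i ∈ RSet n c0 c1 V i}

/-- A real polynomial bisects a finite set `S ⊆ ℝⁿ` if it is positive on at most half of `S`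
and negative on at most half of `S`. -/
def Bisects (g : MvPolynomial (Fin n) ℝ) (S : Finset (Fin n → ℝ)) : Prop :=
  ((↑S ∩ {x | 0 < eval x g}).ncard : ℝ) ≤ (S.card : ℝ) / 2 ∧
    ((↑S ∩ {x | eval x g < 0}).ncard : ℝ) ≤ (S.card : ℝ) / 2

/-- The set of `r`-rich points of a family `T`: points lying in at least `r` members of `T`. -/
def richPts (T : Finset (Set (Fin n → ℂ))) (r : ℕ) : Set (Fin n → ℂ) :=
  {x | r ≤ ({t | t ∈ T ∧ x ∈ t} : Set (Set (Fin n → ℂ))).ncard}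

/-- A real hypersurface of degree at most `D`: the real zero set of a nonzero real polynomial
of degree at most `D`. -/
def IsRealHypersurfaceDegLE (t : Set (Fin n → ℝ)) (D : ℕ) : Prop :=
  ∃ p : MvPolynomial (Fin n) ℝ, p ≠ 0 ∧ t = zeroSetR n p ∧ p.totalDegree ≤ D

/-- Lexicographic comparison of the tuples `(f 1, …, f m)` and `(g 1, …, g m)`. -/
def LexLE (m : ℕ) (f g : ℕ → ℕ) : Prop :=
  (∀ j ∈ Finset.Icc 1 m, f j = g j) ∨
    ∃ i ∈ Finset.Icc 1 m, (∀ j, 1 ≤ j → j < i → f j = g j) ∧ f i < g i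


set_option linter.all false

lemma mem_powIdeal {k : Type*} [Field k] {n : ℕ} (s : Set (Fin n)) (N : ℕ)
    (f : MvPolynomial (Fin n) k) :
    f ∈ Ideal.span ((fun i => (X i : MvPolynomial (Fin n) k) ^ N) '' s) ↔
      ∀ m ∈ f.support, ∃ i ∈ s, N ≤ m i := by
  have := @mem_ideal_span_monomial_image (Fin n) k _ f ((fun i => Finsupp.single i N) '' s)
  rw [Set.image_image] at this
  simp only [← X_pow_eq_monomial] at this
  rw [this]
  simp [Finsupp.single_le_iff]

lemma powIdeal_nzd {k : Type*} [Field k] {n : ℕ} (i : Fin n) (N : ℕ)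
    (f : MvPolynomial (Fin n) k)
    (h : X i * f ∈ Ideal.span ((fun i => (X i : MvPolynomial (Fin n) k) ^ N) '' {i}ᶜ)) :
    f ∈ Ideal.span ((fun i => (X i : MvPolynomial (Fin n) k) ^ N) '' {i}ᶜ) := by
  rw [mem_powIdeal] at h ⊢
  intro m hm
  obtain ⟨j, hj, hN⟩ := h (Finsupp.single i 1 + m) (by
    rw [mem_support_iff, coeff_X_mul]; exact mem_support_iff.1 hm)
  refine ⟨j, hj, ?_⟩
  have : j ≠ i := hj
  simpa [Finsupp.single_apply, this.symm] using hN

lemma cramer_mem {R : Type*} [CommRing R] {n : ℕ} (M : Matrix (Fin n) (Fin n) R) (x : Fin n → R)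
    (J : Ideal R) (h : ∀ i, ∑ j, M i j * x j ∈ J) (i : Fin n) : M.det * x i ∈ J := by
  have h1 : M.det • x = M.adjugate.mulVec (M.mulVec x) := by
    rw [Matrix.mulVec_mulVec, Matrix.adjugate_mul, Matrix.smul_mulVec, Matrix.one_mulVec]
  have h2 := congrFun h1 i
  simp only [Pi.smul_apply, smul_eq_mul] at h2
  rw [h2, Matrix.mulVec, dotProduct]
  exact Ideal.sum_mem _ fun j _ => Ideal.mul_mem_left _ _ (h j)

lemma wiebe_core {k : Type*} [Field k] {n : ℕ} (N : ℕ) (u : MvPolynomial (Fin n) k)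
    (M : Matrix (Fin n) (Fin n) (MvPolynomial (Fin n) k))
    (hM : ∀ i, ∑ j, M i j * X j = u * X i ^ (N + 1)) :
    M.det - u ^ n * ∏ i, X i ^ N ∈
      Ideal.span (Set.range fun i => (X i : MvPolynomial (Fin n) k) ^ (N + 1)) := by
  classical
  set J := Ideal.span (Set.range fun i => (X i : MvPolynomial (Fin n) k) ^ (N + 1)) with hJ
  let E : Fin n → Fin n → MvPolynomial (Fin n) k := fun i => Pi.single i (u * X i ^ N)
  have hE : ∀ i, ∑ j, E i j * X j = u * X i ^ (N + 1) := by
    intro i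
    simp [E, Pi.single_apply, pow_succ, mul_assoc]
  let Ms : Finset (Fin n) → Matrix (Fin n) (Fin n) (MvPolynomial (Fin n) k) :=
    fun s => Matrix.of fun i => if i ∈ s then E i else M i
  have hMs : ∀ s i, ∑ j, Ms s i j * X j = u * X i ^ (N + 1) := by
    intro s i
    by_cases h : i ∈ s
    · simp only [Ms, Matrix.of_apply, h, if_true]; exact hE i
    · simp only [Ms, Matrix.of_apply, h, if_false]; exact hM i
  have key : ∀ s, M.det - (Ms s).det ∈ J := by
    intro s
    induction s using Finset.induction_on with
    | empty =>
      have : Ms ∅ = M := by ext i j; simp [Ms]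
      simp [this]
    | insert i s hi ih =>
      have e1 : Ms (insert i s) = (Ms s).updateRow i (E i) := by
        ext a b
        by_cases h : a = i
        · subst h; simp [Ms]
        · simp [Ms, h, Matrix.updateRow_ne h]
      have e2 : (Ms s).det - (Ms (insert i s)).det =
          ((Ms s).updateRow i (Ms s i - E i)).det := by
        have := Matrix.det_updateRow_add (Ms s) i (Ms s i - E i) (E i)
        rw [sub_add_cancel, Matrix.updateRow_eq_self] at this
        rw [e1, this]; ring
      have e3 : X i * ((Ms s).updateRow i (Ms s i - E i)).det ∈
          Ideal.span ((fun i => (X i : MvPolynomial (Fin n) k) ^ (N+1)) '' {i}ᶜ) := by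
        rw [mul_comm]
        apply cramer_mem _ (fun j => X j)
        intro a
        by_cases h : a = i
        · subst h
          have : ∑ j, (Ms s).updateRow a (Ms s a - E a) a j * X j = 0 := by
            simp only [Matrix.updateRow_self, Pi.sub_apply, sub_mul, Finset.sum_sub_distrib]
            rw [hMs, hE, sub_self]
          rw [this]; exact Ideal.zero_mem _
        · simp only [Matrix.updateRow_ne h]
          rw [hMs]
          exact Ideal.mul_mem_left _ _ (Ideal.subset_span ⟨a, h, rfl⟩)
      have e4 := powIdeal_nzd i (N+1) _ e3
      have e5 : Ideal.span ((fun i => (X i : MvPolynomial (Fin n) k) ^ (N+1)) '' {i}ᶜ) ≤ J :=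
        Ideal.span_mono (Set.image_subset_range _ _)
      have := Ideal.add_mem _ ih (e5 e4)
      rw [← e2] at this
      simpa using this
  have hfin : (Ms Finset.univ).det = u ^ n * ∏ i, X i ^ N := by
    have : Ms Finset.univ = Matrix.diagonal (fun i => u * X i ^ N) := by
      ext i j
      simp [Ms, E, Matrix.diagonal_apply, Pi.single_apply, eq_comm]
    rw [this, Matrix.det_diagonal, Finset.prod_mul_distrib]
    simp
  rw [← hfin]
  exact key _

theorem wiebe0 {k : Type*} [Field k] {n : ℕ} (N : ℕ) (u u' : MvPolynomial (Fin n) k)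
    (hu : constantCoeff u ≠ 0) (hu' : constantCoeff u' ≠ 0)
    (A : Matrix (Fin n) (Fin n) (MvPolynomial (Fin n) k))
    (hN : ∀ i, u * X i ^ (N + 1) ∈ Ideal.span (Set.range fun i => ∑ j, A i j * X j)) :
    u' * A.det ∉ Ideal.span (Set.range fun i => ∑ j, A i j * X j) := by
  classical
  intro hmem
  choose Cm hCm using fun i => (Ideal.mem_span_range_iff_exists_fun.1 (hN i))
  set J := Ideal.span (Set.range fun i => (X i : MvPolynomial (Fin n) k) ^ (N + 1)) with hJ
  let CM : Matrix (Fin n) (Fin n) (MvPolynomial (Fin n) k) := Matrix.of Cm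
  have h1 : ∀ i, ∑ j, (CM * A) i j * X j = u * X i ^ (N + 1) := by
    intro i
    rw [← hCm i]
    simp only [Matrix.mul_apply, Finset.sum_mul, Finset.mul_sum, CM, Matrix.of_apply]
    rw [Finset.sum_comm]
    simp [mul_assoc]
  have h2 := wiebe_core N u (CM * A) h1
  have h3 : u' * A.det * CM.det ∈ J := by
    obtain ⟨c, hc⟩ := Ideal.mem_span_range_iff_exists_fun.1 hmem
    rw [← hc, Finset.sum_mul]
    refine Ideal.sum_mem _ fun i _ => ?_
    rw [mul_assoc, mul_comm _ CM.det]
    refine Ideal.mul_mem_left _ _ ?_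
    refine cramer_mem CM (fun i => ∑ j, A i j * X j) J ?_ i
    intro i
    simp only [CM, Matrix.of_apply]
    rw [hCm i]
    exact Ideal.mul_mem_left _ _ (Ideal.subset_span ⟨i, rfl⟩)
  rw [Matrix.det_mul] at h2
  have h4 : u' * u ^ n * ∏ i, X i ^ N ∈ J := by
    have := Ideal.sub_mem _ h3 (Ideal.mul_mem_left _ u' h2)
    convert this using 1
    ring
  rw [hJ, ← Set.image_univ, mem_powIdeal] at h4
  have hmon : (∏ i, (X i : MvPolynomial (Fin n) k) ^ N) =
      monomial (Finsupp.equivFunOnFinite.symm fun _ => N) 1 := by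
    rw [monomial_eq]
    simp [Finsupp.prod_fintype]
  obtain ⟨i, -, hi⟩ := h4 (Finsupp.equivFunOnFinite.symm fun _ => N) (by
    rw [mem_support_iff, hmon, coeff_mul_monomial']
    simp only [le_refl, if_true, tsub_self, mul_one]
    rw [← constantCoeff_eq, map_mul, map_pow]
    exact mul_ne_zero hu' (pow_ne_zero _ hu))
  simp at hi

theorem wiebe {k : Type*} [Field k] {n : ℕ} (N : ℕ) (p : Fin n → k) (u u' : MvPolynomial (Fin n) k)
    (hu : eval p u ≠ 0) (hu' : eval p u' ≠ 0) (G : Fin n → MvPolynomial (Fin n) k)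
    (A : Matrix (Fin n) (Fin n) (MvPolynomial (Fin n) k))
    (hG : ∀ i, G i = ∑ j, A i j * (X j - C (p j)))
    (hN : ∀ i, u * (X i - C (p i)) ^ (N + 1) ∈ Ideal.span (Set.range G)) :
    u' * A.det ∉ Ideal.span (Set.range G) := by
  classical
  let τ : MvPolynomial (Fin n) k →ₐ[k] MvPolynomial (Fin n) k := aeval fun j => X j + C (p j)
  have hτ : ∀ f, constantCoeff (τ f) = eval p f := by
    intro f
    have : (constantCoeff.comp τ.toRingHom) = (eval p : MvPolynomial (Fin n) k →+* k) := by
      apply MvPolynomial.ringHom_ext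
      · intro r; simp [τ, algebraMap_eq]
      · intro i; simp [τ]
    exact DFunLike.congr_fun this f
  have hX : ∀ j, τ (X j - C (p j)) = X j := by
    intro j; simp [τ, algebraMap_eq]
  have hmap : (Ideal.span (Set.range G)).map τ = Ideal.span
      (Set.range fun i => ∑ j, (A.map τ) i j * X j) := by
    rw [Ideal.map_span, ← Set.range_comp]
    congr 2
    ext1 i
    simp only [Function.comp, hG, map_sum, map_mul, hX, Matrix.map_apply]
  intro hmem
  refine wiebe0 N (τ u) (τ u') (by rwa [hτ]) (by rwa [hτ]) (A.map τ) ?_ ?_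
  · intro i
    rw [← hmap]
    have := Ideal.mem_map_of_mem τ (hN i)
    rwa [map_mul, map_pow, hX] at this
  · rw [← hmap]
    have := Ideal.mem_map_of_mem τ hmem
    rw [map_mul] at this
    have e : τ A.det = (A.map τ).det := by
      rw [AlgHom.map_det]; rfl
    rwa [e] at this

lemma divdiff_aux {R : Type*} [CommRing R] {n : ℕ} (i : Fin n) (b c : Fin n → R) (x g : R) :
    ∑ j, (b j * x + (if j = i then g else 0)) * c j = (∑ j, b j * c j) * x + g * c i := by
  classical
  simp only [add_mul, Finset.sum_add_distrib, Finset.sum_mul, ite_mul, zero_mul,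
    Finset.sum_ite_eq', Finset.sum_ite_eq, Finset.mem_univ, if_true]
  congr 1
  exact Finset.sum_congr rfl fun j _ => by ring

lemma divdiff_aux2 {R : Type*} [CommRing R] (a b c d : R) :
    a * b - c * d = (b - d) * c + b * (a - c) := by ring

lemma divdiff_monomial {k : Type*} [Field k] {n : ℕ} : ∀ (e : ℕ) (m : Fin n →₀ ℕ), m.degree = e →
    ∃ b : Fin n → MvPolynomial (Fin n) (MvPolynomial (Fin n) k), (∀ j, (b j).totalDegree ≤ e) ∧
      C (monomial m 1) - MvPolynomial.map C (monomial m (1 : k)) = ∑ j, b j * (C (X j) - X j) := by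
  classical
  intro e
  induction e with
  | zero =>
    intro m hm
    rw [Finsupp.degree_eq_zero_iff] at hm
    subst hm
    exact ⟨fun _ => 0, by simp, by simp⟩
  | succ e ih =>
    intro m hm
    obtain ⟨i, hi⟩ : ∃ i, m i ≠ 0 := by
      by_contra! h
      have : m = 0 := Finsupp.ext h
      subst this; simp at hm
    obtain ⟨m', rfl⟩ : ∃ m', m = Finsupp.single i 1 + m' :=
      ⟨m - Finsupp.single i 1, by
        rw [add_tsub_cancel_of_le]; simpa [Finsupp.single_le_iff] using Nat.one_le_iff_ne_zero.2 hi⟩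
    have hm' : m'.degree = e := by
      rw [map_add, Finsupp.degree_single] at hm; omega
    obtain ⟨b, hb, hb'⟩ := ih m' hm'
    have hmon : monomial (Finsupp.single i 1 + m') (1:k) = X i * monomial m' 1 := by
      rw [X, monomial_mul, one_mul]
    refine ⟨fun j => b j * X i + (if j = i then C (monomial m' 1) else 0), ?_, ?_⟩
    · intro j
      refine (totalDegree_add _ _).trans (max_le ?_ (by split_ifs <;> simp))
      refine (totalDegree_mul _ _).trans ?_
      have := hb j
      have h2 := (totalDegree_X (R := MvPolynomial (Fin n) k) i).le
      omega
    · rw [divdiff_aux, ← hb', hmon, map_mul, map_mul, MvPolynomial.map_X]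
      exact divdiff_aux2 _ _ _ _

lemma divdiff {k : Type*} [Field k] {n : ℕ} (G : MvPolynomial (Fin n) k) (δ : ℕ)
    (hδ : G.totalDegree ≤ δ) :
    ∃ b : Fin n → MvPolynomial (Fin n) (MvPolynomial (Fin n) k), (∀ j, (b j).totalDegree ≤ δ) ∧
      C G - MvPolynomial.map C G = ∑ j, b j * (C (X j) - X j) := by
  classical
  choose b hb hb' using fun m : Fin n →₀ ℕ => divdiff_monomial (k := k) m.degree m rfl
  refine ⟨fun j => ∑ m ∈ G.support, C (C (coeff m G)) * b m j, ?_, ?_⟩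
  · intro j
    refine (totalDegree_finsetSum _ _).trans (Finset.sup_le fun m hm => ?_)
    refine (totalDegree_mul _ _).trans ?_
    have h1 : m.degree ≤ G.totalDegree := le_totalDegree hm
    have := hb m j
    rw [totalDegree_C]
    omega
  · have hG : C G - MvPolynomial.map C G = ∑ m ∈ G.support, C (C (coeff m G)) *
      ((C (monomial m 1) - MvPolynomial.map C (monomial m (1 : k)) :
        MvPolynomial (Fin n) (MvPolynomial (Fin n) k))) := by
      have e1 : ∀ m, monomial m (coeff m G) = C (coeff m G) * monomial m (1:k) := by
        intro m; rw [C_mul_monomial, mul_one]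
      conv_lhs => rw [G.as_sum]
      simp only [map_sum, e1]
      rw [← Finset.sum_sub_distrib]
      refine Finset.sum_congr rfl fun m _ => ?_
      simp only [map_mul, map_C]
      ring
    rw [hG]
    simp only [hb', Finset.sum_mul, Finset.mul_sum]
    rw [Finset.sum_comm]
    refine Finset.sum_congr rfl fun m _ => Finset.sum_congr rfl fun j _ => by ring

lemma totalDegree_det_le {R : Type*} [CommRing R] {n : ℕ} {σ : Type*} (δ : ℕ)
    (M : Matrix (Fin n) (Fin n) (MvPolynomial σ R)) (h : ∀ i j, (M i j).totalDegree ≤ δ) :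
    M.det.totalDegree ≤ n * δ := by
  rw [Matrix.det_apply]
  refine (totalDegree_finsetSum _ _).trans (Finset.sup_le fun s _ => ?_)
  refine (totalDegree_smul_le _ _).trans ?_
  refine (totalDegree_finsetProd _ _).trans ?_
  refine (Finset.sum_le_sum fun i _ => h _ _).trans ?_
  simp

theorem separator {k : Type*} [Field k] {n : ℕ} (G : Fin n → MvPolynomial (Fin n) k) (δ : ℕ)
    (hδ : ∀ i, (G i).totalDegree ≤ δ) (p : Fin n → k) (hp : ∀ i, eval p (G i) = 0)
    (N : ℕ) (u : MvPolynomial (Fin n) k) (hu : eval p u ≠ 0)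
    (hN : ∀ i, u * (X i - C (p i)) ^ (N + 1) ∈ Ideal.span (Set.range G)) :
    ∃ f : MvPolynomial (Fin n) k, f.totalDegree ≤ n * δ ∧ eval p f ≠ 0 ∧
      ∀ q, (∀ i, eval q (G i) = 0) → q ≠ p → eval q f = 0 := by
  classical
  choose b hb hb' using fun i => divdiff (G i) δ (hδ i)
  let Bz : Matrix (Fin n) (Fin n) (MvPolynomial (Fin n) (MvPolynomial (Fin n) k)) := Matrix.of b
  let ev : (Fin n → k) → MvPolynomial (Fin n) (MvPolynomial (Fin n) k) →+* MvPolynomial (Fin n) k :=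
    fun q => eval (fun j => C (q j))
  have hev : ∀ q i, (∀ i, eval q (G i) = 0) →
      G i = ∑ j, (Bz.map (ev q)) i j * (X j - C (q j)) := by
    intro q i hq
    have := congrArg (ev q) (hb' i)
    have e1 : ev q (MvPolynomial.map C (G i)) = C (eval q (G i)) := by
      have hh : (ev q).comp (MvPolynomial.map C) = (C : k →+* MvPolynomial (Fin n) k).comp (eval q) := by
        refine MvPolynomial.ringHom_ext ?_ ?_ <;> intros <;> simp [ev]
      exact congrArg (fun f => f (G i)) hh
    rw [map_sub, e1, hq i, map_zero, sub_zero] at this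
    simpa [ev, Bz] using this
  have hdet : ∀ q, ev q Bz.det = (Bz.map (ev q)).det := by
    intro q
    rw [RingHom.map_det]; rfl
  let I := Ideal.span (Set.range G)
  let a : Ideal (MvPolynomial (Fin n) k) :=
    { carrier := {h | ∃ u, eval p u ≠ 0 ∧ u * h ∈ I}
      add_mem' := by
        rintro x y ⟨u, hu, hx⟩ ⟨v, hv, hy⟩
        refine ⟨u * v, by simp [hu, hv], ?_⟩
        have := I.add_mem (I.mul_mem_left v hx) (I.mul_mem_left u hy)
        convert this using 1; ring
      zero_mem' := ⟨1, by simp, by simp⟩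
      smul_mem' := by
        rintro c x ⟨u, hu, hx⟩
        refine ⟨u, hu, ?_⟩
        have := I.mul_mem_left c hx
        convert this using 1; simp only [smul_eq_mul]; ring }
  have h1 : ev p Bz.det ∉ a.restrictScalars k := by
    rintro ⟨u', hu', hm⟩
    rw [hdet] at hm
    exact wiebe N p u u' hu hu' G _ (fun i => hev p i hp) hN hm
  have h2 : ∀ q, (∀ i, eval q (G i) = 0) → q ≠ p → ev q Bz.det ∈ a := by
    intro q hq hqp
    obtain ⟨i, hi⟩ := Function.ne_iff.1 hqp
    refine ⟨X i - C (q i), ?_, ?_⟩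
    · simp only [map_sub, eval_X, eval_C]; exact sub_ne_zero.2 (Ne.symm hi)
    · rw [hdet, mul_comm]
      refine cramer_mem _ (fun j => X j - C (q j)) I ?_ i
      intro i
      rw [← hev q i hq]
      exact Ideal.subset_span ⟨i, rfl⟩
  obtain ⟨φ, hφ1, hφ2⟩ := Submodule.exists_le_ker_of_notMem h1
  let f : MvPolynomial (Fin n) k := ∑ m ∈ Bz.det.support, monomial m (φ (coeff m Bz.det))
  have hf : ∀ q, eval q f = φ (ev q Bz.det) := by
    intro q
    have : ev q Bz.det = ∑ m ∈ Bz.det.support, (∏ i, q i ^ m i) • coeff m Bz.det := by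
      simp only [ev]
      rw [eval_eq']
      refine Finset.sum_congr rfl fun m _ => ?_
      rw [smul_eq_C_mul, mul_comm]; simp
    rw [this]
    simp only [f, map_sum, map_smul, smul_eq_mul]
    refine Finset.sum_congr rfl fun m _ => ?_
    rw [eval_monomial, mul_comm, Finsupp.prod_fintype _ _ (by simp)]
  refine ⟨f, ?_, ?_, ?_⟩
  · refine (totalDegree_finsetSum _ _).trans (Finset.sup_le fun m hm => ?_)
    refine (totalDegree_monomial_le _ _).trans ?_
    exact (le_totalDegree hm).trans (totalDegree_det_le δ _ fun i j => hb i j)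
  · rw [hf]; exact hφ1
  · intro q hq hqp
    rw [hf]
    exact hφ2 (h2 q hq hqp)

/-- span of one and the `y j`. -/
def Ysp (k : Type*) {B : Type*} [Field k] [CommRing B] [Algebra k B] {ι : Type*} (y : ι → B) :
    Submodule k B := Submodule.span k (insert 1 (Set.range y))

section
variable {k B : Type*} [Field k] [CommRing B] [Algebra k B]

lemma one_mem_Ysp {ι : Type*} (y : ι → B) : (1 : B) ∈ Ysp k y :=
  Submodule.subset_span (Set.mem_insert _ _)

lemma mem_Ysp {ι : Type*} (y : ι → B) (i : ι) : y i ∈ Ysp k y :=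
  Submodule.subset_span (Set.mem_insert_of_mem _ ⟨i, rfl⟩)

lemma Ysp_le {ι : Type*} (y : ι → B) (S : Submodule k B) : Ysp k y ≤ S ↔ 1 ∈ S ∧ ∀ i, y i ∈ S := by
  rw [Ysp, Submodule.span_le, Set.insert_subset_iff, Set.range_subset_iff]; rfl

lemma Ysp_mono_pow {ι : Type*} (y : ι → B) {a b : ℕ} (h : a ≤ b) : Ysp k y ^ a ≤ Ysp k y ^ b :=
  pow_le_pow_right' (Submodule.one_le.2 (one_mem_Ysp y)) h

lemma Ysp_pow {ι : Type*} [Finite ι] (y : ι → B) (m : ℕ) :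
    Ysp k y ^ m = Submodule.map (aeval y : MvPolynomial ι k →ₐ[k] B).toLinearMap
      (restrictTotalDegree ι k m) := by
  apply le_antisymm
  · induction m with
    | zero =>
      rw [pow_zero, Submodule.one_le]
      exact ⟨1, by simp [mem_restrictTotalDegree], by simp⟩
    | succ m ih =>
      rw [pow_succ]
      refine (mul_le_mul' ih le_rfl).trans ?_
      rw [Submodule.mul_le]
      rintro _ ⟨f, hf, rfl⟩ u hu
      rw [SetLike.mem_coe, mem_restrictTotalDegree] at hf
      have : Ysp k y ≤ Submodule.map (aeval y : MvPolynomial ι k →ₐ[k] B).toLinearMap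
          (restrictTotalDegree ι k 1) := by
        rw [Ysp_le]
        refine ⟨⟨1, by simp [mem_restrictTotalDegree], by simp⟩, fun i => ⟨X i, ?_, by simp⟩⟩
        simp [mem_restrictTotalDegree]
      obtain ⟨g, hg, rfl⟩ := this hu
      rw [SetLike.mem_coe, mem_restrictTotalDegree] at hg
      refine ⟨f * g, ?_, by simp⟩
      rw [SetLike.mem_coe, mem_restrictTotalDegree]
      exact (totalDegree_mul _ _).trans (by omega)
  · rintro _ ⟨f, hf, rfl⟩
    rw [SetLike.mem_coe, mem_restrictTotalDegree] at hf
    change aeval y f ∈ _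
    rw [f.as_sum, map_sum]
    refine Submodule.sum_mem _ fun a ha => ?_
    rw [aeval_monomial, ← Algebra.smul_def]
    refine Submodule.smul_mem _ _ ?_
    have h1 : a.degree ≤ m := (le_totalDegree ha).trans hf
    refine Ysp_mono_pow y h1 ?_
    clear h1 ha
    induction a using Finsupp.induction with
    | zero => simpa using ⟨1, map_one _⟩
    | single_add i b f hi hb ih =>
      rw [Finsupp.prod_add_index' (by simp) (by intros; rw [pow_add]), map_add, pow_add]
      refine Submodule.mul_mem_mul ?_ ih
      rw [Finsupp.degree_single, Finsupp.prod_single_index (by simp)]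
      exact Submodule.pow_mem_pow _ (mem_Ysp y i) _

lemma aeval_mem_Ysp {ι : Type*} [Finite ι] (y : ι → B) (m : ℕ) (f : MvPolynomial ι k)
    (h : f.totalDegree ≤ m) : aeval y f ∈ Ysp k y ^ m := by
  rw [Ysp_pow]; exact ⟨f, by simpa [mem_restrictTotalDegree] using h, rfl⟩

lemma homog_red {l : ℕ} (y : Fin l → B) (w : B) (c : Fin l → k) (Y' : Submodule k B)
    (hw : w ∈ Ysp k y) (h : ∀ j, y j - c j • w ∈ Y') :
    ∀ (m : ℕ) (a : Fin l →₀ ℕ), a.degree = m + 1 →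
      aeval y (monomial a (1 : k)) - eval c (monomial a 1) • w ^ (m + 1) ∈ Y' * Ysp k y ^ m := by
  have key : ∀ (m : ℕ) (a : Fin l →₀ ℕ), a.degree = m + 1 → ∃ i a', 
      a = Finsupp.single i 1 + a' ∧ a'.degree = m := by
    intro m a ha
    obtain ⟨i, hi⟩ : ∃ i, a i ≠ 0 := by
      by_contra! h
      have : a = 0 := Finsupp.ext h
      subst this; simp at ha
    obtain ⟨a', rfl⟩ : ∃ m', a = Finsupp.single i 1 + m' :=
      ⟨a - Finsupp.single i 1, by
        rw [add_tsub_cancel_of_le]; simpa [Finsupp.single_le_iff] using Nat.one_le_iff_ne_zero.2 hi⟩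
    refine ⟨i, a', rfl, ?_⟩
    rw [map_add, Finsupp.degree_single] at ha; omega
  have hX : ∀ i a', (monomial (Finsupp.single i 1 + a') (1 : k) : MvPolynomial (Fin l) k)
    = X i * monomial a' 1 := by
      intro i a'
      rw [X, monomial_mul, one_mul]
  intro m
  induction m with
  | zero =>
    intro a ha
    obtain ⟨i, a', rfl, ha'⟩ := key _ _ ha
    rw [Finsupp.degree_eq_zero_iff] at ha'
    subst ha'
    rw [hX]
    have := h i
    simpa using this
  | succ m ih =>
    intro a ha
    obtain ⟨i, a', rfl, ha'⟩ := key _ _ ha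
    rw [hX]
    have h1 := ih a' ha'
    have h2 : (y i - c i • w) * aeval y (monomial a' (1:k)) ∈ Y' * Ysp k y ^ (m+1) :=
      Submodule.mul_mem_mul (h i) (aeval_mem_Ysp y _ _ ((totalDegree_monomial_le _ _).trans ha'.le))
    have h3 : (c i • w) * (aeval y (monomial a' (1 : k)) - eval c (monomial a' 1) • w ^ (m + 1)) ∈
        Y' * Ysp k y ^ (m+1) := by
      rw [pow_succ, ← mul_assoc, mul_comm (c i • w)]
      exact Submodule.mul_mem_mul h1 (Submodule.smul_mem _ _ hw)
    have h4 := add_mem h2 h3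
    convert h4 using 1
    simp only [map_mul, aeval_X, eval_X]
    rw [mul_sub, sub_mul, smul_mul_smul_comm, ← pow_succ' w]
    abel

lemma homog_red' {l : ℕ} (y : Fin l → B) (w : B) (c : Fin l → k) (Y' : Submodule k B)
    (hw : w ∈ Ysp k y) (h : ∀ j, y j - c j • w ∈ Y') (h1 : (1 : B) ∈ Y')
    (m : ℕ) (F : MvPolynomial (Fin l) k) (hF : F.totalDegree ≤ m + 1) :
      aeval y F - eval c (homogeneousComponent (m + 1) F) • w ^ (m + 1) ∈ Y' * Ysp k y ^ m := by
  classical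
  rw [F.as_sum]
  simp only [map_sum, Finset.sum_smul]
  rw [← Finset.sum_sub_distrib]
  refine Submodule.sum_mem _ fun a ha => ?_
  have e1 : monomial a (coeff a F) = coeff a F • monomial a (1 : k) := by
    rw [smul_monomial, smul_eq_mul, mul_one]
  have h2 : a.degree ≤ m + 1 := (le_totalDegree ha).trans hF
  rw [e1]
  simp only [map_smul, smul_eval, mul_smul]
  rw [← smul_sub]
  refine Submodule.smul_mem _ _ ?_
  by_cases h3 : a.degree = m + 1
  · rw [homogeneousComponent_of_mem (isHomogeneous_monomial (1 : k) h3), if_pos rfl]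
    exact homog_red y w c Y' hw h m a h3
  · rw [homogeneousComponent_of_mem (isHomogeneous_monomial (1 : k) rfl), if_neg (Ne.symm h3), map_zero, zero_smul,
      sub_zero]
    have : aeval y (monomial a (1:k)) ∈ Ysp k y ^ m :=
      aeval_mem_Ysp y _ _ ((totalDegree_monomial_le _ _).trans (show a.degree ≤ m by omega))
    simpa using Submodule.mul_mem_mul h1 this

lemma noether_step [Infinite k] [Nontrivial B] {l : ℕ} (y : Fin (l + 1) → B)
    (hy : ¬ AlgebraicIndependent k y) :
    ∃ y' : Fin l → B, Ysp k y' ≤ Ysp k y ∧ ∃ e, Ysp k y ^ (e + 1) ≤ Ysp k y' * Ysp k y ^ e := by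
  rw [algebraicIndependent_iff] at hy
  push Not at hy
  obtain ⟨F, hF0, hF⟩ := hy
  obtain ⟨e, he⟩ : ∃ e, F.totalDegree = e + 1 := by
    refine Nat.exists_eq_succ_of_ne_zero fun h => hF ?_
    rw [totalDegree_eq_zero_iff_eq_C] at h
    rw [h, aeval_C, ] at hF0
    rw [h, (map_eq_zero_iff _ (FaithfulSMul.algebraMap_injective k B)).1 hF0, map_zero]
  have hT : homogeneousComponent (e + 1) F ≠ 0 := by
    intro h0
    obtain ⟨a, ha, ha'⟩ := Finset.exists_mem_eq_sup F.support (support_nonempty.2 hF) (fun s => s.degree)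
    have h1 : a.degree = e + 1 := by rw [← ha', ← he]; rfl
    have := congrArg (coeff a) h0
    rw [coeff_homogeneousComponent, if_pos h1, coeff_zero] at this
    exact (mem_support_iff.1 ha) this
  obtain ⟨c, hc⟩ : ∃ c, eval c (homogeneousComponent (e+1) F * X (Fin.last l)) ≠ 0 := by
    by_contra! h
    have : homogeneousComponent (e+1) F * X (Fin.last l) = 0 :=
      MvPolynomial.funext (fun x => by rw [h, map_zero])
    rcases mul_eq_zero.1 this with h | h
    · exact hT h
    · exact X_ne_zero _ h
  rw [map_mul, eval_X] at hc
  have hc1 := left_ne_zero_of_mul hc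
  have hc2 := right_ne_zero_of_mul hc
  let w : B := (c (Fin.last l))⁻¹ • y (Fin.last l)
  let y' : Fin l → B := fun j => y j.castSucc - c j.castSucc • w
  have hw : w ∈ Ysp k y := Submodule.smul_mem _ _ (mem_Ysp _ _)
  have h : ∀ j, y j - c j • w ∈ Ysp k y' := by
    intro j
    induction j using Fin.lastCases with
    | last => simp [w, smul_smul, hc2]
    | cast j => exact mem_Ysp y' j
  refine ⟨y', ?_, e, ?_⟩
  · rw [Ysp_le]
    exact ⟨one_mem_Ysp y, fun j => sub_mem (mem_Ysp _ _) (Submodule.smul_mem _ _ hw)⟩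
  have hwe : w ^ (e+1) ∈ Ysp k y' * Ysp k y ^ e := by
    have := homog_red' y w c _ hw h (one_mem_Ysp y') e F he.le
    rw [hF0, zero_sub, neg_mem_iff] at this
    have := Submodule.smul_mem _ (eval c (homogeneousComponent (e + 1) F))⁻¹ this
    rwa [smul_smul, inv_mul_cancel₀ hc1, one_smul] at this
  rw [Ysp_pow]
  rintro _ ⟨g, hg, rfl⟩
  rw [SetLike.mem_coe, mem_restrictTotalDegree] at hg
  have := homog_red' y w c _ hw h (one_mem_Ysp y') e g hg
  have h5 := add_mem this (Submodule.smul_mem _ (eval c (homogeneousComponent (e + 1) g)) hwe)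
  rwa [sub_add_cancel] at h5

/-- `y` is a linear reduction of `U`. -/
def IsRed {l : ℕ} (U : Submodule k B) (y : Fin l → B) : Prop :=
  Ysp k y ≤ U ∧ ∃ M, U ^ (M + 1) ≤ Ysp k y * U ^ M

lemma IsRed.trans {l l' : ℕ} {U : Submodule k B} {y : Fin l → B} {y' : Fin l' → B}
    (h : IsRed U y) (h' : IsRed (Ysp k y) y') : IsRed U y' := by
  obtain ⟨h1, M, hM⟩ := h
  obtain ⟨h2, e, he⟩ := h'
  refine ⟨h2.trans h1, e + M, ?_⟩
  have key : ∀ j, U ^ (j + M) ≤ Ysp k y ^ j * U ^ M := by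
    intro j
    induction j with
    | zero => simp
    | succ j ih =>
      calc U ^ (j + 1 + M) = U ^ (j + M) * U := by rw [← pow_succ]; congr 1; omega
        _ ≤ (Ysp k y ^ j * U ^ M) * U := mul_le_mul' ih le_rfl
        _ = Ysp k y ^ j * U ^ (M+1) := by rw [mul_assoc, pow_succ]
        _ ≤ Ysp k y ^ j * (Ysp k y * U ^ M) := mul_le_mul' le_rfl hM
        _ = _ := by rw [← mul_assoc, pow_succ]
  calc U ^ (e + M + 1) = U ^ (e + 1 + M) := by congr 1; omega
    _ ≤ _ := key _
    _ ≤ (Ysp k y' * Ysp k y ^ e) * U ^ M := mul_le_mul' he le_rfl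
    _ ≤ Ysp k y' * (U ^ e * U ^ M) := by
      rw [mul_assoc]
      exact mul_le_mul' le_rfl (mul_le_mul' (pow_le_pow_left' h1 e) le_rfl)
    _ = _ := by rw [pow_add]

theorem noether [Infinite k] [Nontrivial B] {U : Submodule k B} : ∀ {l : ℕ} (y : Fin l → B),
    IsRed U y → ∃ l' ≤ l, (¬ AlgebraicIndependent k y → l' < l) ∧ ∃ y' : Fin l' → B, IsRed U y' ∧ AlgebraicIndependent k y' := by
  intro l
  induction l with
  | zero =>
    intro y hy
    have : AlgebraicIndependent k y := by
      rw [algebraicIndependent_empty_type_iff]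
      exact FaithfulSMul.algebraMap_injective k B
    exact ⟨0, le_rfl, fun h => absurd this h, y, hy, this⟩
  | succ l ih =>
    intro y hy
    by_cases hi : AlgebraicIndependent k y
    · exact ⟨l+1, le_rfl, fun h => absurd hi h, y, hy, hi⟩
    · obtain ⟨y1, h1, e, he⟩ := noether_step y hi
      obtain ⟨l', hl', _, y', h2, h3⟩ := ih y1 (hy.trans ⟨h1, e, he⟩)
      exact ⟨l', by omega, fun _ => by omega, y', h2, h3⟩

lemma IsRed.pow_le {l : ℕ} {U : Submodule k B} {y : Fin l → B} (h : IsRed U y) :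
    ∃ M, ∀ m, U ^ m ≤ Ysp k y ^ m * U ^ M := by
  obtain ⟨h1, M, hM⟩ := h
  have hU : 1 ≤ U := Submodule.one_le.2 (h1 (one_mem_Ysp y))
  refine ⟨M, fun m => ?_⟩
  induction m with
  | zero => simpa using pow_le_pow_right' hU (Nat.zero_le M)
  | succ j ih =>
    calc U ^ (j + 1) = U ^ j * U := by rw [← pow_succ]
        _ ≤ (Ysp k y ^ j * U ^ M) * U := mul_le_mul' ih le_rfl
        _ = Ysp k y ^ j * U ^ (M+1) := by rw [mul_assoc, pow_succ]
        _ ≤ Ysp k y ^ j * (Ysp k y * U ^ M) := mul_le_mul' le_rfl hM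
        _ = _ := by rw [← mul_assoc, pow_succ]

end

lemma coords (A B : Type*) [CommRing A] [IsDomain A] [AddCommGroup B] [Module A B]
    [Module.Finite A B] :
    ∃ (e : Fin (Module.finrank A B) → B) (h : A) (κ : B →ₗ[A] (Fin (Module.finrank A B) → A)),
      h ≠ 0 ∧ LinearIndependent A e ∧ ∀ f, h • f = ∑ j, κ f j • e j := by
  classical
  obtain ⟨s, hs, hs'⟩ := exists_set_linearIndependent A B
  have hfin : s.Finite := by
    rw [← Cardinal.lt_aleph0_iff_set_finite, hs]; exact Module.rank_lt_aleph0 A B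
  have := hfin.fintype
  have hcard : Fintype.card s = Module.finrank A B := by
    rw [Module.finrank, ← hs]; simp
  let eq : Fin (Module.finrank A B) ≃ s := (Fintype.equivFinOfCardEq hcard).symm
  let e : Fin (Module.finrank A B) → B := fun j => (eq j : B)
  have he : LinearIndependent A e := hs'.comp eq eq.injective
  let N := Submodule.span A (Set.range e)
  have hN : Module.rank A (B ⧸ N) = 0 := by
    have h1 := Submodule.finrank_quotient_add_finrank N
    have h2 : Module.finrank A N = Module.finrank A B := by
      simpa using finrank_span_eq_card he
    rw [← Module.finrank_eq_rank]
    have : Module.finrank A (B ⧸ N) = 0 := by omega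
    simp [this]
  rw [rank_eq_zero_iff] at hN
  obtain ⟨t, ht⟩ := Module.Finite.fg_top (R := A) (M := B)
  choose a ha0 ha using fun b : B => hN (Submodule.Quotient.mk b)
  simp only [← Submodule.Quotient.mk_smul, Submodule.Quotient.mk_eq_zero] at ha
  let h : A := ∏ b ∈ t, a b
  have hh : ∀ f : B, h • f ∈ N := by
    intro f
    have hf : f ∈ Submodule.span A (t : Set B) := by rw [ht]; trivial
    induction hf using Submodule.span_induction with
    | mem x hx =>
      have : h • x = (∏ b ∈ t.erase x, a b) • a x • x := by
        rw [smul_smul, Finset.prod_erase_mul _ _ hx]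
      rw [this]
      exact N.smul_mem _ (ha x)
    | zero => simp
    | add x y _ _ hx hy => rw [smul_add]; exact add_mem hx hy
    | smul c x _ hx => rw [smul_comm]; exact N.smul_mem _ hx
  let κ : B →ₗ[A] (Fin (Module.finrank A B) → A) :=
    Finsupp.lcoeFun ∘ₗ he.repr ∘ₗ LinearMap.codRestrict N (LinearMap.lsmul A B h) hh
  refine ⟨e, h, κ, Finset.prod_ne_zero_iff.2 fun b _ => ha0 b, he, fun f => ?_⟩
  have := he.linearCombination_repr ⟨h • f, hh f⟩
  rw [Finsupp.linearCombination_apply, Finsupp.sum_fintype _ _ (by simp)] at this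
  exact this.symm

section
variable {k B : Type*} [Field k] [CommRing B] [Algebra k B] {l : ℕ}
  [Algebra (MvPolynomial (Fin l) k) B] [IsScalarTower k (MvPolynomial (Fin l) k) B]

variable (k B l) in
/-- coordinate elements -/
def yv : Fin l → B := fun i => algebraMap (MvPolynomial (Fin l) k) B (X i)

lemma aeval_yv (f : MvPolynomial (Fin l) k) : aeval (yv k B l) f = algebraMap _ B f := by
  have : (aeval (yv k B l) : MvPolynomial (Fin l) k →ₐ[k] B) = IsScalarTower.toAlgHom k (MvPolynomial (Fin l) k) B := by
    refine MvPolynomial.algHom_ext fun i => ?_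
    simp [yv]
  rw [this]; rfl

lemma mem_Ysp_pow {m : ℕ} {b : B} (h : b ∈ Ysp k (yv k B l) ^ m) :
    ∃ g : MvPolynomial (Fin l) k, g.totalDegree ≤ m ∧ algebraMap _ B g = b := by
  rw [Ysp_pow] at h
  obtain ⟨g, hg, rfl⟩ := h
  exact ⟨g, by simpa [mem_restrictTotalDegree] using hg, (aeval_yv g).symm⟩

lemma IsRed.finite {U : Submodule k B} [FiniteDimensional k U] (h : IsRed U (yv k B l))
    (hU : ∀ b : B, ∃ m, b ∈ U ^ m) : Module.Finite (MvPolynomial (Fin l) k) B := by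
  obtain ⟨M, hM⟩ := h.pow_le
  have hfg : (U ^ M).FG := Submodule.FG.pow ((Submodule.fg_iff_finiteDimensional U).2 inferInstance) M
  obtain ⟨t, ht⟩ := hfg
  refine ⟨t, ?_⟩
  rw [eq_top_iff]
  rintro b -
  obtain ⟨m, hm⟩ := hU b
  have hm' := hM m hm
  clear hm
  induction hm' using Submodule.mul_induction_on' with
  | mem_mul_mem a ha u hu =>
    obtain ⟨g, _, rfl⟩ := mem_Ysp_pow ha
    rw [← Algebra.smul_def]
    refine Submodule.smul_mem _ _ ?_
    rw [← ht] at hu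
    exact Submodule.span_le_restrictScalars k _ _ hu
  | add x _ y _ hx hy => exact add_mem hx hy

lemma coord_deg {U : Submodule k B} [FiniteDimensional k U] (h : IsRed U (yv k B l)) {D : ℕ}
    (κ : B →ₗ[MvPolynomial (Fin l) k] (Fin D → MvPolynomial (Fin l) k)) :
    ∃ c, ∀ m, ∀ f ∈ U ^ m, ∀ j, (κ f j).totalDegree ≤ m + c := by
  obtain ⟨M, hM⟩ := h.pow_le
  have hfg : (U ^ M).FG := Submodule.FG.pow ((Submodule.fg_iff_finiteDimensional U).2 inferInstance) M
  obtain ⟨t, ht⟩ := hfg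
  let c := t.sup fun b => Finset.univ.sup fun j => (κ b j).totalDegree
  have key : ∀ u ∈ U ^ M, ∀ j, (κ u j).totalDegree ≤ c := by
    intro u hu j
    rw [← ht] at hu
    induction hu using Submodule.span_induction with
    | mem x hx =>
      exact (Finset.le_sup (f := fun j => (κ x j).totalDegree) (Finset.mem_univ j)).trans
        (Finset.le_sup (f := fun b => Finset.univ.sup fun j => (κ b j).totalDegree) hx)
    | zero => simp
    | add x y _ _ hx hy =>
      rw [map_add, Pi.add_apply]; exact (totalDegree_add _ _).trans (max_le hx hy)
    | smul a x _ hx =>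
      rw [LinearMap.map_smul_of_tower, Pi.smul_apply]; exact (totalDegree_smul_le _ _).trans hx
  refine ⟨c, fun m f hf j => ?_⟩
  have hf' := hM m hf
  clear hf
  induction hf' using Submodule.mul_induction_on' with
  | mem_mul_mem a ha u hu =>
    obtain ⟨g, hg, rfl⟩ := mem_Ysp_pow ha
    rw [← Algebra.smul_def, map_smul, Pi.smul_apply, smul_eq_mul]
    exact (totalDegree_mul _ _).trans (add_le_add hg (key u hu j))
  | add x _ y _ hx hy => 
    rw [map_add, Pi.add_apply]; exact (totalDegree_add _ _).trans (max_le hx hy)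

lemma nzd_pow {A : Type*} [CommRing A] (P : Ideal A) [P.IsMaximal] (h c : A) (hh : h ∉ P) (N : ℕ)
    (hc : h * c ∈ P ^ N) : c ∈ P ^ N := by
  have h1 : IsCoprime (Ideal.span {h}) P := by
    have hm : P.IsMaximal := inferInstance
    obtain ⟨y, i, hi, hy⟩ := hm.exists_inv hh
    rw [Ideal.isCoprime_iff_exists]
    exact ⟨y * h, Ideal.mul_mem_left _ _ (Ideal.mem_span_singleton_self h), i, hi, hy⟩
  have h2 := h1.pow_right (n := N)
  rw [Ideal.isCoprime_iff_exists] at h2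
  obtain ⟨i, hi, j, hj, hij⟩ := h2
  obtain ⟨t, rfl⟩ := Ideal.mem_span_singleton'.1 hi
  have : c = t * (h * c) + c * j := by linear_combination (-c) * hij
  rw [this]
  exact add_mem (Ideal.mul_mem_left _ _ hc) (Ideal.mul_mem_left _ _ hj)

/-- translation -/
def trans (a : Fin l → k) : MvPolynomial (Fin l) k →ₐ[k] MvPolynomial (Fin l) k :=
  aeval fun i => X i + C (a i)

lemma trans_inj (a : Fin l → k) : Function.Injective (trans a) := by
  refine Function.LeftInverse.injective (g := trans (fun i => - a i)) fun f => ?_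
  have : (trans (fun i => - a i)).comp (trans a) = AlgHom.id k _ := by
    refine MvPolynomial.algHom_ext fun i => ?_
    simp [trans]
  exact congrArg (fun g => g f) this

lemma trans_deg (a : Fin l → k) (f : MvPolynomial (Fin l) k) : (trans a f).totalDegree ≤ f.totalDegree := by
  have h1 : Ysp k (fun i => X i + C (a i) : Fin l → MvPolynomial (Fin l) k) ≤ Ysp k (X : Fin l → MvPolynomial (Fin l) k) := by
    rw [Ysp_le]
    refine ⟨one_mem_Ysp _, fun i => add_mem (mem_Ysp _ i) ?_⟩
    have := Submodule.smul_mem _ (a i) (one_mem_Ysp (k := k) (X : Fin l → MvPolynomial (Fin l) k))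
    rwa [smul_eq_C_mul, mul_one] at this
  have h2 := pow_le_pow_left' h1 f.totalDegree (aeval_mem_Ysp _ _ f le_rfl)
  rw [Ysp_pow] at h2
  obtain ⟨g, hg, hg'⟩ := h2
  have : aeval X g = g := by simp
  change aeval X g = trans a f at hg'
  rw [← hg', this]
  simpa [mem_restrictTotalDegree] using hg

lemma trans_pow (a : Fin l → k) (f : MvPolynomial (Fin l) k) (N : ℕ) :
    f ∈ RingHom.ker (eval a) ^ N ↔ trans a f ∈ idealOfVars (Fin l) k ^ N := by
  have key : ∀ a : Fin l → k, ∀ f, eval (fun i => a i) f = 0 → trans a f ∈ idealOfVars (Fin l) k := by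
    intro a f hf
    rw [← pow_one (idealOfVars (Fin l) k), mem_pow_idealOfVars_iff']
    intro x hx
    have : x = 0 := by rw [← Finsupp.degree_eq_zero_iff]; omega
    subst this
    rw [← constantCoeff_eq, ← hf, ← MvPolynomial.eval_zero', trans]
    have : (eval (0 : Fin l → k)).comp (trans a).toRingHom = eval a := by
      refine MvPolynomial.ringHom_ext ?_ ?_ <;> intros <;> simp [trans]
    exact congrArg (fun g => g f) this
  constructor
  · intro h
    have : (RingHom.ker (eval a)).map (trans a) ≤ idealOfVars (Fin l) k := by
      rw [Ideal.map_le_iff_le_comap]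
      exact fun f hf => key a f hf
    have h2 := Ideal.mem_map_of_mem (trans a) h
    rw [Ideal.map_pow] at h2
    exact Ideal.pow_right_mono this N h2
  · intro h
    have : (idealOfVars (Fin l) k).map (trans (fun i => - a i)) ≤ RingHom.ker (eval a) := by
      rw [idealOfVars, Ideal.map_span, Ideal.span_le]
      rintro _ ⟨_, ⟨i, rfl⟩, rfl⟩
      simp [trans, RingHom.mem_ker]
    have h2 := Ideal.mem_map_of_mem (trans (fun i => - a i)) h
    rw [Ideal.map_pow] at h2
    have h3 := Ideal.pow_right_mono this N h2
    have : (trans (fun i => - a i)).comp (trans a) = AlgHom.id k _ := by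
      refine MvPolynomial.algHom_ext fun i => ?_
      simp [trans]
    have h4 : trans (fun i => - a i) (trans a f) = f := congrArg (fun g => g f) this
    rwa [h4] at h3

lemma exists_eval_ne_zero [Infinite k] {l : ℕ} (h : MvPolynomial (Fin l) k) (hh : h ≠ 0) : ∃ a, eval a h ≠ 0 := by
  by_contra! h'
  exact hh (MvPolynomial.funext fun x => by rw [h', map_zero])

theorem upper_bound [Infinite k] [IsDomain B] {U : Submodule k B} [FiniteDimensional k U]
    (h : IsRed U (yv k B l)) [Module.Finite (MvPolynomial (Fin l) k) B] [FaithfulSMul (MvPolynomial (Fin l) k) B]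
    (m : ℕ) : Module.finrank k ↥(U ^ m) ≤ Module.finrank (MvPolynomial (Fin l) k) B * (m + 1) ^ l := by
  classical
  obtain ⟨e, h0, κ, hh0, he, hκ⟩ := coords (MvPolynomial (Fin l) k) B
  obtain ⟨c, hc⟩ := coord_deg h κ
  obtain ⟨a, ha⟩ := exists_eval_ne_zero h0 hh0
  set P := RingHom.ker (eval a) with hP
  have : P.IsMaximal := RingHom.ker_isMaximal_of_surjective _ (fun x => ⟨C x, by simp⟩)
  have hinj : ∀ μ ν : Fin (Module.finrank (MvPolynomial (Fin l) k) B) → MvPolynomial (Fin l) k,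
      ∑ j, μ j • e j = ∑ j, ν j • e j → μ = ν := by
    intro μ ν hμ
    have h1 := Fintype.linearIndependent_iff.1 he (μ - ν) (by simp [sub_smul, hμ])
    exact funext fun j => sub_eq_zero.1 (h1 j)
  have hmul : ∀ N N' f g, (∀ j, κ f j ∈ P ^ N) → (∀ j, κ g j ∈ P ^ N') → ∀ j, κ (f * g) j ∈ P ^ (N + N') := by
    intro N N' f g hf hg j
    have h1 : h0 ^ 2 • κ (f * g) = ∑ i, ∑ i', (κ f i * κ g i') • κ (e i * e i') := by
      apply hinj
      let L := Fintype.linearCombination (MvPolynomial (Fin l) k) e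
      have hL : ∀ f, L (κ f) = h0 • f := fun f => (hκ f).symm
      change L _ = L _
      simp only [map_smul, map_sum, hL]
      have e2 : h0 ^ 2 • (h0 • (f * g)) = h0 • ((h0 • f) * (h0 • g)) := by
        rw [smul_mul_smul_comm, smul_smul, smul_smul]; congr 1; ring
      rw [e2, hκ f, hκ g, Finset.sum_mul_sum, Finset.smul_sum]
      simp only [Finset.smul_sum]
      refine Finset.sum_congr rfl fun i _ => Finset.sum_congr rfl fun i' _ => ?_
      rw [smul_mul_smul_comm, smul_comm]
    have h2 : h0 * (h0 * κ (f * g) j) ∈ P ^ (N + N') := by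
      have := congrFun h1 j
      rw [Pi.smul_apply, smul_eq_mul, sq, mul_assoc] at this
      rw [this]
      simp only [Finset.sum_apply, Pi.smul_apply, smul_eq_mul]
      refine Ideal.sum_mem _ fun i _ => Ideal.sum_mem _ fun i' _ => Ideal.mul_mem_right _ _ ?_
      rw [pow_add]
      exact Ideal.mul_mem_mul (hf i) (hg i')
    exact nzd_pow P h0 _ ha _ (nzd_pow P h0 _ ha _ h2)
  have hpow : ∀ f N q, (∀ j, κ f j ∈ P ^ N) → ∀ j, κ (f ^ (q + 1)) j ∈ P ^ (N * (q + 1)) := by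
    intro f N q hf
    induction q with
    | zero => simpa using hf
    | succ q ih =>
      rw [pow_succ, Nat.mul_succ]
      exact hmul _ _ _ _ ih hf
  have hzero : ∀ f ∈ U ^ m, (∀ j, κ f j ∈ P ^ (m + 1)) → f = 0 := by
    intro f hf hj
    have h1 := hpow f _ c hj
    have h2 : f ^ (c + 1) ∈ U ^ (m * (c+1)) := by
      rw [pow_mul]; exact Submodule.pow_mem_pow _ hf _
    have h3 : κ (f ^ (c + 1)) = 0 := by
      funext j
      have h4 := hc _ _ h2 j
      have h5 := (trans_pow a _ _).1 (h1 j)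
      rw [mem_pow_idealOfVars_iff'] at h5
      apply trans_inj a
      rw [Pi.zero_apply, map_zero]
      ext x
      rw [coeff_zero]
      by_cases hx : x.degree < (m+1) * (c+1)
      · exact h5 x hx
      · apply coeff_eq_zero_of_totalDegree_lt
        refine ((trans_deg a _).trans h4).trans_lt ?_
        change _ < x.degree
        nlinarith
    have h6 := hκ (f ^ (c + 1))
    rw [h3] at h6
    simp only [Pi.zero_apply, zero_smul, Finset.sum_const_zero] at h6
    rw [Algebra.smul_def, mul_eq_zero] at h6
    rcases h6 with h6 | h6
    · exact absurd ((map_eq_zero_iff _ (FaithfulSMul.algebraMap_injective _ B)).1 h6) hh0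
    · exact eq_zero_of_pow_eq_zero h6
  let Φ : ↥(U ^ m) →ₗ[k] (Fin (Module.finrank (MvPolynomial (Fin l) k) B) × (Fin l → Fin (m + 1)) → k) :=
    LinearMap.pi fun p => (lcoeff k (Finsupp.equivFunOnFinite.symm fun i => (p.2 i : ℕ))) ∘ₗ
      (trans a).toLinearMap ∘ₗ (LinearMap.proj p.1) ∘ₗ (κ.restrictScalars k) ∘ₗ (U ^ m).subtype
  have hΦ : Function.Injective Φ := by
    rw [← LinearMap.ker_eq_bot, LinearMap.ker_eq_bot']
    rintro ⟨f, hf⟩ h1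
    have : f = 0 := by
      refine hzero f hf fun j => ?_
      rw [trans_pow, mem_pow_idealOfVars_iff']
      intro x hx
      have hx' : ∀ i, x i < m + 1 := fun i => (Finsupp.le_degree i x).trans_lt hx
      have := congrFun h1 (j, fun i => ⟨x i, hx' i⟩)
      simpa [Φ] using this
    exact Subtype.ext this
  have := LinearMap.finrank_le_finrank_of_injective hΦ
  simpa using this

end

open scoped nonZeroDivisors in
lemma prim (A B : Type*) [CommRing A] [IsDomain A] [IsIntegrallyClosed A] [CharZero A] [CommRing B]
    [IsDomain B] [Algebra A B] [FaithfulSMul A B] [Module.Finite A B] :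
    ∃ (θ : B) (h : A) (u v : Polynomial A), h ≠ 0 ∧
      (minpoly A θ).natDegree = Module.finrank A B ∧
      u * minpoly A θ + v * Polynomial.derivative (minpoly A θ) = Polynomial.C h := by
  let K := FractionRing A
  let E := FractionRing B
  letI : Algebra K E := FractionRing.liftAlgebra A E
  haveI : IsScalarTower A K E := FractionRing.isScalarTower_liftAlgebra A E
  have : CharZero K := charZero_of_injective_algebraMap (IsFractionRing.injective A K)
  have hfr : Module.finrank K E = Module.finrank A B := IsFractionRing.finrank_eq A K B E
  have : FiniteDimensional K E := Module.Finite.of_isLocalization A B A⁰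
  obtain ⟨α, hα⟩ := Field.exists_primitive_element K E
  obtain ⟨⟨θ, s⟩, hs⟩ := IsLocalizedModule.surj A⁰ (IsScalarTower.toAlgHom A B E).toLinearMap α
  simp only at hs
  have hθ : IntermediateField.adjoin K {algebraMap B E θ} = ⊤ := by
    rw [eq_top_iff, ← hα, IntermediateField.adjoin_le_iff, Set.singleton_subset_iff, SetLike.mem_coe]
    have h1 : α = (algebraMap A K s)⁻¹ • algebraMap B E θ := by
      have h2 : algebraMap B E θ = algebraMap A K s • α := by
        rw [algebraMap_smul]; exact hs.symm
      rw [h2, smul_smul, inv_mul_cancel₀, one_smul]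
      exact IsFractionRing.to_map_ne_zero_of_mem_nonZeroDivisors s.2
    rw [h1]
    exact (IntermediateField.adjoin K {algebraMap B E θ}).smul_mem (IntermediateField.mem_adjoin_simple_self K _)
  have hint : IsIntegral A θ := Algebra.IsIntegral.isIntegral θ
  have hmp := minpoly.isIntegrallyClosed_eq_field_fractions K E hint
  have hdeg := (Field.primitive_element_iff_minpoly_natDegree_eq K (algebraMap B E θ)).1 hθ
  rw [hmp, (minpoly.monic hint).natDegree_map, hfr] at hdeg
  have hsep : (minpoly K (algebraMap B E θ)).Separable := Algebra.IsSeparable.isSeparable K _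
  rw [hmp] at hsep
  obtain ⟨u, v, huv⟩ := hsep
  obtain ⟨b, hb, hb'⟩ := IsLocalization.integerNormalization_spec A⁰ u
  obtain ⟨c, hc, hc'⟩ := IsLocalization.integerNormalization_spec A⁰ v
  refine ⟨θ, b * c, Polynomial.C c * IsLocalization.integerNormalization A⁰ u,
    Polynomial.C b * IsLocalization.integerNormalization A⁰ v, ?_, hdeg, ?_⟩
  · exact mul_ne_zero (nonZeroDivisors.ne_zero hb) (nonZeroDivisors.ne_zero hc)
  · apply Polynomial.map_injective _ (IsFractionRing.injective A K)
    simp only [Polynomial.map_add, Polynomial.map_mul, hb', hc', Polynomial.map_C, map_mul]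
    rw [← Polynomial.derivative_map]
    rw [← algebraMap_smul K b u, ← algebraMap_smul K c v, Polynomial.smul_eq_C_mul, Polynomial.smul_eq_C_mul]
    linear_combination (Polynomial.C (algebraMap A K b) * Polynomial.C (algebraMap A K c)) * huv

lemma extend_hom {k S B : Type*} [Field k] [IsAlgClosed k] [CommRing S] [CommRing B] [Algebra k S]
    [Algebra k B] (i : S →ₐ[k] B) (hi : Function.Injective i) (hint : i.toRingHom.IsIntegral)
    (φ : S →ₐ[k] k) : ∃ ψ : B →ₐ[k] k, ψ.comp i = φ := by
  letI := i.toRingHom.toAlgebra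
  haveI : Algebra.IsIntegral S B := ⟨hint⟩
  have hp : (RingHom.ker φ).IsPrime := RingHom.ker_isPrime φ.toRingHom
  obtain ⟨Q, -, hQ, hQ'⟩ := Ideal.exists_ideal_over_prime_of_isIntegral (S := B) (RingHom.ker φ) ⊥ (by
    intro x hx
    rw [Ideal.mem_comap, Ideal.mem_bot] at hx
    have : x = 0 := hi (by rw [map_zero]; exact hx)
    rw [this]; exact zero_mem _)
  have hmem : ∀ s : S, i s - algebraMap k B (φ s) ∈ Q := by
    intro s
    have : s - algebraMap k S (φ s) ∈ RingHom.ker φ := by simp [RingHom.mem_ker]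
    rw [← hQ', Ideal.mem_comap] at this
    have e : algebraMap S B (s - algebraMap k S (φ s)) = i s - algebraMap k B (φ s) := by
      change i _ = _
      rw [map_sub, AlgHom.commutes]
    rwa [e] at this
  have hI : Algebra.IsIntegral k (B ⧸ Q) := by
    constructor
    intro x
    obtain ⟨b, rfl⟩ := Ideal.Quotient.mk_surjective x
    obtain ⟨P, hP, hP'⟩ := hint b
    refine ⟨P.map φ.toRingHom, hP.map _, ?_⟩
    rw [Polynomial.eval₂_map]
    have h1 := congrArg (Ideal.Quotient.mk Q) hP'
    rw [Polynomial.hom_eval₂, map_zero] at h1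
    rw [← h1]
    congr 1
    ext s
    have := hmem s
    rw [← Ideal.Quotient.eq_zero_iff_mem, map_sub, sub_eq_zero] at this
    exact this.symm
  have hbij := IsAlgClosed.algebraMap_bijective_of_isIntegral (k := k) (K := B ⧸ Q)
  let e : k ≃ₐ[k] (B ⧸ Q) := AlgEquiv.ofBijective (Algebra.ofId k _) hbij
  refine ⟨(e.symm : (B ⧸ Q) →ₐ[k] k).comp (Ideal.Quotient.mkₐ k Q), ?_⟩
  ext s
  change e.symm (Ideal.Quotient.mk Q (i s)) = φ s
  rw [AlgEquiv.symm_apply_eq]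
  have := hmem s
  rw [← Ideal.Quotient.eq_zero_iff_mem, map_sub, sub_eq_zero] at this
  exact this

lemma lift_root {k A B : Type*} [Field k] [IsAlgClosed k] [CommRing A] [IsDomain A] [IsIntegrallyClosed A]
    [CommRing B] [IsDomain B] [Algebra k A] [Algebra k B] [Algebra A B] [IsScalarTower k A B]
    [FaithfulSMul A B] [Algebra.IsIntegral A B] (θ : B) (ε : A →ₐ[k] k) (r : k)
    (hr : (minpoly A θ).eval₂ (ε : A →+* k) r = 0) :
    ∃ ψ : B →ₐ[k] k, ψ θ = r ∧ ∀ x : A, ψ (algebraMap A B x) = ε x := by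
  have hint : IsIntegral A θ := Algebra.IsIntegral.isIntegral θ
  let μ := minpoly A θ
  let φ : AdjoinRoot μ →ₐ[k] k := AdjoinRoot.liftAlgHom μ ε r hr
  let i : AdjoinRoot μ →ₐ[k] B := AdjoinRoot.liftAlgHom μ (IsScalarTower.toAlgHom k A B) θ
      (by exact minpoly.aeval _ θ)
  have hmk : ∀ p, i (AdjoinRoot.mk μ p) = Polynomial.aeval θ p := by
    intro p; exact AdjoinRoot.lift_mk (minpoly.aeval A θ) p
  have hiof : ∀ x, i (AdjoinRoot.of μ x) = algebraMap A B x := by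
    intro x; exact AdjoinRoot.lift_of (minpoly.aeval A θ)
  have hi : Function.Injective i := by
    rw [injective_iff_map_eq_zero]
    intro x hx
    obtain ⟨p, rfl⟩ := AdjoinRoot.mk_surjective x
    rw [AdjoinRoot.mk_eq_zero]
    apply minpoly.isIntegrallyClosed_dvd hint
    rw [← hmk]; exact hx
  have hi2 : i.toRingHom.IsIntegral := by
    intro b
    obtain ⟨P, hP, hP'⟩ := (Algebra.IsIntegral.isIntegral b : IsIntegral A b)
    refine ⟨P.map (AdjoinRoot.of μ), hP.map _, ?_⟩
    rw [Polynomial.eval₂_map, ← hP']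
    congr 1
    ext x
    exact hiof x
  obtain ⟨ψ, hψ⟩ := extend_hom i hi hi2 φ
  refine ⟨ψ, ?_, fun j => ?_⟩
  · have h1 := congrArg (fun g => g (AdjoinRoot.root μ)) hψ
    have h2 : i (AdjoinRoot.root μ) = θ := AdjoinRoot.lift_root (minpoly.aeval A θ)
    have h3 : φ (AdjoinRoot.root μ) = r := AdjoinRoot.lift_root hr
    simp only [AlgHom.comp_apply] at h1
    rw [h2, h3] at h1; exact h1
  · have h1 := congrArg (fun g => g (AdjoinRoot.of μ j)) hψ
    have h3 : φ (AdjoinRoot.of μ j) = ε j := AdjoinRoot.lift_of hr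
    simp only [AlgHom.comp_apply] at h1
    rw [hiof, h3] at h1; exact h1

section
variable {k B : Type*} [Field k] [CommRing B] [Algebra k B] {l : ℕ}
  [Algebra (MvPolynomial (Fin l) k) B] [IsScalarTower k (MvPolynomial (Fin l) k) B]

theorem fiber_points [IsAlgClosed k] [CharZero k] [IsDomain B]
    [Module.Finite (MvPolynomial (Fin l) k) B] [FaithfulSMul (MvPolynomial (Fin l) k) B] :
    ∃ (a : Fin l → k) (S : Finset (B →ₐ[k] k)), S.card = Module.finrank (MvPolynomial (Fin l) k) B ∧
      ∀ ψ ∈ S, ∀ i, ψ (yv k B l i) = a i := by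
  classical
  have : CharZero (MvPolynomial (Fin l) k) := charZero_of_injective_algebraMap (MvPolynomial.C_injective (Fin l) k)
  obtain ⟨θ, h, u, v, hh, hdeg, huv⟩ := prim (MvPolynomial (Fin l) k) B
  have : Infinite k := inferInstance
  obtain ⟨a, ha⟩ := exists_eval_ne_zero h hh
  have hint : IsIntegral (MvPolynomial (Fin l) k) θ := Algebra.IsIntegral.isIntegral θ
  set μ := minpoly (MvPolynomial (Fin l) k) θ with hμ
  let μa := μ.map (eval a)
  have hmon : μ.Monic := minpoly.monic hint
  have hsep : μa.Separable := by
    have h1 := congrArg (Polynomial.map (eval a)) huv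
    simp only [Polynomial.map_add, Polynomial.map_mul, Polynomial.map_C, ← Polynomial.derivative_map] at h1
    refine ⟨Polynomial.C (eval a h)⁻¹ * u.map (eval a), Polynomial.C (eval a h)⁻¹ * v.map (eval a), ?_⟩
    have h2 : (Polynomial.C (eval a h)⁻¹ * Polynomial.C (eval a h) : Polynomial k) = 1 := by
      rw [← Polynomial.C_mul, inv_mul_cancel₀ ha, Polynomial.C_1]
    linear_combination Polynomial.C (eval a h)⁻¹ * h1 + h2
  have hcard : μa.roots.toFinset.card = Module.finrank (MvPolynomial (Fin l) k) B := by
    rw [Multiset.toFinset_card_of_nodup (Polynomial.nodup_roots hsep),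
      ← (IsAlgClosed.splits μa).natDegree_eq_card_roots, hmon.natDegree_map, hdeg]
  have key : ∀ r ∈ μa.roots.toFinset, ∃ ψ : B →ₐ[k] k, ψ θ = r ∧ ∀ i, ψ (yv k B l i) = a i := by
    intro r hr
    rw [Multiset.mem_toFinset, Polynomial.mem_roots', Polynomial.IsRoot.def] at hr
    have hr2 := hr.2
    rw [Polynomial.eval_map] at hr2
    have e : ((aeval a : MvPolynomial (Fin l) k →ₐ[k] k) : MvPolynomial (Fin l) k →+* k) = eval a := by
      ext <;> simp
    obtain ⟨ψ, h1, h2⟩ := lift_root θ (aeval a : MvPolynomial (Fin l) k →ₐ[k] k) r (by rw [e]; exact hr2)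
    exact ⟨ψ, h1, fun i => by rw [yv, h2]; simp⟩
  choose ψ hψ1 hψ2 using key
  refine ⟨a, μa.roots.toFinset.attach.image (fun r => ψ r.1 r.2), ?_, ?_⟩
  · rw [Finset.card_image_of_injective, Finset.card_attach, hcard]
    intro r r' h
    apply Subtype.ext
    rw [← hψ1 r.1 r.2, ← hψ1 r'.1 r'.2]
    exact congrArg (fun g => g θ) h
  · intro f hf i
    obtain ⟨r, hr, rfl⟩ := Finset.mem_image.1 hf
    exact hψ2 r.1 r.2 i

open scoped nonZeroDivisors in
theorem embeddings (A B Ω : Type*) [CommRing A] [IsDomain A] [CharZero A] [CommRing B]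
    [IsDomain B] [Algebra A B] [FaithfulSMul A B] [Module.Finite A B] [Field Ω] [IsAlgClosed Ω]
    [Algebra A Ω] [FaithfulSMul A Ω] :
    ∃ S : Finset (B →ₐ[A] Ω), S.card = Module.finrank A B ∧ ∀ σ ∈ S, Function.Injective σ := by
  classical
  let K := FractionRing A
  let E := FractionRing B
  letI : Algebra K E := FractionRing.liftAlgebra A E
  haveI : IsScalarTower A K E := FractionRing.isScalarTower_liftAlgebra A E
  letI : Algebra K Ω := FractionRing.liftAlgebra A Ω
  haveI : IsScalarTower A K Ω := FractionRing.isScalarTower_liftAlgebra A Ω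
  have : CharZero K := charZero_of_injective_algebraMap (IsFractionRing.injective A K)
  have hfr : Module.finrank K E = Module.finrank A B := IsFractionRing.finrank_eq A K B E
  have : FiniteDimensional K E := Module.Finite.of_isLocalization A B A⁰
  have hc := AlgHom.card K E Ω
  let f : (E →ₐ[K] Ω) → (B →ₐ[A] Ω) := fun s => (s.restrictScalars A).comp (IsScalarTower.toAlgHom A B E)
  have hf : Function.Injective f := by
    intro s t h
    have : s.toRingHom = t.toRingHom := by
      apply IsLocalization.ringHom_ext B⁰
      ext b
      exact congrArg (fun g => g b) h
    exact AlgHom.ext fun x => congrArg (fun g => g x) this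
  refine ⟨Finset.univ.image f, ?_, ?_⟩
  · rw [Finset.card_image_of_injective _ hf, Finset.card_univ, hc, hfr]
  · intro σ hσ
    obtain ⟨s, -, rfl⟩ := Finset.mem_image.1 hσ
    exact s.toRingHom.injective.comp (IsFractionRing.injective B E)

end

section
variable {k B : Type*} [Field k] [CommRing B] [Algebra k B] {d : ℕ}

lemma count {ι : Type*} [Fintype ι] (U : Submodule k B) [FiniteDimensional k U] (h1 : 1 ∈ U)
    (z : Fin d → B) (hz : ∀ j, z j ∈ U) (M : ℕ) (f : ι → B) (hf : ∀ i, f i ∈ U ^ M)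
    (H : ∀ q : ι → MvPolynomial (Fin d) k, ∑ i, f i * aeval z (q i) = 0 → ∀ i, q i = 0) (q : ℕ) :
    Fintype.card ι * (q + 1) ^ d ≤ Module.finrank k ↥(U ^ (M + d * q)) := by
  classical
  have hU1 : (1 : Submodule k B) ≤ U := by
    rw [Submodule.one_le]; exact h1
  let F : ι × (Fin d → Fin (q + 1)) → B := fun p => f p.1 * ∏ j, z j ^ (p.2 j : ℕ)
  have hF : ∀ p, F p ∈ U ^ (M + d * q) := by
    intro p
    rw [pow_add]
    apply Submodule.mul_mem_mul (hf _)
    have hzq : ∀ j, z j ^ (p.2 j : ℕ) ∈ U ^ q := by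
      intro j
      have h2 : z j ^ (p.2 j : ℕ) ∈ U ^ (p.2 j : ℕ) := Submodule.pow_mem_pow _ (hz j) _
      exact pow_le_pow_right' hU1 (Nat.lt_succ_iff.1 (p.2 j).2) h2
    have : ∏ j : Fin d, z j ^ (p.2 j : ℕ) ∈ ∏ j : Fin d, U ^ q := by
      have key : ∀ T : Finset (Fin d), ∏ j ∈ T, z j ^ (p.2 j : ℕ) ∈ ∏ j ∈ T, U ^ q := by
        intro T
        induction T using Finset.induction_on with
        | empty => simpa using ⟨1, map_one _⟩
        | insert j T hj ih =>
          rw [Finset.prod_insert hj, Finset.prod_insert hj]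
          exact Submodule.mul_mem_mul (hzq j) ih
      exact key _
    rw [Finset.prod_const, Finset.card_univ, Fintype.card_fin, ← pow_mul, mul_comm] at this
    exact this
  have hli : LinearIndependent k F := by
    rw [Fintype.linearIndependent_iff]
    intro g hg
    let e : (Fin d → Fin (q + 1)) → (Fin d →₀ ℕ) := fun β => Finsupp.equivFunOnFinite.symm fun j => (β j : ℕ)
    have he : Function.Injective e := by
      intro a b hab
      ext j
      have := congrArg (fun t => t j) hab
      simpa [e] using this
    let Q : ι → MvPolynomial (Fin d) k := fun i => ∑ β, monomial (e β) (g (i, β))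
    have hQ := H Q (by
      rw [← hg, Fintype.sum_prod_type]
      refine Finset.sum_congr rfl fun i _ => ?_
      simp only [Q, map_sum, Finset.mul_sum]
      refine Finset.sum_congr rfl fun β _ => ?_
      rw [aeval_monomial, Finsupp.prod_fintype _ _ (by simp)]
      simp only [F, e, Finsupp.equivFunOnFinite_symm_apply_apply, Algebra.smul_def]
      ring)
    rintro ⟨i, β⟩
    have h3 := congrArg (coeff (e β)) (hQ i)
    simpa [Q, coeff_sum, coeff_monomial, he.eq_iff] using h3
  have hfin : FiniteDimensional k ↥(U ^ (M + d * q)) := by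
    exact Module.Finite.iff_fg.2 ((Module.Finite.iff_fg.1 inferInstance : U.FG).pow _)
  let F' : ι × (Fin d → Fin (q + 1)) → ↥(U ^ (M + d * q)) := fun p => ⟨F p, hF p⟩
  have hli' : LinearIndependent k F' := by
    apply LinearIndependent.of_comp (U ^ (M + d * q)).subtype
    exact hli
  have := hli'.fintype_card_le_finrank
  simpa using this

lemma pts_indep [Infinite k] [IsNoetherianRing B] {ι : Type*} [Fintype ι]
    (ψ : ι → (B →ₐ[k] k)) (z : Fin d → B)
    (hmin : ∀ i, RingHom.ker (ψ i) ∈ (Ideal.span (range z)).minimalPrimes)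
    (hht : ∀ i, (d : ℕ∞) ≤ (RingHom.ker (ψ i)).height)
    (f : ι → B) (hf1 : ∀ i, ψ i (f i) = 1) (hf0 : ∀ i j, i ≠ j → ψ j (f i) = 0)
    (q : ι → MvPolynomial (Fin d) k) (hq : ∑ i, f i * aeval z (q i) = 0) : ∀ i, q i = 0 := by
  classical
  have hz : ∀ i j, ψ i (z j) = 0 := fun i j => (hmin i).1.2 (Ideal.subset_span ⟨j, rfl⟩)
  by_contra! hne
  obtain ⟨i0, hi0⟩ := hne
  rcases Nat.eq_zero_or_pos d with rfl | hd
  · have h1 := congrArg (ψ i0) hq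
    simp only [map_sum, map_mul, map_zero] at h1
    rw [Finset.sum_eq_single i0 (fun j _ hj => by rw [hf0 j i0 hj, zero_mul]) (by simp), hf1, one_mul] at h1
    apply hi0
    obtain ⟨a, ha⟩ := C_surjective (Fin 0) (q i0)
    rw [← ha] at h1 ⊢
    simpa using h1
  let j : Fin d := ⟨0, hd⟩
  obtain ⟨c, hc⟩ := exists_eval_ne_zero (q i0 * X j) (mul_ne_zero hi0 (X_ne_zero j))
  rw [map_mul, eval_X] at hc
  have hcj : c j ≠ 0 := right_ne_zero_of_mul hc
  have hqc : eval c (q i0) ≠ 0 := left_ne_zero_of_mul hc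
  let P : ι → Polynomial k := fun i => aeval (fun t => Polynomial.C (c t) * Polynomial.X) (q i)
  have hP0 : P i0 ≠ 0 := by
    intro h0
    apply hqc
    have h1 := congrArg (Polynomial.aeval (1:k)) h0
    simp only [P, map_zero] at h1
    rw [← AlgHom.comp_apply, comp_aeval] at h1
    rw [← h1, ← aeval_eq_eval]
    congr 2
    funext t
    simp
  let S : Finset ι := Finset.univ.filter fun i => P i ≠ 0
  obtain ⟨i1, hi1, hmin1⟩ := S.exists_min_image (fun i => (P i).natTrailingDegree) ⟨i0, by simp [S, hP0]⟩
  have hP1 : P i1 ≠ 0 := by simpa [S] using hi1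
  set e := (P i1).natTrailingDegree with he
  have hdvd : ∀ i, Polynomial.X ^ e ∣ P i := by
    intro i
    by_cases hi : P i = 0
    · simp [hi]
    · rw [Polynomial.X_pow_dvd_iff]
      intro t ht
      apply Polynomial.coeff_eq_zero_of_lt_natTrailingDegree
      exact lt_of_lt_of_le ht (hmin1 i (by simp [S, hi]))
  choose R hR using hdvd
  have hR1 : (R i1).eval 0 ≠ 0 := by
    rw [← Polynomial.coeff_zero_eq_eval_zero]
    have h1 : (P i1).coeff e ≠ 0 := by
      have := Polynomial.trailingCoeff_nonzero_iff_nonzero.2 hP1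
      exact this
    have h2 : (P i1).coeff e = (R i1).coeff 0 := by
      rw [hR i1]
      have := Polynomial.coeff_X_pow_mul (R i1) e 0
      simpa using this
    rwa [h2] at h1
  let Y : B := algebraMap k B (c j)⁻¹ * z j
  let G : Finset B := (Finset.univ.erase j).image fun t => z t - algebraMap k B (c t) * Y
  have hYz : z j = algebraMap k B (c j) * Y := by
    simp only [Y]
    rw [← mul_assoc, ← map_mul, mul_inv_cancel₀ hcj, map_one, one_mul]
  have hY0 : ∀ i, ψ i Y = 0 := by intro i; simp [Y, hz]
  have hG : Ideal.span (G : Set B) ≤ RingHom.ker (ψ i1) := by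
    rw [Ideal.span_le]
    intro x hx
    obtain ⟨t, -, rfl⟩ := Finset.mem_image.1 hx
    simp [RingHom.mem_ker, hz, hY0]
  have hpr : (RingHom.ker (ψ i1)).IsPrime := RingHom.ker_isPrime (ψ i1).toRingHom
  obtain ⟨Q, hQ, hQle⟩ := Ideal.exists_minimalPrimes_le hG
  have hQp : Q.IsPrime := hQ.1.1
  have hzQ : ∀ t, z t - algebraMap k B (c t) * Y ∈ Q := by
    intro t
    by_cases ht : t = j
    · rw [ht, ← hYz, sub_self]; exact zero_mem _
    · exact hQ.1.2 (Ideal.subset_span (Finset.mem_image.2 ⟨t, by simp [ht], rfl⟩))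
  have hqQ : ∀ i, aeval z (q i) - Polynomial.aeval Y (P i) ∈ Q := by
    intro i
    rw [← Ideal.Quotient.eq_zero_iff_mem]
    rw [map_sub, sub_eq_zero]
    change Ideal.Quotient.mkₐ k Q _ = Ideal.Quotient.mkₐ k Q _
    simp only [P]
    rw [← AlgHom.comp_apply (Polynomial.aeval Y), comp_aeval, ← AlgHom.comp_apply, ← AlgHom.comp_apply, comp_aeval, comp_aeval]
    congr 2
    funext t
    have := hzQ t
    rw [← Ideal.Quotient.eq_zero_iff_mem, map_sub, sub_eq_zero] at this
    change Ideal.Quotient.mk Q _ = _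
    rw [this]
    simp
  have hsum : Y ^ e * ∑ i, f i * Polynomial.aeval Y (R i) ∈ Q := by
    have h1 : ∑ i, f i * (aeval z (q i) - Polynomial.aeval Y (P i)) ∈ Q :=
      Ideal.sum_mem _ fun i _ => Ideal.mul_mem_left _ _ (hqQ i)
    have h2 : Y ^ e * ∑ i, f i * Polynomial.aeval Y (R i) = - ∑ i, f i * (aeval z (q i) - Polynomial.aeval Y (P i)) := by
      simp only [mul_sub, Finset.sum_sub_distrib]
      rw [hq, zero_sub, neg_neg, Finset.mul_sum]
      refine Finset.sum_congr rfl fun i _ => ?_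
      conv_rhs => rw [hR i]
      simp only [map_mul, map_pow, Polynomial.aeval_X]
      ring
    rw [h2]; exact neg_mem h1
  have hYQ : Y ∈ Q := by
    rcases hQp.mem_or_mem hsum with h | h
    · exact hQp.mem_of_pow_mem _ h
    · exfalso
      have h1 := hQle h
      rw [RingHom.mem_ker, map_sum, Finset.sum_eq_single i1 (fun j _ hj => by rw [map_mul, hf0 j i1 hj, zero_mul]) (by simp), map_mul, hf1, one_mul, ← Polynomial.aeval_algHom_apply, hY0] at h1
      apply hR1
      simpa [Polynomial.aeval_def, Polynomial.eval₂_eq_eval_map] using h1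
  have hQeq : RingHom.ker (ψ i1) ≤ Q := by
    apply (hmin i1).2 ⟨hQp, ?_⟩ hQle
    rw [Ideal.span_le]
    rintro _ ⟨t, rfl⟩
    have h1 := hzQ t
    have h2 : algebraMap k B (c t) * Y ∈ Q := Ideal.mul_mem_left _ _ hYQ
    have := Ideal.add_mem _ h1 h2
    simpa using this
  have hQk : Q = RingHom.ker (ψ i1) := le_antisymm hQle hQeq
  have h3 := Ideal.height_le_card_of_mem_minimalPrimes_span_finset hQ
  rw [hQk] at h3
  have h4 : G.card ≤ d - 1 := by
    refine Finset.card_image_le.trans ?_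
    rw [Finset.card_erase_of_mem (Finset.mem_univ j)]; simp
  have h5 := (hht i1).trans h3
  have h6 : d ≤ G.card := by exact_mod_cast h5
  omega
end

section
variable {k : Type*} [Field k]

lemma krullDim_mv (l : ℕ) : ringKrullDim (MvPolynomial (Fin l) k) = l := by
  rw [MvPolynomial.ringKrullDim_of_isNoetherianRing, ringKrullDim_eq_zero_of_field]; simp

/-- translation -/
def tr {l : ℕ} (c : Fin l → k) : MvPolynomial (Fin l) k ≃ₐ[k] MvPolynomial (Fin l) k :=
  AlgEquiv.ofAlgHom (aeval fun i => X i + C (c i)) (aeval fun i => X i - C (c i))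
    (by ext i; simp [algebraMap_eq]) (by ext i; simp [algebraMap_eq])

lemma eval_tr {l : ℕ} (c a : Fin l → k) (f : MvPolynomial (Fin l) k) :
    eval a (tr c f) = eval (fun i => a i + c i) f := by
  have h : tr c f = aeval (fun i => X i + C (c i)) f := rfl
  rw [h, ← aeval_eq_eval, ← AlgHom.comp_apply, comp_aeval, ← aeval_eq_eval]
  congr 2
  funext i
  simp

lemma height_point [IsAlgClosed k] {l : ℕ} (a : Fin l → k) :
    (RingHom.ker (eval a : MvPolynomial (Fin l) k →+* k)).height = l := by
  haveI : FiniteRingKrullDim (MvPolynomial (Fin l) k) := by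
    rw [finiteRingKrullDim_iff_ne_bot_and_top, krullDim_mv]
    constructor
    · exact WithBot.natCast_ne_bot l
    · intro h
      have : ((l : ℕ∞) : WithBot ℕ∞) = ((⊤ : ℕ∞) : WithBot ℕ∞) := h
      rw [WithBot.coe_inj] at this
      exact ENat.coe_ne_top l this
  obtain ⟨p, hp, hh⟩ := Ideal.exists_isMaximal_height (R := MvPolynomial (Fin l) k)
  rw [krullDim_mv] at hh
  have hh' : p.height = l := by
    have : ((p.height : ℕ∞) : WithBot ℕ∞) = ((l : ℕ∞) : WithBot ℕ∞) := hh
    rwa [WithBot.coe_inj] at this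
  obtain ⟨b, rfl⟩ := (isMaximal_iff_eq_vanishingIdeal_singleton (K := k)).1 hp
  rw [← hh', ← RingEquiv.height_comap (tr (fun i => b i - a i)).toRingEquiv (RingHom.ker _)]
  congr 1
  ext f
  rw [Ideal.mem_comap, mem_vanishingIdeal_singleton_iff, RingHom.mem_ker]
  change eval a (tr (fun i => b i - a i) f) = 0 ↔ _
  rw [eval_tr]
  simp [aeval_eq_eval]

variable {B : Type*} [CommRing B] [Algebra k B] {l : ℕ}
  [Algebra (MvPolynomial (Fin l) k) B] [IsScalarTower k (MvPolynomial (Fin l) k) B]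

lemma height_ker [IsAlgClosed k] [IsDomain B] [Module.Finite (MvPolynomial (Fin l) k) B]
    [FaithfulSMul (MvPolynomial (Fin l) k) B] (ψ : B →ₐ[k] k) :
    (l : ℕ∞) ≤ (RingHom.ker ψ).height := by
  haveI : IsNoetherianRing B := IsNoetherianRing.of_finite (MvPolynomial (Fin l) k) B
  let p : Ideal (MvPolynomial (Fin l) k) := RingHom.ker (eval (fun i => ψ (yv k B l i)) : MvPolynomial (Fin l) k →+* k)
  haveI : p.IsPrime := RingHom.ker_isPrime _
  haveI : (RingHom.ker ψ).IsPrime := RingHom.ker_isPrime ψ.toRingHom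
  haveI : (RingHom.ker ψ).LiesOver p := ⟨by
    ext f
    rw [Ideal.under_def, Ideal.mem_comap, RingHom.mem_ker, RingHom.mem_ker, ← aeval_yv, ← aeval_eq_eval, ← AlgHom.comp_apply, comp_aeval]⟩
  rw [Ideal.height_eq_height_add_of_liesOver_of_hasGoingDown p, height_point]
  exact le_self_add

lemma exists_hom [IsAlgClosed k] [IsDomain B] [Module.Finite (MvPolynomial (Fin l) k) B]
    [FaithfulSMul (MvPolynomial (Fin l) k) B] (a : Fin l → k) :
    ∃ ψ : B →ₐ[k] k, ∀ i, ψ (yv k B l i) = a i := by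
  obtain ⟨ψ, hψ⟩ := extend_hom (IsScalarTower.toAlgHom k (MvPolynomial (Fin l) k) B)
    (FaithfulSMul.algebraMap_injective _ _)
    (fun b => Algebra.IsIntegral.isIntegral (R := MvPolynomial (Fin l) k) b) (aeval a)
  refine ⟨ψ, fun i => ?_⟩
  have := congrArg (fun g => g (X i)) hψ
  simpa [yv] using this

lemma krullDim_eq [IsAlgClosed k] [IsDomain B] [Module.Finite (MvPolynomial (Fin l) k) B]
    [FaithfulSMul (MvPolynomial (Fin l) k) B] : ringKrullDim B = l := by
  apply le_antisymm
  · rw [← krullDim_mv (k := k) l]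
    apply Order.krullDim_le_of_strictMono (PrimeSpectrum.comap (algebraMap (MvPolynomial (Fin l) k) B))
    intro p q hpq
    exact Ideal.IsIntegral.comap_lt_comap (I := p.asIdeal) (J := q.asIdeal) hpq
  · obtain ⟨ψ, -⟩ := exists_hom (k := k) (B := B) (l := l) 0
    haveI : (RingHom.ker ψ).IsPrime := RingHom.ker_isPrime ψ.toRingHom
    refine le_trans ?_ (Ideal.height_le_ringKrullDim_of_isPrime (I := RingHom.ker ψ))
    exact WithBot.coe_le_coe.2 (height_ker ψ)

end

section
variable {k B : Type*} [Field k] [CommRing B] [Algebra k B] {l : ℕ}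

lemma max_ker [IsAlgClosed k] [Algebra.FiniteType k B] (m : Ideal B) [hm : m.IsMaximal] :
    ∃ ψ : B →ₐ[k] k, RingHom.ker ψ = m := by
  letI : Field (B ⧸ m) := Ideal.Quotient.field m
  haveI : Algebra.FiniteType k (B ⧸ m) := inferInstance
  haveI : Module.Finite k (B ⧸ m) := finite_of_finite_type_of_isJacobsonRing k (B ⧸ m)
  have hbij := IsAlgClosed.algebraMap_bijective_of_isIntegral (k := k) (K := B ⧸ m)
  let e : k ≃ₐ[k] (B ⧸ m) := AlgEquiv.ofBijective (Algebra.ofId k _) hbij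
  refine ⟨(e.symm : (B ⧸ m) →ₐ[k] k).comp (Ideal.Quotient.mkₐ k m), ?_⟩
  ext b
  rw [RingHom.mem_ker]
  change e.symm (Ideal.Quotient.mk m b) = 0 ↔ _
  rw [map_eq_zero_iff _ e.symm.injective, Ideal.Quotient.eq_zero_iff_mem]

lemma ker_minimal [IsAlgClosed k] [Algebra.FiniteType k B] {ι : Type*} (z : ι → B)
    (hfin : {ψ : B →ₐ[k] k | ∀ j, ψ (z j) = 0}.Finite) (ψ : B →ₐ[k] k) (hψ : ∀ j, ψ (z j) = 0) :
    RingHom.ker ψ ∈ (Ideal.span (range z)).minimalPrimes := by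
  classical
  haveI : IsJacobsonRing B := isJacobsonRing_of_finiteType (A := k)
  refine ⟨⟨RingHom.ker_isPrime ψ.toRingHom, ?_⟩, ?_⟩
  · rw [Ideal.span_le]; rintro _ ⟨j, rfl⟩; exact hψ j
  rintro Q ⟨hQ, hzQ⟩ hle
  have hinf : hfin.toFinset.inf (fun φ => if Q ≤ RingHom.ker φ then RingHom.ker φ else ⊤) ≤ Q := by
    conv_rhs => rw [← IsJacobsonRing.out ‹_› hQ.isRadical]
    rw [Ideal.jacobson]
    apply le_sInf
    rintro J ⟨hJ, hJm⟩
    obtain ⟨φ, rfl⟩ := max_ker (k := k) J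
    have hφ : φ ∈ hfin.toFinset := by
      rw [Set.Finite.mem_toFinset]
      intro j
      exact hJ (hzQ (Ideal.subset_span ⟨j, rfl⟩))
    refine (Finset.inf_le hφ).trans ?_
    rw [if_pos hJ]
  obtain ⟨φ, hφ, hφQ⟩ := (hQ.inf_le').1 hinf
  split_ifs at hφQ with hc
  · have hQe : Q = RingHom.ker φ := le_antisymm hc hφQ
    have hm : (RingHom.ker φ).IsMaximal := RingHom.ker_isMaximal_of_surjective φ.toRingHom
      (fun c => ⟨algebraMap k B c, by simp⟩)
    rw [hQe] at hle ⊢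
    exact (hm.eq_of_le (RingHom.ker_ne_top ψ.toRingHom) hle).ge
  · exact absurd (top_le_iff.1 hφQ) hQ.ne_top

lemma sep_homs (ι : Type*) [Fintype ι] [DecidableEq ι] (ψ : ι → (B →ₐ[k] k)) (hψ : Function.Injective ψ) :
    ∃ f : ι → B, (∀ i, ψ i (f i) = 1) ∧ ∀ i j, i ≠ j → ψ j (f i) = 0 := by
  have h1 : ∀ i j, ∃ b : B, i ≠ j → ψ i b = 1 ∧ ψ j b = 0 := by
    intro i j
    by_cases hij : i = j
    · exact ⟨0, fun h => absurd hij h⟩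
    · have : ∃ b, ψ i b ≠ ψ j b := by
        by_contra! hc
        exact hij (hψ (AlgHom.ext hc))
      obtain ⟨b, hb⟩ := this
      refine ⟨algebraMap k B (ψ i b - ψ j b)⁻¹ * (b - algebraMap k B (ψ j b)), fun _ => ⟨?_, ?_⟩⟩
      · simp only [map_mul, map_sub, AlgHom.commutes, Algebra.algebraMap_self, RingHom.id_apply]
        exact inv_mul_cancel₀ (sub_ne_zero.2 hb)
      · simp
  choose g hg using h1
  refine ⟨fun i => ∏ j ∈ Finset.univ.erase i, g i j, fun i => ?_, fun i j hij => ?_⟩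
  · rw [map_prod]
    apply Finset.prod_eq_one
    intro j hj
    exact (hg i j (Finset.ne_of_mem_erase hj).symm).1
  · rw [map_prod]
    apply Finset.prod_eq_zero (i := j)
    · simp [hij.symm]
    · exact (hg i j hij).2

variable [Algebra (MvPolynomial (Fin l) k) B] [IsScalarTower k (MvPolynomial (Fin l) k) B]

theorem fiber_bound [IsAlgClosed k] [IsDomain B] {U : Submodule k B} [FiniteDimensional k U]
    (h : IsRed U (yv k B l)) (hU : ∀ b, ∃ m, b ∈ U ^ m)
    [Module.Finite (MvPolynomial (Fin l) k) B] [FaithfulSMul (MvPolynomial (Fin l) k) B]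
    (z : Fin l → B) (hz : ∀ j, z j ∈ U) (hfin : {ψ : B →ₐ[k] k | ∀ j, ψ (z j) = 0}.Finite) :
    {ψ : B →ₐ[k] k | ∀ j, ψ (z j) = 0}.ncard ≤
      (l + 1) ^ l * Module.finrank (MvPolynomial (Fin l) k) B := by
  classical
  haveI : IsNoetherianRing B := IsNoetherianRing.of_finite (MvPolynomial (Fin l) k) B
  haveI : Algebra.FiniteType k B := Algebra.FiniteType.trans (S := MvPolynomial (Fin l) k) inferInstance inferInstance
  have : Infinite k := IsAlgClosed.instInfinite
  let ι := hfin.toFinset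
  let ψ : ι → (B →ₐ[k] k) := fun i => i.1
  have hψz : ∀ i j, ψ i (z j) = 0 := fun i => by
    have := i.2
    rw [Set.Finite.mem_toFinset] at this
    exact this
  obtain ⟨f, hf1, hf0⟩ := sep_homs ι ψ Subtype.val_injective
  choose m hm using fun i => hU (f i)
  have h1 : (1 : B) ∈ U := h.1 (one_mem_Ysp _)
  have hU1 : (1 : Submodule k B) ≤ U := by rw [Submodule.one_le]; exact h1
  let M := Finset.univ.sup m
  have hM : ∀ i, f i ∈ U ^ M := fun i => pow_le_pow_right' hU1 (Finset.le_sup (Finset.mem_univ i)) (hm i)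
  have hc := count U h1 z hz M f hM
    (pts_indep ψ z (fun i => ker_minimal z hfin _ (hψz i)) (fun i => height_ker (ψ i)) f hf1 hf0) M
  have hu := upper_bound h (M + l * M)
  have hcard : Fintype.card ι = {ψ : B →ₐ[k] k | ∀ j, ψ (z j) = 0}.ncard := by
    rw [Set.ncard_eq_toFinset_card _ hfin, Fintype.card_coe]
  rw [← hcard]
  have h2 : (M + l * M + 1) ^ l ≤ ((l + 1) * (M + 1)) ^ l := Nat.pow_le_pow_left (by nlinarith) _
  rw [mul_pow] at h2
  have h3 : Fintype.card ι * (M + 1) ^ l ≤ ((l + 1) ^ l * Module.finrank (MvPolynomial (Fin l) k) B) * (M + 1) ^ l := by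
    calc _ ≤ _ := hc
      _ ≤ _ := hu
      _ ≤ _ := Nat.mul_le_mul_left _ h2
      _ = _ := by ring
  exact Nat.le_of_mul_le_mul_right h3 (by positivity)

lemma fiber_finite [Module.Finite (MvPolynomial (Fin l) k) B] (a : Fin l → k) :
    {ψ : B →ₐ[k] k | ∀ j, ψ (yv k B l j) = a j}.Finite := by
  classical
  obtain ⟨s, hs⟩ := (Module.Finite.fg_top : (⊤ : Submodule (MvPolynomial (Fin l) k) B).FG)
  have halg : ∀ ψ : B →ₐ[k] k, (∀ j, ψ (yv k B l j) = a j) → ∀ f, ψ (algebraMap (MvPolynomial (Fin l) k) B f) = eval a f := by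
    intro ψ hψ f
    rw [← aeval_yv, ← AlgHom.comp_apply, comp_aeval, ← aeval_eq_eval]
    congr 2
    funext j; exact hψ j
  choose P hP hP' using fun b : B => (Algebra.IsIntegral.isIntegral b : IsIntegral (MvPolynomial (Fin l) k) b)
  apply Set.Finite.of_finite_image (f := fun ψ : B →ₐ[k] k => fun b : s => ψ b.1)
  · apply Set.Finite.subset (Set.Finite.pi' (t := fun b : s => ↑((P b.1).map (eval a)).roots.toFinset)
      (fun b => Finset.finite_toSet _))
    rintro _ ⟨ψ, hψ, rfl⟩ b
    simp only [Finset.mem_coe, Multiset.mem_toFinset]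
    rw [Polynomial.mem_roots ((hP b.1).map _).ne_zero, Polynomial.IsRoot.def, Polynomial.eval_map]
    have h1 := congrArg ψ (hP' b.1)
    rw [map_zero] at h1
    rw [← h1]
    have h2 := Polynomial.hom_eval₂ (P b.1) (algebraMap (MvPolynomial (Fin l) k) B) ψ.toRingHom b.1
    refine Eq.trans ?_ h2.symm
    change _ = Polynomial.eval₂ _ (ψ b.1) _
    congr 1
    exact RingHom.ext fun f => (halg ψ hψ f).symm
  · intro ψ hψ φ hφ he
    ext b
    have hb : b ∈ Submodule.span (MvPolynomial (Fin l) k) (s : Set B) := by rw [hs]; trivial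
    induction hb using Submodule.span_induction with
    | mem x hx => exact congrFun he ⟨x, hx⟩
    | zero => simp
    | add x y _ _ hx hy => rw [map_add, map_add, hx, hy]
    | smul c x _ hx => rw [Algebra.smul_def, map_mul, map_mul, hx, halg ψ hψ, halg φ hφ]
end

section
variable {k B : Type*} [Field k] [CommRing B] [Algebra k B] {l : ℕ}

/-- the algebra structure given by a tuple -/
abbrev yAlg (y : Fin l → B) : Algebra (MvPolynomial (Fin l) k) B := (aeval y : MvPolynomial (Fin l) k →ₐ[k] B).toRingHom.toAlgebra

variable (k) in
/-- degree of the finite projection given by `y` -/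
def Dg (y : Fin l → B) : ℕ :=
  letI : Algebra (MvPolynomial (Fin l) k) B := yAlg y
  Module.finrank (MvPolynomial (Fin l) k) B

lemma yAlg_tower (y : Fin l → B) :
    letI : Algebra (MvPolynomial (Fin l) k) B := yAlg y
    IsScalarTower k (MvPolynomial (Fin l) k) B := by
  letI : Algebra (MvPolynomial (Fin l) k) B := yAlg y
  apply IsScalarTower.of_algebraMap_eq
  intro x
  change _ = aeval y (algebraMap k _ x)
  rw [AlgHom.commutes]

lemma yAlg_yv (y : Fin l → B) :
    letI : Algebra (MvPolynomial (Fin l) k) B := yAlg y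
    yv k B l = y := by
  letI : Algebra (MvPolynomial (Fin l) k) B := yAlg y
  funext i
  change aeval y (X i) = y i
  simp

lemma yAlg_faithful (y : Fin l → B) (hy : AlgebraicIndependent k y) :
    letI : Algebra (MvPolynomial (Fin l) k) B := yAlg y
    FaithfulSMul (MvPolynomial (Fin l) k) B := by
  letI : Algebra (MvPolynomial (Fin l) k) B := yAlg y
  rw [faithfulSMul_iff_algebraMap_injective]
  exact hy

lemma yAlg_finite {U : Submodule k B} [FiniteDimensional k U] (y : Fin l → B) (h : IsRed U y)
    (hU : ∀ b, ∃ m, b ∈ U ^ m) :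
    letI : Algebra (MvPolynomial (Fin l) k) B := yAlg y
    Module.Finite (MvPolynomial (Fin l) k) B := by
  letI : Algebra (MvPolynomial (Fin l) k) B := yAlg y
  haveI := yAlg_tower (k := k) y
  refine IsRed.finite (U := U) (by rw [yAlg_yv (k := k) y]; exact h) hU

variable [IsDomain B] {U : Submodule k B} [FiniteDimensional k U] (y : Fin l → B) (h : IsRed U y)
    (hU : ∀ b, ∃ m, b ∈ U ^ m) (hy : AlgebraicIndependent k y)
include h hU hy

lemma Dg_pos : 0 < Dg k y := by
  letI : Algebra (MvPolynomial (Fin l) k) B := yAlg y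
  haveI := yAlg_tower (k := k) y
  haveI := yAlg_finite y h hU
  haveI := yAlg_faithful (k := k) y hy
  haveI : Module.IsTorsionFree (MvPolynomial (Fin l) k) B := inferInstance
  exact Module.finrank_pos

lemma Dg_upper [Infinite k] (m : ℕ) : Module.finrank k ↥(U ^ m) ≤ Dg k y * (m + 1) ^ l := by
  letI : Algebra (MvPolynomial (Fin l) k) B := yAlg y
  haveI := yAlg_tower (k := k) y
  haveI := yAlg_finite y h hU
  haveI := yAlg_faithful (k := k) y hy
  exact upper_bound (by rw [yAlg_yv (k := k) y]; exact h) m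

lemma Dg_krull [IsAlgClosed k] : ringKrullDim B = l := by
  letI : Algebra (MvPolynomial (Fin l) k) B := yAlg y
  haveI := yAlg_tower (k := k) y
  haveI := yAlg_finite y h hU
  haveI := yAlg_faithful (k := k) y hy
  exact krullDim_eq (k := k)

lemma Dg_hom [IsAlgClosed k] (a : Fin l → k) : ∃ ψ : B →ₐ[k] k, ∀ i, ψ (y i) = a i := by
  letI : Algebra (MvPolynomial (Fin l) k) B := yAlg y
  haveI := yAlg_tower (k := k) y
  haveI := yAlg_finite y h hU
  haveI := yAlg_faithful (k := k) y hy
  have := exists_hom (k := k) (B := B) a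
  rwa [yAlg_yv (k := k) y] at this

lemma Dg_points [IsAlgClosed k] [CharZero k] :
    ∃ (a : Fin l → k), {ψ : B →ₐ[k] k | ∀ j, ψ (y j) = a j}.Finite ∧
      Dg k y ≤ {ψ : B →ₐ[k] k | ∀ j, ψ (y j) = a j}.ncard := by
  letI : Algebra (MvPolynomial (Fin l) k) B := yAlg y
  haveI := yAlg_tower (k := k) y
  haveI := yAlg_finite y h hU
  haveI := yAlg_faithful (k := k) y hy
  obtain ⟨a, S, hS, hSa⟩ := fiber_points (k := k) (B := B) (l := l)
  have hf := fiber_finite (k := k) (B := B) (l := l) a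
  rw [yAlg_yv (k := k) y] at hSa hf
  refine ⟨a, hf, ?_⟩
  have : Dg k y = S.card := hS.symm
  rw [this, ← Set.ncard_coe_finset]
  exact Set.ncard_le_ncard hSa hf

lemma Dg_bound [IsAlgClosed k] (z : Fin l → B) (hz : ∀ j, z j ∈ U)
    (hfin : {ψ : B →ₐ[k] k | ∀ j, ψ (z j) = 0}.Finite) :
    {ψ : B →ₐ[k] k | ∀ j, ψ (z j) = 0}.ncard ≤ (l + 1) ^ l * Dg k y := by
  letI : Algebra (MvPolynomial (Fin l) k) B := yAlg y
  haveI := yAlg_tower (k := k) y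
  haveI := yAlg_finite y h hU
  haveI := yAlg_faithful (k := k) y hy
  exact fiber_bound (U := U) (by rw [yAlg_yv (k := k) y]; exact h) hU z hz hfin

lemma Dg_emb [CharZero k] (Ω : Type*) [Field Ω] [IsAlgClosed Ω] [Algebra k Ω] (t : Fin l → Ω)
    (ht : AlgebraicIndependent k t) :
    ∃ S : Finset (B →ₐ[k] Ω), S.card = Dg k y ∧ ∀ σ ∈ S, Function.Injective σ ∧ ∀ i, σ (y i) = t i := by
  classical
  letI : Algebra (MvPolynomial (Fin l) k) B := yAlg y
  haveI := yAlg_tower (k := k) y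
  haveI := yAlg_finite y h hU
  haveI := yAlg_faithful (k := k) y hy
  letI : Algebra (MvPolynomial (Fin l) k) Ω := yAlg t
  haveI := yAlg_tower (k := k) t
  haveI := yAlg_faithful (k := k) t ht
  have : CharZero (MvPolynomial (Fin l) k) := charZero_of_injective_algebraMap (MvPolynomial.C_injective (Fin l) k)
  obtain ⟨S, hS, hSi⟩ := embeddings (MvPolynomial (Fin l) k) B Ω
  refine ⟨S.image (fun σ => σ.restrictScalars k), ?_, ?_⟩
  · rw [Finset.card_image_of_injective, hS]
    · rfl
    · exact AlgHom.restrictScalars_injective k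
  · intro σ hσ
    obtain ⟨s, hs, rfl⟩ := Finset.mem_image.1 hσ
    refine ⟨hSi s hs, fun i => ?_⟩
    have h1 := s.commutes (X i)
    have h2 : algebraMap (MvPolynomial (Fin l) k) B (X i) = y i := by
      change aeval y (X i) = _; simp
    have h3 : algebraMap (MvPolynomial (Fin l) k) Ω (X i) = t i := by
      change aeval t (X i) = _; simp
    rw [h2, h3] at h1
    exact h1
end

section
variable {n}

lemma mem_vI {V : Set (Fin n → ℂ)} {f : MvPolynomial (Fin n) ℂ} :
    f ∈ vanishingIdeal n V ↔ ∀ x ∈ V, eval x f = 0 := Iff.rfl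

lemma vI_eq (V : Set (Fin n → ℂ)) : vanishingIdeal n V = MvPolynomial.vanishingIdeal ℂ V := by
  ext f
  rw [mem_vI, MvPolynomial.mem_vanishingIdeal_iff]
  simp [aeval_eq_eval]

lemma zL_eq (I : Ideal (MvPolynomial (Fin n) ℂ)) :
    zeroLocus n (I : Set (MvPolynomial (Fin n) ℂ)) = MvPolynomial.zeroLocus ℂ I := by
  ext x
  rw [MvPolynomial.mem_zeroLocus_iff]
  simp [zeroLocus, aeval_eq_eval]

lemma zL_span (g : Set (MvPolynomial (Fin n) ℂ)) :
    zeroLocus n g = zeroLocus n (Ideal.span g : Set (MvPolynomial (Fin n) ℂ)) := by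
  ext x
  constructor
  · intro hx f hf
    induction hf using Submodule.span_induction with
    | mem f hf => exact hx f hf
    | zero => simp
    | add f g _ _ hf hg => simp [hf, hg]
    | smul a f _ hf => simp [hf]
  · intro hx f hf
    exact hx f (Ideal.subset_span hf)

lemma zL_vI {V : Set (Fin n → ℂ)} (hV : IsAlgebraicSet n V) :
    zeroLocus n (vanishingIdeal n V : Set (MvPolynomial (Fin n) ℂ)) = V := by
  obtain ⟨I, rfl⟩ := hV
  apply Subset.antisymm
  · intro x hx f hf
    exact hx f (fun y hy => hy f hf)
  · intro x hx f hf
    exact hf x hx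

lemma vI_anti {V W : Set (Fin n → ℂ)} (h : V ⊆ W) : vanishingIdeal n W ≤ vanishingIdeal n V :=
  fun f hf x hx => hf x (h hx)

lemma zL_anti {I J : Set (MvPolynomial (Fin n) ℂ)} (h : I ⊆ J) : zeroLocus n J ⊆ zeroLocus n I :=
  fun x hx f hf => hx f (h hf)

lemma vI_le_iff {V W : Set (Fin n → ℂ)} (hW : IsAlgebraicSet n W) :
    vanishingIdeal n W ≤ vanishingIdeal n V ↔ V ⊆ W := by
  refine ⟨fun h => ?_, vI_anti⟩
  rw [← zL_vI hW]
  intro x hx f hf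
  exact h hf x hx

lemma vI_inj {V W : Set (Fin n → ℂ)} (hV : IsAlgebraicSet n V) (hW : IsAlgebraicSet n W)
    (h : vanishingIdeal n V = vanishingIdeal n W) : V = W := by
  rw [← zL_vI hV, ← zL_vI hW, h]

lemma alg_zL (I : Set (MvPolynomial (Fin n) ℂ)) : IsAlgebraicSet n (zeroLocus n I) := ⟨I, rfl⟩

lemma vI_zL (I : Ideal (MvPolynomial (Fin n) ℂ)) :
    vanishingIdeal n (zeroLocus n (I : Set (MvPolynomial (Fin n) ℂ))) = I.radical := by
  rw [vI_eq, zL_eq, MvPolynomial.vanishingIdeal_zeroLocus_eq_radical]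

lemma vI_prime {W : Set (Fin n → ℂ)} (hW : IsIrredVariety n W) : (vanishingIdeal n W).IsPrime := by
  obtain ⟨ha, ⟨x, hx⟩, hirr⟩ := hW
  constructor
  · intro h
    have : (1 : MvPolynomial (Fin n) ℂ) ∈ vanishingIdeal n W := by rw [h]; trivial
    have := this x hx
    simp at this
  · intro f g hfg
    rcases hirr (zeroLocus n {f}) (zeroLocus n {g}) (alg_zL _) (alg_zL _) (by
      intro x hx
      have := hfg x hx
      rw [map_mul, mul_eq_zero] at this
      simpa [zeroLocus] using this) with h | h
    · left; intro x hx; exact h hx f rfl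
    · right; intro x hx; exact h hx g rfl

lemma irr_zL (P : Ideal (MvPolynomial (Fin n) ℂ)) [hP : P.IsPrime] :
    IsIrredVariety n (zeroLocus n (P : Set (MvPolynomial (Fin n) ℂ))) := by
  have hv : vanishingIdeal n (zeroLocus n (P : Set (MvPolynomial (Fin n) ℂ))) = P := by
    rw [vI_zL, hP.radical]
  refine ⟨alg_zL _, ?_, ?_⟩
  · by_contra h
    rw [Set.not_nonempty_iff_eq_empty] at h
    rw [h] at hv
    apply hP.ne_top
    rw [← hv, Ideal.eq_top_iff_one]
    intro x hx; exact absurd hx (by simp)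
  · intro V₁ V₂ h1 h2 hsub
    rw [← vI_le_iff h1, ← vI_le_iff h2, hv]
    by_contra! hc
    obtain ⟨hc1, hc2⟩ := hc
    obtain ⟨f, hf, hf'⟩ := SetLike.not_le_iff_exists.1 hc1
    obtain ⟨g, hg, hg'⟩ := SetLike.not_le_iff_exists.1 hc2
    have : f * g ∈ P := by
      rw [← hv]
      intro x hx
      rcases hsub hx with h | h
      · rw [map_mul, hf x h, zero_mul]
      · rw [map_mul, hg x h, mul_zero]
    rcases hP.mem_or_mem this with h | h
    · exact hf' h
    · exact hg' h

lemma vI_zL_prime (P : Ideal (MvPolynomial (Fin n) ℂ)) [hP : P.IsPrime] :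
    vanishingIdeal n (zeroLocus n (P : Set (MvPolynomial (Fin n) ℂ))) = P := by
  rw [vI_zL, hP.radical]

lemma comp_iff {W X : Set (Fin n → ℂ)} (hX : IsAlgebraicSet n X) (h : IsIrredComponent n W X) :
    vanishingIdeal n W ∈ (vanishingIdeal n X).minimalPrimes := by
  obtain ⟨hW, hWX, hmax⟩ := h
  refine ⟨⟨vI_prime hW, vI_anti hWX⟩, ?_⟩
  rintro P ⟨hP, hXP⟩ hle
  have h1 := hmax _ (irr_zL P) (by
    rw [← zL_vI hW.1]; exact zL_anti hle) (by
    rw [← zL_vI hX]; exact zL_anti hXP)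
  rw [← h1, vI_zL_prime]

lemma comp_of_min {X : Set (Fin n → ℂ)} (hX : IsAlgebraicSet n X) {P : Ideal (MvPolynomial (Fin n) ℂ)}
    (hP : P ∈ (vanishingIdeal n X).minimalPrimes) :
    IsIrredComponent n (zeroLocus n (P : Set (MvPolynomial (Fin n) ℂ))) X := by
  haveI := hP.1.1
  refine ⟨irr_zL P, ?_, ?_⟩
  · rw [← zL_vI hX]; exact zL_anti hP.1.2
  · intro W' hW' h1 h2
    apply Subset.antisymm _ h1
    have h3 := hP.2 ⟨vI_prime hW', vI_anti h2⟩ (by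
      have := vI_anti h1
      rwa [vI_zL_prime] at this)
    rw [← zL_vI hW'.1]
    exact zL_anti h3

lemma comps_finite {X : Set (Fin n → ℂ)} (hX : IsAlgebraicSet n X) :
    {W | IsIrredComponent n W X}.Finite := by
  apply Set.Finite.subset (((vanishingIdeal n X).finite_minimalPrimes_of_isNoetherianRing).image
    (fun P : Ideal (MvPolynomial (Fin n) ℂ) => zeroLocus n (P : Set (MvPolynomial (Fin n) ℂ))))
  intro W hW
  exact ⟨_, comp_iff hX hW, zL_vI hW.1.1⟩

lemma vI_radical (X : Set (Fin n → ℂ)) : (vanishingIdeal n X).IsRadical := by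
  rintro f ⟨m, hm⟩ x hx
  have := hm x hx
  rw [map_pow] at this
  exact eq_zero_of_pow_eq_zero this

/-- membership in the ideal is tested on components -/
lemma mem_vI_comps {X : Set (Fin n → ℂ)} (hX : IsAlgebraicSet n X) {f : MvPolynomial (Fin n) ℂ}
    (h : ∀ W, IsIrredComponent n W X → f ∈ vanishingIdeal n W) : f ∈ vanishingIdeal n X := by
  rw [← (vI_radical X).radical, ← Ideal.sInf_minimalPrimes, Ideal.mem_sInf]
  intro P hP
  have h1 := h _ (comp_of_min hX hP)
  haveI := hP.1.1
  rwa [vI_zL_prime] at h1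

lemma comps_nonempty {X : Set (Fin n → ℂ)} (hX : IsAlgebraicSet n X) (hne : X.Nonempty) :
    ∃ W, IsIrredComponent n W X := by
  obtain ⟨x, hx⟩ := hne
  have : vanishingIdeal n X ≠ ⊤ := by
    intro h
    have : (1 : MvPolynomial (Fin n) ℂ) ∈ vanishingIdeal n X := by rw [h]; trivial
    have := this x hx
    simp at this
  obtain ⟨P, hP⟩ := Ideal.nonempty_minimalPrimes this
  exact ⟨_, comp_of_min hX hP⟩

/-- dimension -/
lemma dim_eq {W : Set (Fin n → ℂ)} (hW : IsIrredVariety n W) {d : ℕ}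
    (hd : ringKrullDim (MvPolynomial (Fin n) ℂ ⧸ vanishingIdeal n W) = d) : dim n W = d := by
  set I := vanishingIdeal n W with hI
  have hset : {m | HasChain n W m} = Set.Iic d := by
    ext m
    simp only [Set.mem_setOf_eq, Set.mem_Iic]
    constructor
    · rintro ⟨C, hC, hlt, hlast⟩
      have hle : ∀ i, I ≤ vanishingIdeal n (C i) := by
        intro i
        apply vI_anti
        refine Subset.trans ?_ hlast
        rcases (Fin.le_last i).lt_or_eq with h | h
        · exact (hlt _ _ h).1
        · rw [h]
      let f : Fin (m + 1) → PrimeSpectrum (MvPolynomial (Fin n) ℂ ⧸ I) := fun i =>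
        ⟨(vanishingIdeal n (C i)).map (Ideal.Quotient.mk I), by
          haveI := vI_prime (hC i)
          apply Ideal.map_isPrime_of_surjective Ideal.Quotient.mk_surjective
          rw [Ideal.mk_ker]; exact hle i⟩
      have hf : ∀ i j, i < j → f j < f i := by
        intro i j hij
        have h1 := hlt i j hij
        have hcm : ∀ i, (f i).asIdeal.comap (Ideal.Quotient.mk I) = vanishingIdeal n (C i) := by
          intro i
          simp only [f]
          rw [Ideal.comap_map_of_surjective _ Ideal.Quotient.mk_surjective, ← RingHom.ker_eq_comap_bot, Ideal.mk_ker]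
          exact sup_eq_left.2 (hle i)
        refine lt_of_le_of_ne ?_ ?_
        · exact Ideal.map_mono (vI_anti h1.1)
        · intro he
          have : vanishingIdeal n (C j) = vanishingIdeal n (C i) := by rw [← hcm, ← hcm, he]
          have := vI_inj (hC j).1 (hC i).1 this
          exact h1.2 this.le
      let s : LTSeries (PrimeSpectrum (MvPolynomial (Fin n) ℂ ⧸ I)) :=
        LTSeries.mk m (fun i => f i.rev) (fun i j hij => hf _ _ (Fin.rev_lt_rev.2 hij))
      have h2 : (s.length : WithBot ℕ∞) ≤ ringKrullDim (MvPolynomial (Fin n) ℂ ⧸ I) := Order.LTSeries.length_le_krullDim s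
      rw [hd] at h2
      exact_mod_cast h2
    · intro hm
      have h1 : (m : WithBot ℕ∞) ≤ Order.krullDim (PrimeSpectrum (MvPolynomial (Fin n) ℂ ⧸ I)) := by
        change _ ≤ ringKrullDim (MvPolynomial (Fin n) ℂ ⧸ I)
        rw [hd]; exact_mod_cast hm
      obtain ⟨s, hs⟩ := Order.le_krullDim_iff.1 h1
      subst hs
      let Pr : Fin (s.length + 1) → Ideal (MvPolynomial (Fin n) ℂ) := fun i => (s i).asIdeal.comap (Ideal.Quotient.mk I)
      haveI : ∀ i, (Pr i).IsPrime := fun i => Ideal.IsPrime.comap _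
      refine ⟨fun i => zeroLocus n (Pr i.rev : Set (MvPolynomial (Fin n) ℂ)), fun i => irr_zL _, ?_, ?_⟩
      · intro i j hij
        have h2 : s j.rev < s i.rev := s.strictMono (Fin.rev_lt_rev.2 hij)
        have h3 : Pr j.rev < Pr i.rev := by
          refine lt_of_le_of_ne (Ideal.comap_mono h2.le) ?_
          intro he
          have := Ideal.comap_injective_of_surjective _ Ideal.Quotient.mk_surjective he
          exact h2.ne (PrimeSpectrum.ext this)
        refine ⟨zL_anti h3.le, fun hc => ?_⟩
        have := vI_anti hc
        rw [vI_zL_prime, vI_zL_prime] at this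
        exact absurd this (not_le_of_gt h3)
      · have h4 : I ≤ Pr (Fin.last s.length).rev := by
          intro f hf
          rw [Ideal.mem_comap, Ideal.Quotient.eq_zero_iff_mem.2 hf]; exact zero_mem _
        intro x hx
        rw [← zL_vI hW.1]
        exact zL_anti h4 hx
  unfold dim
  rw [hset, csSup_Iic]
end

section
variable {n}

/-- coordinate functions -/
def xb (J : Ideal (MvPolynomial (Fin n) ℂ)) : Fin n → MvPolynomial (Fin n) ℂ ⧸ J :=
  fun i => Ideal.Quotient.mkₐ ℂ J (X i)

/-- functions of degree at most one -/
def UU (J : Ideal (MvPolynomial (Fin n) ℂ)) : Submodule ℂ (MvPolynomial (Fin n) ℂ ⧸ J) := Ysp ℂ (xb J)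

lemma aeval_xb (J : Ideal (MvPolynomial (Fin n) ℂ)) : aeval (xb J) = Ideal.Quotient.mkₐ ℂ J := by
  ext i; simp [xb]

instance UU_fin (J : Ideal (MvPolynomial (Fin n) ℂ)) : FiniteDimensional ℂ (UU J) :=
  FiniteDimensional.span_of_finite ℂ ((Set.finite_range _).insert _)

lemma UU_pow (J : Ideal (MvPolynomial (Fin n) ℂ)) (m : ℕ) :
    UU J ^ m = (restrictTotalDegree (Fin n) ℂ m).map (Ideal.Quotient.mkₐ ℂ J).toLinearMap := by
  rw [UU, Ysp_pow, aeval_xb]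

instance UU_pow_fin (J : Ideal (MvPolynomial (Fin n) ℂ)) (m : ℕ) : FiniteDimensional ℂ ↥(UU J ^ m) :=
  Module.Finite.iff_fg.2 ((Module.Finite.iff_fg.1 inferInstance : (UU J).FG).pow _)

lemma mem_UU_pow {J : Ideal (MvPolynomial (Fin n) ℂ)} {m : ℕ} {b : MvPolynomial (Fin n) ℂ ⧸ J} :
    b ∈ UU J ^ m ↔ ∃ f : MvPolynomial (Fin n) ℂ, f.totalDegree ≤ m ∧ Ideal.Quotient.mkₐ ℂ J f = b := by
  rw [UU_pow, Submodule.mem_map]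
  simp only [mem_restrictTotalDegree]
  rfl

lemma UU_exh (J : Ideal (MvPolynomial (Fin n) ℂ)) (b : MvPolynomial (Fin n) ℂ ⧸ J) : ∃ m, b ∈ UU J ^ m := by
  obtain ⟨f, rfl⟩ := Ideal.Quotient.mkₐ_surjective ℂ J b
  exact ⟨f.totalDegree, mem_UU_pow.2 ⟨f, le_rfl, rfl⟩⟩

lemma UU_red (J : Ideal (MvPolynomial (Fin n) ℂ)) : IsRed (UU J) (xb J) :=
  ⟨le_rfl, 0, by simp [UU]⟩

lemma Ysp_map {k B C ι : Type*} [Field k] [CommRing B] [CommRing C] [Algebra k B] [Algebra k C]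
    (f : B →ₐ[k] C) (y : ι → B) : (Ysp k y).map f.toLinearMap = Ysp k (f ∘ y) := by
  rw [Ysp, Submodule.map_span, Set.image_insert_eq, ← Set.range_comp, Ysp]
  congr 2
  exact map_one f

lemma IsRed_map {k B C : Type*} [Field k] [CommRing B] [CommRing C] [Algebra k B] [Algebra k C] {l : ℕ}
    (f : B →ₐ[k] C) (U : Submodule k B) (y : Fin l → B) (h : IsRed U y) :
    IsRed (U.map f.toLinearMap) (f ∘ y) := by
  obtain ⟨h1, M, h2⟩ := h
  refine ⟨?_, M, ?_⟩
  · rw [← Ysp_map]; exact Submodule.map_mono h1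
  · rw [← Ysp_map, ← Submodule.map_pow, ← Submodule.map_pow, ← Submodule.map_mul]
    exact Submodule.map_mono h2

lemma UU_map {J P : Ideal (MvPolynomial (Fin n) ℂ)} (h : J ≤ P) :
    (UU J).map (Ideal.Quotient.factorₐ ℂ h).toLinearMap = UU P := by
  rw [UU, Ysp_map, UU]
  congr 1

lemma exists_noether (J : Ideal (MvPolynomial (Fin n) ℂ)) (hJ : J ≠ ⊤) :
    ∃ l ≤ n, ∃ y : Fin l → MvPolynomial (Fin n) ℂ ⧸ J, IsRed (UU J) y ∧ AlgebraicIndependent ℂ y := by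
  haveI : Nontrivial (MvPolynomial (Fin n) ℂ ⧸ J) := Ideal.Quotient.nontrivial_iff.2 hJ
  obtain ⟨l, hl, -, y, h1, h2⟩ := noether (xb J) (UU_red J)
  exact ⟨l, hl, y, h1, h2⟩

/-- point of a homomorphism -/
def pt {J : Ideal (MvPolynomial (Fin n) ℂ)} (ψ : (MvPolynomial (Fin n) ℂ ⧸ J) →ₐ[ℂ] ℂ) : Fin n → ℂ :=
  fun i => ψ (xb J i)

lemma pt_eval {J : Ideal (MvPolynomial (Fin n) ℂ)} (ψ : (MvPolynomial (Fin n) ℂ ⧸ J) →ₐ[ℂ] ℂ)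
    (f : MvPolynomial (Fin n) ℂ) : ψ (Ideal.Quotient.mkₐ ℂ J f) = eval (pt ψ) f := by
  rw [← aeval_xb, ← AlgHom.comp_apply, comp_aeval, ← aeval_eq_eval]
  rfl

lemma pt_inj {J : Ideal (MvPolynomial (Fin n) ℂ)} :
    Function.Injective (pt : ((MvPolynomial (Fin n) ℂ ⧸ J) →ₐ[ℂ] ℂ) → (Fin n → ℂ)) := by
  intro ψ φ h
  ext b
  obtain ⟨f, rfl⟩ := Ideal.Quotient.mkₐ_surjective ℂ J b
  rw [pt_eval, pt_eval, h]

lemma pt_range (J : Ideal (MvPolynomial (Fin n) ℂ)) :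
    range (pt : ((MvPolynomial (Fin n) ℂ ⧸ J) →ₐ[ℂ] ℂ) → (Fin n → ℂ)) = zeroLocus n (J : Set (MvPolynomial (Fin n) ℂ)) := by
  ext x
  constructor
  · rintro ⟨ψ, rfl⟩ f hf
    rw [← pt_eval]
    have : Ideal.Quotient.mkₐ ℂ J f = 0 := Ideal.Quotient.eq_zero_iff_mem.2 hf
    rw [this, map_zero]
  · intro hx
    refine ⟨Ideal.Quotient.liftₐ J (aeval x) (fun f hf => by rw [aeval_eq_eval]; exact hx f hf), ?_⟩
    funext i
    simp [pt, xb]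

lemma UU_form {J : Ideal (MvPolynomial (Fin n) ℂ)} {b : MvPolynomial (Fin n) ℂ ⧸ J} (hb : b ∈ UU J) :
    ∃ (c : ℂ) (φ : (Fin n → ℂ) →ₗ[ℂ] ℂ), ∀ ψ : (MvPolynomial (Fin n) ℂ ⧸ J) →ₐ[ℂ] ℂ, ψ b = c + φ (pt ψ) := by
  rw [UU, Ysp, Submodule.mem_span_insert] at hb
  obtain ⟨c, z, hz, rfl⟩ := hb
  rw [Submodule.mem_span_range_iff_exists_fun] at hz
  obtain ⟨a, rfl⟩ := hz
  refine ⟨c, ∑ i, a i • LinearMap.proj i, fun ψ => ?_⟩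
  simp [pt]

lemma form_UU {J : Ideal (MvPolynomial (Fin n) ℂ)} (c : ℂ) (φ : (Fin n → ℂ) →ₗ[ℂ] ℂ) :
    ∃ b ∈ UU J, ∀ ψ : (MvPolynomial (Fin n) ℂ ⧸ J) →ₐ[ℂ] ℂ, ψ b = c + φ (pt ψ) := by
  refine ⟨c • 1 + ∑ i, φ (Pi.single i 1) • xb J i, ?_, fun ψ => ?_⟩
  · apply Submodule.add_mem
    · exact Submodule.smul_mem _ _ (one_mem_Ysp _)
    · exact Submodule.sum_mem _ fun i _ => Submodule.smul_mem _ _ (mem_Ysp _ i)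
  · simp only [map_add, map_smul, map_one, map_sum]
    congr 1
    · simp
    · rw [LinearMap.pi_apply_eq_sum_univ φ (pt ψ)]
      refine Finset.sum_congr rfl fun i _ => ?_
      simp only [smul_eq_mul, pt]
      rw [mul_comm]
      congr 2
      funext j
      simp [Pi.single_apply, eq_comm]

variable {W : Set (Fin n → ℂ)} (hW : IsIrredVariety n W) {d : ℕ}
  (y : Fin d → MvPolynomial (Fin n) ℂ ⧸ vanishingIdeal n W)
  (h : IsRed (UU (vanishingIdeal n W)) y) (hy : AlgebraicIndependent ℂ y)

include hW h hy

lemma dim_noether : dim n W = d := by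
  haveI := vI_prime hW
  exact dim_eq hW (Dg_krull y h (UU_exh _) hy)

lemma degree_le (hdn : d ≤ n) (m : ℕ) (hm : m ∈ { m | ∃ L : AffineSubspace ℂ (Fin n → ℂ),
    Module.finrank ℂ L.direction = n - dim n W ∧ (W ∩ ↑L).Finite ∧ (W ∩ ↑L).ncard = m }) :
    m ≤ (d + 1) ^ d * Dg ℂ y := by
  haveI := vI_prime hW
  obtain ⟨L, hL, hfin, rfl⟩ := hm
  rw [dim_noether hW y h hy] at hL
  rcases Set.eq_empty_or_nonempty (W ∩ (L : Set (Fin n → ℂ))) with he | ⟨p, hpW, hpL⟩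
  · rw [he]; simp
  have hfr : Module.finrank ℂ L.direction.dualAnnihilator = d := by
    have h1 := Subspace.finrank_add_finrank_dualAnnihilator_eq L.direction
    rw [hL, Module.finrank_fin_fun] at h1
    omega
  let bs := Module.finBasisOfFinrankEq ℂ L.direction.dualAnnihilator hfr
  have hmem : ∀ x, x ∈ L ↔ ∀ j, (bs j : Module.Dual ℂ (Fin n → ℂ)) (x - p) = 0 := by
    intro x
    rw [← AffineSubspace.vsub_right_mem_direction_iff_mem hpL, vsub_eq_sub, ← Subspace.forall_mem_dualAnnihilator_apply_eq_zero_iff]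
    constructor
    · intro h j; exact h _ (bs j).2
    · intro h φ hφ
      have h1 := bs.sum_repr ⟨φ, hφ⟩
      have h2 := congrArg (fun t : L.direction.dualAnnihilator => (t : Module.Dual ℂ (Fin n → ℂ)) (x - p)) h1
      have h3 : φ (x - p) = 0 := by
        simp only at h2
        rw [← h2, Submodule.coe_sum, LinearMap.sum_apply]
        exact Finset.sum_eq_zero fun i _ => by rw [Submodule.coe_smul, LinearMap.smul_apply, h i, smul_zero]
      exact h3
  choose z hzU hz using fun j => form_UU (J := vanishingIdeal n W) (-(bs j : Module.Dual ℂ (Fin n → ℂ)) p) (bs j : Module.Dual ℂ (Fin n → ℂ))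
  have himg : W ∩ (L : Set (Fin n → ℂ)) = pt '' {ψ : (MvPolynomial (Fin n) ℂ ⧸ vanishingIdeal n W) →ₐ[ℂ] ℂ | ∀ j, ψ (z j) = 0} := by
    ext x
    constructor
    · rintro ⟨hxW, hxL⟩
      rw [← zL_vI hW.1, ← pt_range] at hxW
      obtain ⟨ψ, rfl⟩ := hxW
      refine ⟨ψ, fun j => ?_, rfl⟩
      have := (hmem _).1 hxL j
      rw [map_sub] at this
      rw [hz, ← this]; ring
    · rintro ⟨ψ, hψ, rfl⟩
      constructor
      · have : pt ψ ∈ range (pt : ((MvPolynomial (Fin n) ℂ ⧸ vanishingIdeal n W) →ₐ[ℂ] ℂ) → (Fin n → ℂ)) := ⟨ψ, rfl⟩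
        rw [pt_range, zL_vI hW.1] at this
        exact this
      · rw [SetLike.mem_coe, hmem]
        intro j
        have := hψ j
        rw [hz] at this
        rw [map_sub, ← this]; ring
  rw [himg] at hfin ⊢
  rw [Set.ncard_image_of_injective _ pt_inj]
  exact Dg_bound y h (UU_exh _) hy z hzU (Set.Finite.of_finite_image hfin pt_inj.injOn)

lemma degree_upper (hdn : d ≤ n) : degree n W ≤ (d + 1) ^ d * Dg ℂ y := by
  unfold degree
  rcases Set.eq_empty_or_nonempty { m | ∃ L : AffineSubspace ℂ (Fin n → ℂ),
    Module.finrank ℂ L.direction = n - dim n W ∧ (W ∩ ↑L).Finite ∧ (W ∩ ↑L).ncard = m } with he | hne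
  · rw [he]; simp
  · exact csSup_le hne (degree_le hW y h hy hdn)

lemma degree_lower (hdn : d ≤ n) : Dg ℂ y ≤ degree n W := by
  haveI := vI_prime hW
  obtain ⟨a, hfin, hle⟩ := Dg_points y h (UU_exh _) hy
  have hyU : ∀ i, y i ∈ UU (vanishingIdeal n W) := fun i => h.1 (mem_Ysp _ i)
  choose c φ hφ using fun i => UU_form (hyU i)
  let Φ : (Fin n → ℂ) →ₗ[ℂ] (Fin d → ℂ) := LinearMap.pi φ
  have hsurj : Function.Surjective Φ := by
    intro b
    obtain ⟨ψ, hψ⟩ := Dg_hom y h (UU_exh _) hy (fun i => c i + b i)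
    refine ⟨pt ψ, ?_⟩
    funext i
    have := hψ i
    rw [hφ] at this
    simpa [Φ] using this
  obtain ⟨ψ0, hψ0⟩ := Dg_hom y h (UU_exh _) hy a
  let L : AffineSubspace ℂ (Fin n → ℂ) := AffineSubspace.mk' (pt ψ0) (LinearMap.ker Φ)
  have hLmem : ∀ ψ : (MvPolynomial (Fin n) ℂ ⧸ vanishingIdeal n W) →ₐ[ℂ] ℂ, pt ψ ∈ L ↔ ∀ j, ψ (y j) = a j := by
    intro ψ
    rw [AffineSubspace.mem_mk', vsub_eq_sub, LinearMap.mem_ker, map_sub, sub_eq_zero]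
    constructor
    · intro h1 j
      have := congrFun h1 j
      rw [← hψ0 j, hφ, hφ]
      simp only [Φ, LinearMap.pi_apply] at this
      rw [this]
    · intro h1
      funext j
      have := h1 j
      rw [← hψ0 j, hφ, hφ] at this
      simpa [Φ] using this
  have himg : W ∩ (L : Set (Fin n → ℂ)) = pt '' {ψ : (MvPolynomial (Fin n) ℂ ⧸ vanishingIdeal n W) →ₐ[ℂ] ℂ | ∀ j, ψ (y j) = a j} := by
    ext x
    constructor
    · rintro ⟨hxW, hxL⟩
      rw [← zL_vI hW.1, ← pt_range] at hxW
      obtain ⟨ψ, rfl⟩ := hxW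
      exact ⟨ψ, (hLmem ψ).1 hxL, rfl⟩
    · rintro ⟨ψ, hψ, rfl⟩
      constructor
      · have : pt ψ ∈ range (pt : ((MvPolynomial (Fin n) ℂ ⧸ vanishingIdeal n W) →ₐ[ℂ] ℂ) → (Fin n → ℂ)) := ⟨ψ, rfl⟩
        rw [pt_range, zL_vI hW.1] at this
        exact this
      · exact (hLmem ψ).2 hψ
  rw [← Set.ncard_image_of_injective _ (pt_inj (n := n)), ← himg] at hle
  refine hle.trans ?_
  unfold degree
  apply le_csSup ⟨_, fun m hm => degree_le hW y h hy hdn m hm⟩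
  refine ⟨L, ?_, ?_, rfl⟩
  · rw [AffineSubspace.direction_mk', dim_noether hW y h hy]
    have h1 := LinearMap.finrank_range_add_finrank_ker Φ
    rw [LinearMap.range_eq_top.2 hsurj, finrank_top, Module.finrank_fin_fun, Module.finrank_fin_fun] at h1
    omega
  · rw [himg]; exact hfin.image _

end

section
variable {n}

lemma vI_ne_top {V : Set (Fin n → ℂ)} (hV : V.Nonempty) : vanishingIdeal n V ≠ ⊤ := by
  obtain ⟨x, hx⟩ := hV
  intro h
  have : (1 : MvPolynomial (Fin n) ℂ) ∈ vanishingIdeal n V := by rw [h]; trivial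
  have := this x hx
  simp at this

/-- projection to a component -/
def pr {V W : Set (Fin n → ℂ)} (hWV : W ⊆ V) :
    (MvPolynomial (Fin n) ℂ ⧸ vanishingIdeal n V) →ₐ[ℂ] (MvPolynomial (Fin n) ℂ ⧸ vanishingIdeal n W) :=
  Ideal.Quotient.factorₐ ℂ (vI_anti hWV)

lemma pr_mk {V W : Set (Fin n → ℂ)} (hWV : W ⊆ V) (f : MvPolynomial (Fin n) ℂ) :
    pr hWV (Ideal.Quotient.mkₐ ℂ _ f) = Ideal.Quotient.mkₐ ℂ _ f := rfl

lemma pr_red {V W : Set (Fin n → ℂ)} (hWV : W ⊆ V) {d : ℕ}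
    (y : Fin d → MvPolynomial (Fin n) ℂ ⧸ vanishingIdeal n V) (h : IsRed (UU (vanishingIdeal n V)) y) :
    IsRed (UU (vanishingIdeal n W)) (pr hWV ∘ y) := by
  have := IsRed_map (pr hWV) _ y h
  rwa [pr, UU_map] at this

lemma common_noether {V : Set (Fin n → ℂ)} {d : ℕ} (hV : IsAlgSetOfDim n V d) :
    ∃ y : Fin d → MvPolynomial (Fin n) ℂ ⧸ vanishingIdeal n V, IsRed (UU (vanishingIdeal n V)) y ∧
      ∀ W, ∀ hW : IsIrredComponent n W V, AlgebraicIndependent ℂ (pr hW.2.1 ∘ y) := by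
  obtain ⟨hV1, hne, hdim⟩ := hV
  obtain ⟨l, hl, y, hred, hy⟩ := exists_noether _ (vI_ne_top hne)
  have hA : ∃ W, ∃ hW : IsIrredComponent n W V, AlgebraicIndependent ℂ (pr hW.2.1 ∘ y) := by
    by_contra hcon
    push Not at hcon
    have hrel : ∀ W : {W | IsIrredComponent n W V}, ∃ p : MvPolynomial (Fin l) ℂ, p ≠ 0 ∧
        aeval (pr W.2.2.1 ∘ y) p = 0 := by
      intro W
      have := hcon W.1 W.2
      rw [algebraicIndependent_iff] at this
      push Not at this
      obtain ⟨p, hp, hp0⟩ := this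
      exact ⟨p, hp0, hp⟩
    choose p hp0 hp using hrel
    haveI : Fintype {W | IsIrredComponent n W V} := (comps_finite hV1).fintype
    have hprod : (∏ W, p W) ≠ 0 := Finset.prod_ne_zero_iff.2 fun W _ => hp0 W
    apply hprod
    rw [algebraicIndependent_iff] at hy
    apply hy
    obtain ⟨F, hF⟩ := Ideal.Quotient.mkₐ_surjective ℂ _ (aeval y (∏ W, p W))
    rw [← hF]
    apply Ideal.Quotient.eq_zero_iff_mem.2
    apply mem_vI_comps hV1
    intro W hW
    apply Ideal.Quotient.eq_zero_iff_mem.1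
    change Ideal.Quotient.mkₐ ℂ _ F = 0
    rw [← pr_mk hW.2.1, hF, ← AlgHom.comp_apply, comp_aeval]
    change aeval (pr hW.2.1 ∘ y) _ = 0
    rw [map_prod]
    exact Finset.prod_eq_zero (Finset.mem_univ (⟨W, hW⟩ : {W | IsIrredComponent n W V})) (hp ⟨W, hW⟩)
  obtain ⟨W0, hW0, hAI⟩ := hA
  have h1 := dim_noether hW0.1 _ (pr_red hW0.2.1 y hred) hAI
  rw [hdim W0 hW0] at h1
  subst h1
  refine ⟨y, hred, fun W hW => ?_⟩
  by_contra hnot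
  haveI := vI_prime hW.1
  obtain ⟨l', -, hl', y', hr', ha'⟩ := noether (pr hW.2.1 ∘ y) (pr_red hW.2.1 y hred)
  have h2 := dim_noether hW.1 y' hr' ha'
  rw [hdim W hW] at h2
  have := hl' hnot
  omega

end

section
variable {n}

lemma avoid {k E : Type*} [Field k] [Infinite k] [AddCommGroup E] [Module k E] (L : Submodule k E)
    (S : Set (Submodule k E)) (hS : S.Finite) (h : ∀ p ∈ S, ¬ L ≤ p) : ∃ x ∈ L, ∀ p ∈ S, x ∉ p := by
  classical
  let s : Finset (Submodule k L) := hS.toFinset.image (fun p => p.comap L.subtype)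
  have hs : (⊤ : Submodule k L) ∉ s := by
    intro hmem
    obtain ⟨p, hp, hpt⟩ := Finset.mem_image.1 hmem
    apply h p (hS.mem_toFinset.1 hp)
    intro x hx
    have : (⟨x, hx⟩ : L) ∈ p.comap L.subtype := by rw [hpt]; trivial
    exact this
  have := Subspace.biUnion_ne_univ_of_top_notMem hs
  rw [Ne, Set.eq_univ_iff_forall] at this
  push Not at this
  obtain ⟨x, hx⟩ := this
  refine ⟨x, x.2, fun p hp hxp => hx ?_⟩
  simp only [Set.mem_iUnion]
  exact ⟨p.comap L.subtype, Finset.mem_image.2 ⟨p, hS.mem_toFinset.2 hp, rfl⟩, hxp⟩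

lemma chooseG {k R : Type*} [Field k] [Infinite k] [CommRing R] [IsNoetherianRing R] [Algebra k R]
    (L : Submodule k R) (r : ℕ) : ∃ G : Fin r → R, (∀ i, G i ∈ L) ∧
      ∀ Q : Ideal R, Q.IsPrime → Ideal.span (range G) ≤ Q → (L : Set R) ⊆ Q ∨ (r : ℕ∞) ≤ Q.height := by
  induction r with
  | zero => exact ⟨Fin.elim0, fun i => i.elim0, fun Q _ _ => Or.inr (by simp)⟩
  | succ r ih =>
    obtain ⟨G, hG, hQ⟩ := ih
    let S : Set (Ideal R) := {Q | Q ∈ (Ideal.span (range G)).minimalPrimes ∧ ¬ (L : Set R) ⊆ Q}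
    have hS : S.Finite := (Ideal.finite_minimalPrimes_of_isNoetherianRing R _).subset fun Q h => h.1
    obtain ⟨g, hgL, hg⟩ := avoid L ((fun Q : Ideal R => Q.restrictScalars k) '' S) (hS.image _) (by
      rintro _ ⟨Q, hQ, rfl⟩ hle
      exact hQ.2 hle)
    refine ⟨Fin.snoc G g, ?_, ?_⟩
    · intro i
      refine Fin.lastCases ?_ (fun i => ?_) i
      · simpa using hgL
      · simpa using hG i
    · intro Q hQp hle
      by_cases hL : (L : Set R) ⊆ Q
      · exact Or.inl hL
      right
      have hle' : Ideal.span (range G) ≤ Q := by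
        rw [Ideal.span_le]
        rintro _ ⟨i, rfl⟩
        apply hle
        apply Ideal.subset_span
        exact ⟨i.castSucc, by simp⟩
      have hgQ : g ∈ Q := by
        apply hle
        apply Ideal.subset_span
        exact ⟨Fin.last r, by simp⟩
      obtain ⟨Q', hQ', hQQ⟩ := Ideal.exists_minimalPrimes_le hle'
      haveI := hQ'.isPrime
      have hL' : ¬ (L : Set R) ⊆ Q' := fun h => hL (h.trans hQQ)
      have hht := (hQ Q' hQ'.isPrime hQ'.le).resolve_left hL'
      have hgQ' : g ∉ Q' := hg _ ⟨Q', ⟨hQ', hL'⟩, rfl⟩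
      have hlt : Q' < Q := lt_of_le_of_ne hQQ (fun h => hgQ' (h ▸ hgQ))
      have := Ideal.height_add_one_le_of_lt_of_isPrime hlt
      refine le_trans ?_ this
      push_cast
      gcongr

lemma height_quot {R : Type*} [CommRing R] (P : Ideal R) [hP : P.IsPrime] (a b : ℕ)
    (h1 : ringKrullDim R = a) (h2 : ringKrullDim (R ⧸ P) = b) : P.height + b ≤ (a : ℕ∞) := by
  have h3 : ((Order.coheight (⟨P, hP⟩ : PrimeSpectrum R) : ℕ∞) : WithBot ℕ∞) = b := by
    rw [Order.coheight_eq_krullDim_Ici, ← h2, ringKrullDim_quotient]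
    congr 1
  have h4 : Order.coheight (⟨P, hP⟩ : PrimeSpectrum R) = (b : ℕ∞) := by
    exact_mod_cast h3
  haveI : Nonempty (PrimeSpectrum R) := ⟨⟨P, hP⟩⟩
  have h5 : ((⨆ (a : PrimeSpectrum R), Order.height a + Order.coheight a : ℕ∞) : WithBot ℕ∞) = a := by
    rw [← h1, ringKrullDim, Order.krullDim_eq_iSup_height_add_coheight_of_nonempty]
  have h6 : (⨆ (a : PrimeSpectrum R), Order.height a + Order.coheight a : ℕ∞) = a := by exact_mod_cast h5
  rw [← h6, ← h4, show P.height = _ from PrimeSpectrum.height_eq_orderHeight (⟨P, hP⟩ : PrimeSpectrum R)]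
  exact le_iSup (fun a : PrimeSpectrum R => Order.height a + Order.coheight a) ⟨P, hP⟩

lemma loc_min {R : Type*} [CommRing R] {I P : Ideal R} (hP : P ∈ I.minimalPrimes) {h : R} (hh : h ∈ P) :
    ∃ u ∉ P, ∃ N : ℕ, u * h ^ N ∈ I := by
  haveI := hP.isPrime
  by_contra hcon
  push Not at hcon
  let M : Submonoid R := P.primeCompl ⊔ Submonoid.powers h
  have hd : Disjoint (I : Set R) (M : Set R) := by
    rw [Set.disjoint_left]
    intro x hxI hxM
    obtain ⟨u, hu, v, ⟨N, rfl⟩, rfl⟩ := Submonoid.mem_sup.1 hxM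
    exact hcon u hu N hxI
  obtain ⟨Q, hQ, hIQ, hQM⟩ := Ideal.exists_le_prime_disjoint I M hd
  rw [Set.disjoint_left] at hQM
  have hQP : Q ≤ P := by
    intro x hx
    by_contra hxP
    exact hQM hx ((le_sup_left : P.primeCompl ≤ M) hxP)
  have := hP.2 ⟨hQ, hIQ⟩ hQP
  exact hQM (this hh) ((le_sup_right : Submonoid.powers h ≤ M) (Submonoid.mem_powers h))

/-- a generic complete intersection -/
lemma exists_G {V : Set (Fin n → ℂ)} {d : ℕ} (hdn : d ≤ n) (hV : IsAlgSetOfDim n V d) :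
    ∃ G : Fin (n - d) → MvPolynomial (Fin n) ℂ, (∀ i, (G i).totalDegree ≤ deltaSet n V) ∧
      ∀ W, IsIrredComponent n W V → vanishingIdeal n W ∈ (Ideal.span (range G)).minimalPrimes := by
  have hne : { δ | ∃ I : Finset (MvPolynomial (Fin n) ℂ), (∀ f ∈ I, f.totalDegree ≤ δ) ∧
      ∀ W, IsIrredComponent n W V → IsIrredComponent n W (zeroLocus n ↑I) }.Nonempty := by
    obtain ⟨s, hs⟩ := (isNoetherianRing_iff_ideal_fg _).1 inferInstance (vanishingIdeal n V)
    refine ⟨s.sup totalDegree, s, fun f hf => Finset.le_sup hf, fun W hW => ?_⟩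
    rw [zL_span, hs, zL_vI hV.1]
    exact hW
  obtain ⟨g, hg1, hg2⟩ := Nat.sInf_mem hne
  change ∀ f ∈ g, f.totalDegree ≤ deltaSet n V at hg1
  obtain ⟨G, hG1, hG2⟩ := chooseG (Submodule.span ℂ (g : Set (MvPolynomial (Fin n) ℂ))) (n - d)
  have hGle : Ideal.span (range G) ≤ Ideal.span (g : Set (MvPolynomial (Fin n) ℂ)) := by
    rw [Ideal.span_le]
    rintro _ ⟨i, rfl⟩
    have : Submodule.span ℂ (g : Set (MvPolynomial (Fin n) ℂ)) ≤
      (Ideal.span (g : Set (MvPolynomial (Fin n) ℂ))).restrictScalars ℂ := by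
      rw [Submodule.span_le]; exact Ideal.subset_span
    exact this (hG1 i)
  refine ⟨G, fun i => ?_, fun W hW => ?_⟩
  · have : Submodule.span ℂ (g : Set (MvPolynomial (Fin n) ℂ)) ≤ restrictTotalDegree (Fin n) ℂ (deltaSet n V) := by
      rw [Submodule.span_le]
      intro f hf
      exact (mem_restrictTotalDegree _ _ _).2 (hg1 f hf)
    exact (mem_restrictTotalDegree _ _ _).1 (this (hG1 i))
  · haveI := vI_prime hW.1
    have hmin := comp_iff (alg_zL _) (hg2 W hW)
    rw [zL_span, vI_zL, Ideal.radical_minimalPrimes] at hmin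
    refine ⟨⟨vI_prime hW.1, hGle.trans hmin.le⟩, ?_⟩
    rintro Q ⟨hQ, hGQ⟩ hQP
    rcases hG2 Q hQ hGQ with h1 | h1
    · exact hmin.2 ⟨hQ, Ideal.span_le.2 (Submodule.subset_span.trans h1)⟩ hQP
    · obtain ⟨y, hy1, hy2⟩ := common_noether hV
      have hkd := Dg_krull _ (pr_red hW.2.1 y hy1) (UU_exh _) (hy2 W hW)
      have h2 := height_quot (vanishingIdeal n W) n d (krullDim_mv n) hkd
      by_contra hnle
      have hlt : Q < vanishingIdeal n W := lt_of_le_not_ge hQP hnle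
      have h3 := Ideal.height_add_one_le_of_lt_of_isPrime hlt
      have h4 : ((n - d : ℕ) : ℕ∞) + 1 + d ≤ n := by
        refine le_trans ?_ h2
        gcongr
        refine le_trans ?_ h3
        gcongr
      have h5 : (n - d) + 1 + d ≤ n := by exact_mod_cast h4
      omega

end

section
variable {n}

lemma iso_pt {P : Ideal (MvPolynomial (Fin n) ℂ)} [P.IsPrime] {d r : ℕ}
    (y : Fin d → MvPolynomial (Fin n) ℂ ⧸ P) (hred : IsRed (UU P) y)
    (G : Fin r → MvPolynomial (Fin n) ℂ) (hG : P ∈ (Ideal.span (range G)).minimalPrimes)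
    (Y : Fin d → MvPolynomial (Fin n) ℂ) (hY : ∀ i, Ideal.Quotient.mkₐ ℂ P (Y i) = y i)
    {Ω : Type*} [Field Ω] [Algebra ℂ Ω] (t : Fin d → Ω)
    (σ : (MvPolynomial (Fin n) ℂ ⧸ P) →ₐ[ℂ] Ω) (hσ : Function.Injective σ) (hσy : ∀ i, σ (y i) = t i)
    (I : Ideal (MvPolynomial (Fin n) Ω)) (hI1 : ∀ i, MvPolynomial.map (algebraMap ℂ Ω) (G i) ∈ I)
    (hI2 : ∀ i, MvPolynomial.map (algebraMap ℂ Ω) (Y i) - C (t i) ∈ I) (j : Fin n) :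
    ∃ (u : MvPolynomial (Fin n) Ω) (N : ℕ), eval (fun i => σ (xb P i)) u ≠ 0 ∧
      u * (X j - C (σ (xb P j))) ^ N ∈ I := by
  set p : Fin n → Ω := fun i => σ (xb P i) with hp
  have hev : ∀ f : MvPolynomial (Fin n) ℂ, eval p (MvPolynomial.map (algebraMap ℂ Ω) f) = σ (Ideal.Quotient.mkₐ ℂ P f) := by
    intro f
    rw [eval_map, ← aeval_xb, ← AlgHom.comp_apply, comp_aeval]
    rfl
  obtain ⟨F, hFm, hF⟩ : ∃ F : Polynomial (MvPolynomial (Fin d) ℂ), F.Monic ∧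
      F.eval₂ (aeval y : MvPolynomial (Fin d) ℂ →ₐ[ℂ] _).toRingHom (xb P j) = 0 := by
    letI : Algebra (MvPolynomial (Fin d) ℂ) (MvPolynomial (Fin n) ℂ ⧸ P) := yAlg y
    haveI := yAlg_tower (k := ℂ) y
    haveI := yAlg_finite y hred (UU_exh P)
    exact Algebra.IsIntegral.isIntegral (R := MvPolynomial (Fin d) ℂ) (xb P j)
  set h : MvPolynomial (Fin n) ℂ := F.eval₂ (aeval Y : MvPolynomial (Fin d) ℂ →ₐ[ℂ] _).toRingHom (X j) with hh
  have hhP : h ∈ P := by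
    apply Ideal.Quotient.eq_zero_iff_mem.1
    rw [← hF, hh, Polynomial.hom_eval₂]
    congr 1
    refine MvPolynomial.ringHom_ext (fun c => ?_) (fun i => ?_)
    · simp only [RingHom.comp_apply, AlgHom.toRingHom_eq_coe, RingHom.coe_coe, aeval_C]
      rfl
    · simp only [RingHom.comp_apply, AlgHom.toRingHom_eq_coe, RingHom.coe_coe, aeval_X]
      exact hY i
  obtain ⟨u0, hu0, N0, huN⟩ := loc_min hG hhP
  have hmapI : ∀ f ∈ Ideal.span (range G), MvPolynomial.map (algebraMap ℂ Ω) f ∈ I := by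
    intro f hf
    have : Ideal.span (range G) ≤ I.comap (MvPolynomial.map (algebraMap ℂ Ω)) := by
      rw [Ideal.span_le]; rintro _ ⟨i, rfl⟩; exact hI1 i
    exact this hf
  set Ft : Polynomial Ω := F.map (aeval t : MvPolynomial (Fin d) ℂ →ₐ[ℂ] Ω).toRingHom with hFt
  have hFt0 : Ft ≠ 0 := (hFm.map _).ne_zero
  have hcong : MvPolynomial.map (algebraMap ℂ Ω) h - Polynomial.aeval (X j : MvPolynomial (Fin n) Ω) Ft ∈ I := by
    apply Ideal.Quotient.eq.1
    rw [hh, Polynomial.hom_eval₂, Polynomial.hom_eval₂, hFt, Polynomial.aeval_def, Polynomial.eval₂_map, Polynomial.hom_eval₂]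
    simp only [map_X]
    congr 1
    refine MvPolynomial.ringHom_ext (fun c => ?_) (fun i => ?_)
    · simp only [RingHom.comp_apply, AlgHom.toRingHom_eq_coe, RingHom.coe_coe, aeval_C]
      congr 1
      change MvPolynomial.map (algebraMap ℂ Ω) (C c) = C (algebraMap ℂ Ω c)
      rw [map_C]
    · simp only [RingHom.comp_apply, AlgHom.toRingHom_eq_coe, RingHom.coe_coe, aeval_X]
      exact Ideal.Quotient.eq.2 (hI2 i)
  obtain ⟨w, hw, hndvd⟩ := Polynomial.exists_eq_pow_rootMultiplicity_mul_and_not_dvd Ft hFt0 (p j)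
  have hwp : w.eval (p j) ≠ 0 := fun h0 => hndvd (Polynomial.dvd_iff_isRoot.2 h0)
  refine ⟨MvPolynomial.map (algebraMap ℂ Ω) u0 * (Polynomial.aeval (X j : MvPolynomial (Fin n) Ω) w) ^ N0,
    Polynomial.rootMultiplicity (p j) Ft * N0, ?_, ?_⟩
  · rw [map_mul, map_pow, hev]
    apply mul_ne_zero
    · intro h0
      apply hu0
      rw [← map_zero σ] at h0
      exact Ideal.Quotient.eq_zero_iff_mem.1 (hσ h0)
    · apply pow_ne_zero
      have : eval p (Polynomial.aeval (X j : MvPolynomial (Fin n) Ω) w) = w.eval (p j) := by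
        rw [Polynomial.aeval_def, Polynomial.hom_eval₂, Polynomial.eval]
        congr 1
        · ext c; simp
        · simp
      rw [this]; exact hwp
  · have h1 := hmapI _ huN
    rw [map_mul, map_pow] at h1
    have h2 : Polynomial.aeval (X j : MvPolynomial (Fin n) Ω) Ft =
        (X j - C (p j)) ^ (Polynomial.rootMultiplicity (p j) Ft) * Polynomial.aeval (X j : MvPolynomial (Fin n) Ω) w := by
      conv_lhs => rw [hw]
      simp [MvPolynomial.algebraMap_eq]
    have h3 : MvPolynomial.map (algebraMap ℂ Ω) u0 * (Polynomial.aeval (X j : MvPolynomial (Fin n) Ω) Ft) ^ N0 ∈ I := by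
      apply Ideal.Quotient.eq_zero_iff_mem.1
      rw [← Ideal.Quotient.eq_zero_iff_mem] at h1
      rw [map_mul, map_pow] at h1 ⊢
      rw [← Ideal.Quotient.eq.2 hcong]; exact h1
    rw [h2] at h3
    convert h3 using 1
    change _ * (X j - C (p j)) ^ _ = _
    ring

lemma tdeg_map {Ω : Type*} [Field Ω] [Algebra ℂ Ω] (f : MvPolynomial (Fin n) ℂ) :
    (MvPolynomial.map (algebraMap ℂ Ω) f).totalDegree ≤ f.totalDegree := by
  unfold totalDegree
  exact Finset.sup_mono (support_map_subset _ _)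

lemma sep_pt {P : Ideal (MvPolynomial (Fin n) ℂ)} [P.IsPrime] {d δ : ℕ} (hdn : d ≤ n) (hδ : 1 ≤ δ)
    (y : Fin d → MvPolynomial (Fin n) ℂ ⧸ P) (hred : IsRed (UU P) y)
    (G : Fin (n - d) → MvPolynomial (Fin n) ℂ) (hG : P ∈ (Ideal.span (range G)).minimalPrimes)
    (hGd : ∀ i, (G i).totalDegree ≤ δ)
    (Y : Fin d → MvPolynomial (Fin n) ℂ) (hY : ∀ i, Ideal.Quotient.mkₐ ℂ P (Y i) = y i)
    (hYd : ∀ i, (Y i).totalDegree ≤ 1)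
    {Ω : Type*} [Field Ω] [Algebra ℂ Ω] (t : Fin d → Ω)
    (σ : (MvPolynomial (Fin n) ℂ ⧸ P) →ₐ[ℂ] Ω) (hσ : Function.Injective σ) (hσy : ∀ i, σ (y i) = t i) :
    ∃ f : MvPolynomial (Fin n) Ω, f.totalDegree ≤ n * δ ∧ eval (fun i => σ (xb P i)) f ≠ 0 ∧
      ∀ q : Fin n → Ω, (∀ i, eval q (MvPolynomial.map (algebraMap ℂ Ω) (G i)) = 0) →
        (∀ i, eval q (MvPolynomial.map (algebraMap ℂ Ω) (Y i)) = t i) → q ≠ (fun i => σ (xb P i)) → eval q f = 0 := by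
  classical
  set p : Fin n → Ω := fun i => σ (xb P i) with hp
  have hev : ∀ f : MvPolynomial (Fin n) ℂ, eval p (MvPolynomial.map (algebraMap ℂ Ω) f) = σ (Ideal.Quotient.mkₐ ℂ P f) := by
    intro f
    rw [eval_map, ← aeval_xb, ← AlgHom.comp_apply, comp_aeval]
    rfl
  let E0 : Fin (n - d) ⊕ Fin d → MvPolynomial (Fin n) Ω :=
    Sum.elim (fun i => MvPolynomial.map (algebraMap ℂ Ω) (G i))
      (fun i => MvPolynomial.map (algebraMap ℂ Ω) (Y i) - C (t i))
  let e : Fin n ≃ Fin (n - d) ⊕ Fin d := (finCongr (by omega)).trans finSumFinEquiv.symm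
  have hI := iso_pt y hred G hG Y hY t σ hσ hσy (Ideal.span (range (E0 ∘ e)))
    (fun i => Ideal.subset_span ⟨e.symm (Sum.inl i), by simp [E0]⟩)
    (fun i => Ideal.subset_span ⟨e.symm (Sum.inr i), by simp [E0]⟩)
  choose u N hu hN using hI
  suffices hs : ∃ f : MvPolynomial (Fin n) Ω, f.totalDegree ≤ n * δ ∧ eval p f ≠ 0 ∧
      ∀ q, (∀ i, eval q ((E0 ∘ e) i) = 0) → q ≠ p → eval q f = 0 by
    obtain ⟨f, hf1, hf2, hf3⟩ := hs
    refine ⟨f, hf1, hf2, fun q hq1 hq2 hne => hf3 q ?_ hne⟩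
    intro i
    simp only [Function.comp]
    rcases e i with j | j
    · exact hq1 j
    · simp [E0, hq2]
  refine separator (E0 ∘ e) δ ?_ p ?_ (Finset.univ.sup N) (∏ j, u j) ?_ ?_
  · intro i
    simp only [Function.comp]
    rcases e i with j | j
    · exact (tdeg_map _).trans (hGd j)
    · refine (totalDegree_sub _ _).trans ?_
      rw [totalDegree_C]
      exact (max_le ((tdeg_map _).trans (hYd j)) (by omega)).trans hδ
  · intro i
    simp only [Function.comp]
    rcases e i with j | j
    · change eval p (MvPolynomial.map (algebraMap ℂ Ω) (G j)) = 0
      rw [hev]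
      have : Ideal.Quotient.mkₐ ℂ P (G j) = 0 := Ideal.Quotient.eq_zero_iff_mem.2 (hG.le (Ideal.subset_span ⟨j, rfl⟩))
      rw [this, map_zero]
    · change eval p (MvPolynomial.map (algebraMap ℂ Ω) (Y j) - C (t j)) = 0
      rw [map_sub, hev, hY, hσy, eval_C, sub_self]
  · rw [map_prod]
    exact Finset.prod_ne_zero_iff.2 fun j _ => hu j
  · intro j
    obtain ⟨v, hv⟩ : u j ∣ ∏ j, u j := Finset.dvd_prod_of_mem u (Finset.mem_univ j)
    have hle : N j ≤ Finset.univ.sup N + 1 := (Finset.le_sup (Finset.mem_univ j)).trans (Nat.le_succ _)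
    obtain ⟨m, hm⟩ := Nat.exists_eq_add_of_le hle
    have : (∏ j, u j) * (X j - C (p j)) ^ (Finset.univ.sup N + 1) =
        (v * (X j - C (p j)) ^ m) * (u j * (X j - C (p j)) ^ N j) := by
      rw [hm, hv]; ring
    rw [this]
    exact Ideal.mul_mem_left _ _ (hN j)

end

section
variable {n}

lemma exists_Om (d : ℕ) : ∃ (Ω : Type) (_ : Field Ω) (_ : IsAlgClosed Ω) (_ : Algebra ℂ Ω) (t : Fin d → Ω),
    AlgebraicIndependent ℂ t := by
  let K := FractionRing (MvPolynomial (Fin d) ℂ)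
  refine ⟨AlgebraicClosure K, inferInstance, inferInstance, inferInstance,
    fun i => algebraMap K (AlgebraicClosure K) (algebraMap (MvPolynomial (Fin d) ℂ) K (X i)), ?_⟩
  let f : MvPolynomial (Fin d) ℂ →ₐ[ℂ] AlgebraicClosure K :=
    (IsScalarTower.toAlgHom ℂ K (AlgebraicClosure K)).comp (IsScalarTower.toAlgHom ℂ (MvPolynomial (Fin d) ℂ) K)
  have hf : Function.Injective f :=
    (algebraMap K (AlgebraicClosure K)).injective.comp (IsFractionRing.injective (MvPolynomial (Fin d) ℂ) K)
  exact (algebraicIndependent_X (Fin d) ℂ).map' (f := f) hf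

lemma sel {Ω S : Type*} [Field Ω] [Fintype S] (p : S → Fin n → Ω) (M : ℕ)
    (h : ∀ s, ∃ f : MvPolynomial (Fin n) Ω, f.totalDegree ≤ M ∧ eval (p s) f ≠ 0 ∧ ∀ s', s' ≠ s → eval (p s') f = 0) :
    ∃ (κ : Type) (_ : Fintype κ) (a : κ → (Fin n →₀ ℕ)), Fintype.card κ = Fintype.card S ∧
      (∀ i, (a i).sum (fun _ e => e) ≤ M) ∧
      LinearIndependent Ω (fun i : κ => fun s => eval (p s) (monomial (a i) (1 : Ω))) := by
  classical
  let v : {α : Fin n →₀ ℕ // α.sum (fun _ e => e) ≤ M} → (S → Ω) := fun α s => eval (p s) (monomial α.1 (1 : Ω))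
  have hspan : Submodule.span Ω (range v) = ⊤ := by
    rw [eq_top_iff, ← (Pi.basisFun Ω S).span_eq, Submodule.span_le]
    rintro _ ⟨s, rfl⟩
    obtain ⟨f, hf1, hf2, hf3⟩ := h s
    have hmem : (fun s' => eval (p s') f) ∈ Submodule.span Ω (range v) := by
      have : (fun s' => eval (p s') f) = ∑ α ∈ f.support, coeff α f • (fun s' => eval (p s') (monomial α (1 : Ω))) := by
        funext s'
        conv_lhs => rw [f.as_sum]
        rw [map_sum, Finset.sum_apply]
        refine Finset.sum_congr rfl fun α _ => ?_
        rw [Pi.smul_apply, smul_eq_mul, eval_monomial, eval_monomial, one_mul]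
      rw [this]
      refine Submodule.sum_mem _ fun α hα => Submodule.smul_mem _ _ (Submodule.subset_span ?_)
      exact ⟨⟨α, (le_totalDegree hα).trans hf1⟩, rfl⟩
    have h2 : (Pi.basisFun Ω S) s = (eval (p s) f)⁻¹ • (fun s' => eval (p s') f) := by
      funext s'
      rw [Pi.basisFun_apply, Pi.smul_apply, smul_eq_mul]
      by_cases hs : s' = s
      · subst hs; rw [Pi.single_eq_same, inv_mul_cancel₀ hf2]
      · rw [Pi.single_eq_of_ne hs, hf3 s' hs, mul_zero]
    rw [SetLike.mem_coe, h2]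
    exact Submodule.smul_mem _ _ hmem
  obtain ⟨κ, a, ha, hsp, hli⟩ := exists_linearIndependent' Ω v
  let b : Module.Basis κ Ω (S → Ω) := Module.Basis.mk hli (by rw [hsp, hspan])
  haveI : Finite κ := Module.Finite.finite_basis b
  haveI : Fintype κ := Fintype.ofFinite κ
  refine ⟨κ, inferInstance, fun i => (a i).1, ?_, fun i => (a i).2, hli⟩
  rw [← Module.finrank_eq_card_basis b, Module.finrank_fintype_fun_eq_card]

lemma ev_pt {P : Ideal (MvPolynomial (Fin n) ℂ)} {Ω : Type*} [Field Ω] [Algebra ℂ Ω]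
    (σ : (MvPolynomial (Fin n) ℂ ⧸ P) →ₐ[ℂ] Ω) (f : MvPolynomial (Fin n) ℂ) :
    eval (fun i => σ (xb P i)) (MvPolynomial.map (algebraMap ℂ Ω) f) = σ (Ideal.Quotient.mkₐ ℂ P f) := by
  rw [eval_map, ← aeval_xb, ← AlgHom.comp_apply, comp_aeval]
  rfl

lemma lower_V {V : Set (Fin n → ℂ)} {d : ℕ} (hdn : d ≤ n) (hV : IsAlgSetOfDim n V d)
    [Fintype {W // IsIrredComponent n W V}]
    (y : Fin d → MvPolynomial (Fin n) ℂ ⧸ vanishingIdeal n V) (hred : IsRed (UU (vanishingIdeal n V)) y)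
    (hy : ∀ W, ∀ hW : IsIrredComponent n W V, AlgebraicIndependent ℂ (pr hW.2.1 ∘ y)) (q : ℕ) :
    (∑ W : {W // IsIrredComponent n W V}, Dg ℂ (pr W.2.2.1 ∘ y)) * (q + 1) ^ d ≤
      Module.finrank ℂ ↥(UU (vanishingIdeal n V) ^ (n * max (deltaSet n V) 1 + d * q)) := by
  classical
  obtain ⟨G, hGd, hG⟩ := exists_G hdn hV
  obtain ⟨Ω, _, _, _, t, ht⟩ := exists_Om d
  have hYex : ∀ i, ∃ f : MvPolynomial (Fin n) ℂ, f.totalDegree ≤ 1 ∧ Ideal.Quotient.mkₐ ℂ _ f = y i := by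
    intro i
    have : y i ∈ UU (vanishingIdeal n V) ^ 1 := by rw [pow_one]; exact hred.1 (mem_Ysp y i)
    exact mem_UU_pow.1 this
  choose Y hYd hY using hYex
  have hemb : ∀ W : {W // IsIrredComponent n W V}, ∃ S : Finset ((MvPolynomial (Fin n) ℂ ⧸ vanishingIdeal n W.1) →ₐ[ℂ] Ω),
      S.card = Dg ℂ (pr W.2.2.1 ∘ y) ∧ ∀ σ ∈ S, Function.Injective σ ∧ ∀ i, σ ((pr W.2.2.1 ∘ y) i) = t i := by
    intro W
    haveI := vI_prime W.2.1
    exact Dg_emb _ (pr_red W.2.2.1 y hred) (UU_exh _) (hy W.1 W.2) Ω t ht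
  choose S hScard hS using hemb
  let p : (Σ W : {W // IsIrredComponent n W V}, S W) → Fin n → Ω := fun s i => s.2.1 (xb _ i)
  have hpinj : ∀ s s', p s = p s' → s = s' := by
    rintro ⟨W, σ, hσ⟩ ⟨W', σ', hσ'⟩ hpp
    have hev : ∀ f, σ (Ideal.Quotient.mkₐ ℂ _ f) = σ' (Ideal.Quotient.mkₐ ℂ _ f) := by
      intro f
      rw [← ev_pt, ← ev_pt]
      exact congrArg (fun x => eval x (MvPolynomial.map (algebraMap ℂ Ω) f)) hpp
    have hk : ∀ (W : {W // IsIrredComponent n W V}) (σ) (hσ : σ ∈ S W) (f), σ (Ideal.Quotient.mkₐ ℂ _ f) = 0 ↔ f ∈ vanishingIdeal n W.1 := by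
      intro W σ hσ f
      rw [← Ideal.Quotient.eq_zero_iff_mem]
      exact map_eq_zero_iff σ (hS W σ hσ).1
    have hWW : vanishingIdeal n W.1 = vanishingIdeal n W'.1 := by
      ext f
      rw [← hk W σ hσ, ← hk W' σ' hσ', hev]
    have : W = W' := Subtype.ext (vI_inj W.2.1.1 W'.2.1.1 hWW)
    subst this
    have : σ = σ' := by
      ext b
      obtain ⟨f, rfl⟩ := Ideal.Quotient.mkₐ_surjective ℂ _ b
      exact hev f
    subst this
    rfl
  obtain ⟨κ, _, a, hcard, hdeg, hli⟩ := sel p (n * max (deltaSet n V) 1) (by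
    rintro ⟨W, σ, hσ⟩
    haveI := vI_prime W.2.1
    obtain ⟨f, hf1, hf2, hf3⟩ := sep_pt hdn (le_max_right (deltaSet n V) 1) _ (pr_red W.2.2.1 y hred) G (hG W.1 W.2)
      (fun i => (hGd i).trans (le_max_left _ _)) Y (fun i => by rw [← pr_mk W.2.2.1, hY]; rfl) hYd t σ (hS W σ hσ).1 (hS W σ hσ).2
    refine ⟨f, hf1, hf2, fun s' hs' => hf3 _ ?_ ?_ (fun h => hs' (hpinj _ _ h))⟩
    · intro i
      obtain ⟨W', σ', hσ'⟩ := s'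
      change eval (fun i => σ' (xb _ i)) _ = 0
      rw [ev_pt]
      have : Ideal.Quotient.mkₐ ℂ (vanishingIdeal n W'.1) (G i) = 0 :=
        Ideal.Quotient.eq_zero_iff_mem.2 ((hG W'.1 W'.2).le (Ideal.subset_span ⟨i, rfl⟩))
      rw [this, map_zero]
    · intro i
      obtain ⟨W', σ', hσ'⟩ := s'
      change eval (fun i => σ' (xb _ i)) _ = _
      rw [ev_pt, ← pr_mk W'.2.2.1, hY]
      exact (hS W' σ' hσ').2 i)
  have hcardS : Fintype.card κ = ∑ W : {W // IsIrredComponent n W V}, Dg ℂ (pr W.2.2.1 ∘ y) := by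
    rw [hcard, Fintype.card_sigma]
    refine Finset.sum_congr rfl fun W _ => ?_
    rw [Fintype.card_coe, hScard]
  rw [← hcardS]
  refine count (UU (vanishingIdeal n V)) (one_mem_Ysp _) y (fun j => hred.1 (mem_Ysp y j)) _
    (fun i => Ideal.Quotient.mkₐ ℂ _ (monomial (a i) (1 : ℂ))) ?_ ?_ q
  · intro i
    refine mem_UU_pow.2 ⟨_, ?_, rfl⟩
    exact (totalDegree_monomial_le _ _).trans (hdeg i)
  · intro c hc i
    have h0 : aeval t (c i) = 0 := by
      refine Fintype.linearIndependent_iff.1 hli (fun i => aeval t (c i)) ?_ i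
      funext s
      obtain ⟨W, σ, hσ⟩ := s
      have h1 := congrArg (fun b => σ (pr W.2.2.1 b)) hc
      simp only [map_sum, map_mul, map_zero, pr_mk] at h1
      rw [Finset.sum_apply, Pi.zero_apply, ← h1]
      refine Finset.sum_congr rfl fun i _ => ?_
      rw [Pi.smul_apply, smul_eq_mul, mul_comm]
      congr 1
      · rw [← ev_pt, map_monomial, map_one (algebraMap ℂ Ω)]
      · rw [← AlgHom.comp_apply, ← AlgHom.comp_apply, comp_aeval]
        congr 2
        funext j
        exact ((hS W σ hσ).2 j).symm
    exact (algebraicIndependent_iff.1 ht) _ h0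

end

section
variable {n}

lemma degSum_eq {V : Set (Fin n → ℂ)} [Fintype {W // IsIrredComponent n W V}] :
    degreeSum n V = ∑ W : {W // IsIrredComponent n W V}, degree n W.1 := by
  unfold degreeSum
  rw [← finsum_set_coe_eq_finsum_mem]
  exact finsum_eq_sum_of_fintype (fun W : {W // IsIrredComponent n W V} => degree n W.1)

instance rtd_fin (m : ℕ) : FiniteDimensional ℂ ↥(restrictTotalDegree (Fin n) ℂ m) := by
  have h := Ysp_pow (k := ℂ) (X : Fin n → MvPolynomial (Fin n) ℂ) m
  rw [aeval_X_left] at h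
  have h2 : (Ysp ℂ (X : Fin n → MvPolynomial (Fin n) ℂ) ^ m) = restrictTotalDegree (Fin n) ℂ m := by
    rw [h]; exact Submodule.map_id _
  rw [← h2]
  have : (Ysp ℂ (X : Fin n → MvPolynomial (Fin n) ℂ)).FG :=
    ⟨((Set.finite_range (X : Fin n → MvPolynomial (Fin n) ℂ)).insert 1).toFinset, by simp [Ysp]⟩
  exact Module.Finite.iff_fg.2 (this.pow _)

lemma UU_le (J : Ideal (MvPolynomial (Fin n) ℂ)) (m : ℕ) :
    Module.finrank ℂ ↥(UU J ^ m) ≤ Module.finrank ℂ ↥(restrictTotalDegree (Fin n) ℂ m) := by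
  rw [UU_pow]
  exact Submodule.finrank_map_le _ _

lemma exists_P (J I : Ideal (MvPolynomial (Fin n) ℂ)) (m : ℕ)
    (h : Module.finrank ℂ ↥(UU J ^ m) < Module.finrank ℂ ↥(UU I ^ m)) :
    ∃ P : MvPolynomial (Fin n) ℂ, P.totalDegree ≤ m ∧ P ∈ J ∧ P ∉ I := by
  by_contra hcon
  push Not at hcon
  let X := restrictTotalDegree (Fin n) ℂ m
  let f : Ideal (MvPolynomial (Fin n) ℂ) → ℕ := fun J =>
    Module.finrank ℂ (LinearMap.ker ((Ideal.Quotient.mkₐ ℂ J).toLinearMap.domRestrict X))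
  have key : ∀ J : Ideal (MvPolynomial (Fin n) ℂ), Module.finrank ℂ ↥(UU J ^ m) + f J = Module.finrank ℂ X := by
    intro J
    have := LinearMap.finrank_range_add_finrank_ker ((Ideal.Quotient.mkₐ ℂ J).toLinearMap.domRestrict X)
    rw [LinearMap.range_domRestrict, ← UU_pow] at this
    exact this
  have hle : f J ≤ f I := by
    apply Submodule.finrank_mono
    intro x hx
    rw [LinearMap.mem_ker] at hx ⊢
    apply Ideal.Quotient.eq_zero_iff_mem.2
    exact hcon x.1 ((mem_restrictTotalDegree _ _ _).1 x.2) (Ideal.Quotient.eq_zero_iff_mem.1 hx)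
  have h1 := key J
  have h2 := key I
  omega

variable {V : Set (Fin n → ℂ)} {d : ℕ} [Fintype {W // IsIrredComponent n W V}]

lemma sum_facts {ι : Type*} [Fintype ι] (i : ι) (f g : ι → ℕ) (K : ℕ) (h1 : ∀ i, 1 ≤ f i)
    (h2 : ∀ i, f i ≤ g i) (h3 : ∀ i, g i ≤ K * f i) :
    1 ≤ ∑ i, f i ∧ ∑ i, f i ≤ ∑ i, g i ∧ ∑ i, g i ≤ K * ∑ i, f i := by
  refine ⟨(h1 i).trans (Finset.single_le_sum (fun _ _ => Nat.zero_le _) (Finset.mem_univ i)),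
    Finset.sum_le_sum fun i _ => h2 i, ?_⟩
  rw [Finset.mul_sum]
  exact Finset.sum_le_sum fun i _ => h3 i

lemma deg_facts (hdn : d ≤ n) (hV : IsAlgSetOfDim n V d)
    (y : Fin d → MvPolynomial (Fin n) ℂ ⧸ vanishingIdeal n V) (hred : IsRed (UU (vanishingIdeal n V)) y)
    (hy : ∀ W, ∀ hW : IsIrredComponent n W V, AlgebraicIndependent ℂ (pr hW.2.1 ∘ y)) :
    1 ≤ ∑ W : {W // IsIrredComponent n W V}, Dg ℂ (pr W.2.2.1 ∘ y) ∧
    ∑ W : {W // IsIrredComponent n W V}, Dg ℂ (pr W.2.2.1 ∘ y) ≤ degreeSum n V ∧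
    degreeSum n V ≤ (d + 1) ^ d * ∑ W : {W // IsIrredComponent n W V}, Dg ℂ (pr W.2.2.1 ∘ y) := by
  obtain ⟨W, hW⟩ := comps_nonempty hV.1 hV.2.1
  have h1 : ∀ W : {W // IsIrredComponent n W V}, 1 ≤ Dg ℂ (pr W.2.2.1 ∘ y) := by
    rintro ⟨W, hW⟩
    haveI := vI_prime hW.1
    exact Dg_pos _ (pr_red hW.2.1 y hred) (UU_exh _) (hy W hW)
  have h2 : ∀ W : {W // IsIrredComponent n W V}, Dg ℂ (pr W.2.2.1 ∘ y) ≤ degree n W.1 := by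
    rintro ⟨W, hW⟩
    exact degree_lower hW.1 _ (pr_red hW.2.1 y hred) (hy W hW) hdn
  have h3 : ∀ W : {W // IsIrredComponent n W V}, degree n W.1 ≤ (d + 1) ^ d * Dg ℂ (pr W.2.2.1 ∘ y) := by
    rintro ⟨W, hW⟩
    exact degree_upper hW.1 _ (pr_red hW.2.1 y hred) (hy W hW) hdn
  rw [degSum_eq]
  exact sum_facts ⟨W, hW⟩ _ _ _ h1 h2 h3

lemma pi_bound {ι A : Type*} [Fintype ι] [AddCommGroup A] [Module ℂ A] (B : ι → Type*)
    [∀ i, AddCommGroup (B i)] [∀ i, Module ℂ (B i)] [∀ i, Module.Finite ℂ (B i)]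
    (φ : ∀ i, A →ₗ[ℂ] B i) (hinj : ∀ a, (∀ i, φ i a = 0) → a = 0) (f : ι → ℕ) (K : ℕ)
    (hf : ∀ i, Module.finrank ℂ (B i) ≤ f i * K) : Module.finrank ℂ A ≤ (∑ i, f i) * K := by
  have h : Function.Injective (LinearMap.pi φ) := by
    rw [injective_iff_map_eq_zero]
    exact fun a ha => hinj a fun i => congrFun ha i
  refine (LinearMap.finrank_le_finrank_of_injective h).trans ?_
  rw [Module.finrank_pi_fintype, Finset.sum_mul]
  exact Finset.sum_le_sum fun i _ => hf i

lemma upper_T (hV : IsAlgSetOfDim n V d)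
    (y : Fin d → MvPolynomial (Fin n) ℂ ⧸ vanishingIdeal n V) (hred : IsRed (UU (vanishingIdeal n V)) y)
    (hy : ∀ W, ∀ hW : IsIrredComponent n W V, AlgebraicIndependent ℂ (pr hW.2.1 ∘ y)) (m : ℕ) :
    Module.finrank ℂ ↥(UU (vanishingIdeal n V) ^ m) ≤
      (∑ W : {W // IsIrredComponent n W V}, Dg ℂ (pr W.2.2.1 ∘ y)) * (m + 1) ^ d := by
  have hmap : ∀ W : {W // IsIrredComponent n W V}, ∀ b ∈ UU (vanishingIdeal n V) ^ m,
      (pr W.2.2.1).toLinearMap b ∈ UU (vanishingIdeal n W.1) ^ m := by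
    intro W b hb
    obtain ⟨f, hf, rfl⟩ := mem_UU_pow.1 hb
    exact mem_UU_pow.2 ⟨f, hf, rfl⟩
  haveI : ∀ W : {W // IsIrredComponent n W V}, Module.Finite ℂ ↥(UU (vanishingIdeal n W.1) ^ m) := by
    intro W
    rw [UU_pow]
    infer_instance
  refine pi_bound (fun W : {W // IsIrredComponent n W V} => ↥(UU (vanishingIdeal n W.1) ^ m))
    (fun W => (pr W.2.2.1).toLinearMap.restrict (hmap W)) ?_ _ _ ?_
  · rintro ⟨b, hb⟩ h0
    obtain ⟨f, hf, rfl⟩ := mem_UU_pow.1 hb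
    apply Subtype.ext
    apply Ideal.Quotient.eq_zero_iff_mem.2
    apply mem_vI_comps hV.1
    intro W hW
    have := congrArg Subtype.val (h0 ⟨W, hW⟩)
    exact Ideal.Quotient.eq_zero_iff_mem.1 this
  · rintro ⟨W, hW⟩
    haveI := vI_prime hW.1
    exact Dg_upper _ (pr_red hW.2.1 y hred) (UU_exh _) (hy W hW) m

end

lemma last_step (d K K2 ρ b a D DT m q : ℝ) (l e : ℕ) (hd0 : 0 ≤ d) (hK1 : 1 ≤ K) (hK21 : 1 ≤ K2)
    (hK2' : K2 = (d + 1) ^ l * K) (hρ0 : 0 < ρ) (hρe : ρ ^ (e + 1) = b / a) (hb1 : 1 ≤ b) (ha1 : 1 ≤ a)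
    (hD1 : 1 ≤ D) (haD : a ≤ K * D) (hDTb : DT ≤ b) (hm0 : 0 ≤ m) (hq0 : 0 < q) (hm1 : m ≤ (d + 1) * q)
    (hQ : ρ * K2 < q) : DT * m ^ l < D * q ^ (l + (e + 1)) := by
  have h1 : (ρ * K2) ^ (e + 1) < q ^ (e + 1) :=
    pow_lt_pow_left₀ hQ (by positivity) (by omega)
  have hba : 0 < b / a := by positivity
  rw [mul_pow, hρe] at h1
  have h2 : K2 ≤ K2 ^ (e + 1) := le_self_pow₀ hK21 (by omega)
  have h3 : b / a * K2 < q ^ (e + 1) :=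
    lt_of_le_of_lt (mul_le_mul_of_nonneg_left h2 hba.le) h1
  have h4 : b * K2 < a * q ^ (e + 1) := by
    rw [div_mul_eq_mul_div, div_lt_iff₀ (by linarith)] at h3
    linarith
  have hqe : 0 < q ^ (e + 1) := by positivity
  have hql : 0 < q ^ l := by positivity
  have h5 : b * (d + 1) ^ l < D * q ^ (e + 1) := by
    have h6 : K * (b * (d + 1) ^ l) < K * (D * q ^ (e + 1)) := by
      calc K * (b * (d + 1) ^ l) = b * K2 := by rw [hK2']; ring
        _ < a * q ^ (e + 1) := h4
        _ ≤ (K * D) * q ^ (e + 1) := mul_le_mul_of_nonneg_right haD hqe.le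
        _ = _ := by ring
    exact lt_of_mul_lt_mul_left h6 (by linarith)
  have h7 : m ^ l ≤ ((d + 1) * q) ^ l := pow_le_pow_left₀ hm0 hm1 l
  calc DT * m ^ l ≤ b * ((d + 1) * q) ^ l :=
        mul_le_mul hDTb h7 (by positivity) (by linarith)
    _ = (b * (d + 1) ^ l) * q ^ l := by rw [mul_pow]; ring
    _ < (D * q ^ (e + 1)) * q ^ l := mul_lt_mul_of_pos_right h5 hql
    _ = D * q ^ (l + (e + 1)) := by rw [pow_add]; ring

lemma final_arith (n l d : ℕ) (hl : l < d) (τ : ℝ) (hτ : 0 < τ) (N0 : ℕ) :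
    ∃ C : ℝ, 0 < C ∧ ∀ (a b D DT δ : ℕ), 1 ≤ D → 1 ≤ DT → a ≤ (d + 1) ^ d * D → D ≤ a → DT ≤ b →
      (δ = 0 → D ≤ N0) → τ * (δ : ℝ) ^ (d - l) * a ≤ b →
      ∃ q : ℕ, ((n * max δ 1 + d * q : ℕ) : ℝ) ≤ C * ((b : ℝ) / a) ^ ((1 : ℝ) / ((d : ℝ) - l)) ∧
        DT * (n * max δ 1 + d * q + 1) ^ l < D * (q + 1) ^ d := by
  obtain ⟨e, rfl⟩ := Nat.exists_eq_add_of_lt hl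
  set d := l + e + 1 with hd
  have he : d - l = e + 1 := by omega
  have hcast : (d : ℝ) - l = ((e + 1 : ℕ) : ℝ) := by rw [hd]; push_cast; ring
  set s : ℝ := τ ^ (((e + 1 : ℕ) : ℝ)⁻¹) with hs
  have hs0 : 0 < s := Real.rpow_pos_of_pos hτ _
  have hse : s ^ (e + 1) = τ := Real.rpow_inv_natCast_pow hτ.le (by omega)
  set K : ℝ := ((d : ℝ) + 1) ^ d with hK
  have hK1 : 1 ≤ K := one_le_pow₀ (by linarith [(Nat.cast_nonneg d : (0 : ℝ) ≤ d)])
  set K2 : ℝ := ((d : ℝ) + 1) ^ (l + d) with hK2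
  have hK21 : 1 ≤ K2 := one_le_pow₀ (by linarith [(Nat.cast_nonneg d : (0 : ℝ) ≤ d)])
  set c : ℝ := min s (1 / (K * (N0 + 1))) with hc
  have hN0 : (0 : ℝ) ≤ N0 := Nat.cast_nonneg _
  have hKN : 0 < K * (N0 + 1) := by positivity
  have hc0 : 0 < c := lt_min hs0 (by positivity)
  refine ⟨(d + 1) * n * (1 / s + 1 / c) + d * K2 + 1, by positivity, ?_⟩
  intro a b D DT δ hD hDT haD hDa hDTb hδ0 hτb
  have hb1 : (1 : ℝ) ≤ b := by exact_mod_cast hDT.trans hDTb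
  have ha1 : (1 : ℝ) ≤ a := by exact_mod_cast hD.trans hDa
  have hD1 : (1 : ℝ) ≤ D := by exact_mod_cast hD
  have haD' : (a : ℝ) ≤ K * D := by rw [hK]; exact_mod_cast haD
  have hDTb' : (DT : ℝ) ≤ b := by exact_mod_cast hDTb
  rw [hcast, one_div ((e + 1 : ℕ) : ℝ)]
  have hba : 0 < (b : ℝ) / a := by positivity
  set ρ : ℝ := ((b : ℝ) / a) ^ (((e + 1 : ℕ) : ℝ)⁻¹) with hρ
  have hρ0 : 0 < ρ := Real.rpow_pos_of_pos hba _
  have hρe : ρ ^ (e + 1) = b / a := Real.rpow_inv_natCast_pow hba.le (by omega)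
  rw [he] at hτb
  have hsδ : s * δ ≤ ρ := by
    refine le_of_pow_le_pow_left₀ (n := e + 1) (by omega) hρ0.le ?_
    rw [mul_pow, hse, hρe, le_div_iff₀ (by linarith)]
    exact hτb
  have hcρ : c ≤ ρ := by
    rcases Nat.eq_zero_or_pos δ with h0 | h0
    · refine (min_le_right _ _).trans ?_
      have hDN : (D : ℝ) ≤ N0 := by exact_mod_cast hδ0 h0
      have haN : (a : ℝ) ≤ K * (N0 + 1) := haD'.trans (by gcongr; linarith)
      have h1 : 1 / (K * (N0 + 1)) ≤ ρ ^ (e + 1) := by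
        rw [hρe]
        exact div_le_div₀ (by linarith) hb1 (by linarith) haN
      by_contra hlt
      push Not at hlt
      have h2 : 1 / (K * (N0 + 1)) ≤ 1 := by
        rw [div_le_one hKN]; nlinarith
      have h3 : ρ ^ (e + 1) ≤ ρ := pow_le_of_le_one hρ0.le (by linarith) (by omega)
      linarith
    · refine (min_le_left _ _).trans ?_
      have : (1 : ℝ) ≤ δ := by exact_mod_cast h0
      nlinarith
  set M : ℕ := n * max δ 1 with hM
  have hMle : (M : ℝ) ≤ n * (1 / s + 1 / c) * ρ := by
    have h1 : ((max δ 1 : ℕ) : ℝ) ≤ δ + 1 := by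
      have : max δ 1 ≤ δ + 1 := by omega
      exact_mod_cast this
    have h2 : (δ : ℝ) ≤ 1 / s * ρ := by rw [one_div, inv_mul_eq_div, le_div_iff₀ hs0]; linarith
    have h3 : 1 ≤ 1 / c * ρ := by rw [one_div, inv_mul_eq_div, le_div_iff₀ hc0]; linarith
    have h4 : (n : ℝ) * ((max δ 1 : ℕ) : ℝ) ≤ n * ((1 / s + 1 / c) * ρ) :=
      mul_le_mul_of_nonneg_left (by linarith) (Nat.cast_nonneg _)
    rw [hM, Nat.cast_mul]
    linarith
  have hx0 : 0 ≤ ρ * K2 + M := by positivity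
  refine ⟨⌊ρ * K2 + M⌋₊, ?_, ?_⟩
  · have hfl := Nat.floor_le hx0
    push_cast
    have hd0 : (0 : ℝ) ≤ d := Nat.cast_nonneg _
    have h1 : (d : ℝ) * (⌊ρ * K2 + M⌋₊ : ℝ) ≤ d * (ρ * K2 + M) := by gcongr
    have h2 : ((d : ℝ) + 1) * M ≤ (d + 1) * (n * (1 / s + 1 / c) * ρ) := by gcongr
    nlinarith
  · have hlt := Nat.lt_floor_add_one (ρ * K2 + M)
    set q := ⌊ρ * K2 + M⌋₊
    have hMq : M ≤ q := by
      apply Nat.le_floor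
      have : 0 ≤ ρ * K2 := by positivity
      linarith
    have hQ : ρ * K2 < (q : ℝ) + 1 := by
      have : (0 : ℝ) ≤ M := Nat.cast_nonneg _
      linarith
    have hm1 : ((M + d * q + 1 : ℕ) : ℝ) ≤ (d + 1) * (q + 1) := by
      have : M + d * q + 1 ≤ (d + 1) * (q + 1) := by nlinarith
      exact_mod_cast this
    have hK2' : K2 = ((d : ℝ) + 1) ^ l * K := by rw [hK2, hK, pow_add]
    have hreal := last_step (d : ℝ) K K2 ρ b a D DT ((M + d * q + 1 : ℕ) : ℝ) (q + 1) l e (Nat.cast_nonneg _) hK1 hK21 hK2'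
      hρ0 hρe hb1 ha1 hD1 haD' hDTb' (Nat.cast_nonneg _) (by positivity) hm1 hQ
    have hld : l + (e + 1) = d := by omega
    rw [hld] at hreal
    exact_mod_cast hreal

/-- Theorem 2 of the paper: a Siegel-type lemma. Given a `d`-dimensional
algebraic set `V` and an `l`-dimensional algebraic set `T` of sufficiently large degree, there
is a polynomial of controlled degree vanishing on `T` but not identically on `V`. -/
theorem statement1 (n l d : ℕ) (hl : l < d) (hd : d ≤ n) (τ : ℝ) (hτ : 0 < τ) :
    ∃ C : ℝ, 0 < C ∧
      ∀ V T : Set (Fin n → ℂ), IsAlgSetOfDim n V d → IsAlgSetOfDim n T l →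
        τ * (deltaSet n V : ℝ) ^ (d - l) * (degreeSum n V : ℝ) ≤ (degreeSum n T : ℝ) →
        ∃ P : MvPolynomial (Fin n) ℂ,
          (P.totalDegree : ℝ) ≤
            C * ((degreeSum n T : ℝ) / (degreeSum n V : ℝ)) ^ ((1 : ℝ) / ((d : ℝ) - (l : ℝ))) ∧
          (∀ x ∈ T, eval x P = 0) ∧ P ∉ vanishingIdeal n V := by
  obtain ⟨C, hC, hmain⟩ := final_arith n l d hl τ hτ (Module.finrank ℂ ↥(restrictTotalDegree (Fin n) ℂ n))
  refine ⟨C, hC, fun V T hV hT hdeg => ?_⟩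
  haveI : Fintype {W // IsIrredComponent n W V} := (comps_finite hV.1).fintype
  haveI : Fintype {W // IsIrredComponent n W T} := (comps_finite hT.1).fintype
  obtain ⟨y, hred, hy⟩ := common_noether hV
  obtain ⟨z, hzred, hz⟩ := common_noether hT
  obtain ⟨hV1, hV2, hV3⟩ := deg_facts hd hV y hred hy
  obtain ⟨hT1, hT2, -⟩ := deg_facts (hl.le.trans hd) hT z hzred hz
  obtain ⟨q, hq1, hq2⟩ := hmain _ _ _ _ (deltaSet n V) hV1 hT1 hV3 hV2 hT2 (by
    intro h0
    have := lower_V hd hV y hred hy 0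
    have e1 : n * max 0 1 + d * 0 = n := by simp
    rw [h0, e1, Nat.zero_add, one_pow, mul_one] at this
    exact this.trans (UU_le _ _)) hdeg
  obtain ⟨P, hP1, hP2, hP3⟩ := exists_P (vanishingIdeal n T) (vanishingIdeal n V) (n * max (deltaSet n V) 1 + d * q)
    (lt_of_le_of_lt (upper_T hT z hzred hz _) (lt_of_lt_of_le hq2 (lower_V hd hV y hred hy q)))
  refine ⟨P, ?_, hP2, hP3⟩
  refine le_trans ?_ hq1
  exact_mod_cast hP1

end Paper
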